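/- arXiv:0705.2078 — 6 statements merged into one kernel-verified Lean document; each statement's English description precedes it below -/
import Mathlib

section
/- Let g ≥ 1 and let σ, σ′ ∈ Γ_g(p₂). Then the (g,2g)-entry of the product satisfies (σσ′)_{g,2g} ≡ σ_{g,2g} + σ′_{g,2g} (mod 4). -/
open Matrix

/-- The subgroup `Γ_g(p₂) ⊆ Sp(2g,ℤ)`, as a set: symplectic integer matrices fixing the
basis vector `e_{2g}` (the class `B_g`, index `Sum.inr ⟨g-1,_⟩`) modulo 2. -/
def GammaP2Set (g : ℕ) (hg : 1 ≤ g) : Set (Matrix (Fin g ⊕ Fin g) (Fin g ⊕ Fin g) ℤ) :=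
  {σ | σ ∈ Matrix.symplecticGroup (Fin g) ℤ ∧
    ∀ i : Fin g ⊕ Fin g,
      σ i (Sum.inr ⟨g - 1, by omega⟩) ≡
        (1 : Matrix (Fin g ⊕ Fin g) (Fin g ⊕ Fin g) ℤ) i (Sum.inr ⟨g - 1, by omega⟩) [ZMOD 2]}

/-!
Write `⟨x, y⟩ = xᵀ J y`. A symplectic matrix fixing the vector `e_b` satisfies
`⟨σ x, e_b⟩ = ⟨σ x, σ e_b⟩ = ⟨x, e_b⟩`, so its row paired with `b` is that of the identity.
Reducing modulo 2, the row of `σ` and the column of `σ'` through the entry in question are thus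
both congruent to those of the identity, so every term of this entry of `(σ - 1)(σ' - 1)` is a
product of two even numbers. It remains to expand `(σ - 1)(σ' - 1) = σσ' - σ - σ' + 1`.
-/

theorem intModEq_iff_smodEq_span {n a b : ℤ} :
    a ≡ b [ZMOD n] ↔ a ≡ b [SMOD Ideal.span {n}] := by
  rw [Int.modEq_comm, Int.modEq_iff_dvd, SModEq.sub_mem, Ideal.mem_span_singleton]

theorem mul_apply_add_one_apply_smodEq {n R : Type*} [Fintype n] [DecidableEq n] [Ring R]
    {I₁ I₂ : Ideal R} {A B : Matrix n n R} {i j : n}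
    (hA : ∀ k, A i k ≡ (1 : Matrix n n R) i k [SMOD I₁])
    (hB : ∀ k, B k j ≡ (1 : Matrix n n R) k j [SMOD I₂]) :
    (A * B) i j + (1 : Matrix n n R) i j ≡ A i j + B i j [SMOD I₁ * I₂] := by
  have hprod : ((A - 1) * (B - 1)) i j ∈ I₁ * I₂ := by
    rw [mul_apply]
    exact sum_mem fun k _ => Ideal.mul_mem_mul (SModEq.sub_mem.1 (hA k)) (SModEq.sub_mem.1 (hB k))
  have hexpand : (A - 1) * (B - 1) = A * B + 1 - (A + B) := by noncomm_ring
  rw [hexpand] at hprod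
  exact SModEq.sub_mem.2 hprod

section Symplectic

variable {l R : Type*} [Fintype l] [DecidableEq l] [CommRing R] {A : Matrix (l ⊕ l) (l ⊕ l) R}
  {a : l}

theorem J_mulVec_single_inr :
    J l R *ᵥ Pi.single (Sum.inr a) 1 = -Pi.single (Sum.inl a) 1 := by
  ext (k | k) <;> simp [J, one_apply, Pi.single_apply]

theorem row_inl_eq_single_of_mem_symplecticGroup (hA : A ∈ symplecticGroup l R)
    (hcol : A.col (Sum.inr a) = Pi.single (Sum.inr a) 1) :
    A.row (Sum.inl a) = Pi.single (Sum.inl a) 1 := by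
  apply neg_injective
  calc -A.row (Sum.inl a) = Aᵀ *ᵥ J l R *ᵥ Pi.single (Sum.inr a) 1 := by
        rw [J_mulVec_single_inr, mulVec_neg, mulVec_single_one, col_transpose]
    _ = Aᵀ *ᵥ J l R *ᵥ A *ᵥ Pi.single (Sum.inr a) 1 := by
        rw [mulVec_single_one A, hcol]
    _ = (Aᵀ * J l R * A) *ᵥ Pi.single (Sum.inr a) 1 := by
        simp only [mulVec_mulVec, Matrix.mul_assoc]
    _ = -Pi.single (Sum.inl a) 1 := by
        rw [SymplecticGroup.mem_iff'.1 hA, J_mulVec_single_inr]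

theorem inl_apply_smodEq_one_of_mem_symplecticGroup {I : Ideal R} (hA : A ∈ symplecticGroup l R)
    (hcol : ∀ k, A k (Sum.inr a) ≡ (1 : Matrix (l ⊕ l) (l ⊕ l) R) k (Sum.inr a) [SMOD I])
    (k : l ⊕ l) : A (Sum.inl a) k ≡ (1 : Matrix (l ⊕ l) (l ⊕ l) R) (Sum.inl a) k [SMOD I] := by
  have hcol_quot : (A.map (Ideal.Quotient.mk I)).col (Sum.inr a) = Pi.single (Sum.inr a) 1 := by
    ext k
    simpa [one_apply, Pi.single_apply, apply_ite] using SModEq.idealQuotientMk.1 (hcol k)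
  have hrow_quot := row_inl_eq_single_of_mem_symplecticGroup
    (SymplecticGroup.map_mem hA (Ideal.Quotient.mk I)) hcol_quot
  rw [SModEq.idealQuotientMk]
  simpa [one_apply, Pi.single_apply, apply_ite, eq_comm] using congrFun hrow_quot k

theorem stmt1_general {I₁ I₂ : Ideal R} {B : Matrix (l ⊕ l) (l ⊕ l) R}
    (hA : A ∈ symplecticGroup l R)
    (hAcol : ∀ k, A k (Sum.inr a) ≡ (1 : Matrix (l ⊕ l) (l ⊕ l) R) k (Sum.inr a) [SMOD I₁])
    (hBcol : ∀ k, B k (Sum.inr a) ≡ (1 : Matrix (l ⊕ l) (l ⊕ l) R) k (Sum.inr a) [SMOD I₂]) :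
    (A * B) (Sum.inl a) (Sum.inr a) ≡
      A (Sum.inl a) (Sum.inr a) + B (Sum.inl a) (Sum.inr a) [SMOD I₁ * I₂] := by
  simpa using mul_apply_add_one_apply_smodEq
    (inl_apply_smodEq_one_of_mem_symplecticGroup hA hAcol) hBcol

end Symplectic

/-- for `σ, σ′ ∈ Γ_g(p₂)`, the `(g,2g)`-entry of `σσ′` is congruent to
`σ_{g,2g} + σ′_{g,2g}` modulo 4. -/
theorem stmt1 (g : ℕ) (hg : 1 ≤ g)
    (σ σ' : Matrix (Fin g ⊕ Fin g) (Fin g ⊕ Fin g) ℤ)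
    (hσ : σ ∈ GammaP2Set g hg) (hσ' : σ' ∈ GammaP2Set g hg) :
    (σ * σ') (Sum.inl ⟨g - 1, by omega⟩) (Sum.inr ⟨g - 1, by omega⟩) ≡
      σ (Sum.inl ⟨g - 1, by omega⟩) (Sum.inr ⟨g - 1, by omega⟩) +
      σ' (Sum.inl ⟨g - 1, by omega⟩) (Sum.inr ⟨g - 1, by omega⟩) [ZMOD 4] := by
  simp only [GammaP2Set, Set.mem_ofPred_eq, intModEq_iff_smodEq_span] at hσ hσ' ⊢
  simpa [Ideal.span_singleton_mul_span_singleton] using stmt1_general hσ.1 hσ.2 hσ'.2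
end

section
/- Let g ≥ 1. Every σ ∈ Γ_g(p₂) can be written as σ = σ₀γ with σ₀ ∈ G_S and γ ∈ Γ_g[2]; that is, Γ_g(p₂) = G_S · Γ_g[2]. Equivalently, for every σ ∈ Γ_g(p₂) there exists σ₀ ∈ G_S with σ₀ ≡ σ (mod 2). -/
open Matrix

/-- The subgroup `G_S ⊆ Sp(2g,ℤ)`, as a set: symplectic matrices whose `g`-th row and
`2g`-th column agree exactly with those of the identity matrix. -/
def GSSet (g : ℕ) (hg : 1 ≤ g) : Set (Matrix (Fin g ⊕ Fin g) (Fin g ⊕ Fin g) ℤ) :=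
  {σ | σ ∈ Matrix.symplecticGroup (Fin g) ℤ ∧
    (∀ j : Fin g ⊕ Fin g,
      σ (Sum.inl ⟨g - 1, by omega⟩) j =
        (1 : Matrix (Fin g ⊕ Fin g) (Fin g ⊕ Fin g) ℤ) (Sum.inl ⟨g - 1, by omega⟩) j) ∧
    (∀ i : Fin g ⊕ Fin g,
      σ i (Sum.inr ⟨g - 1, by omega⟩) =
        (1 : Matrix (Fin g ⊕ Fin g) (Fin g ⊕ Fin g) ℤ) i (Sum.inr ⟨g - 1, by omega⟩))}

/-- The level 2 principal congruence subgroup `Γ_g[2] ⊆ Sp(2g,ℤ)`, as a set: symplectic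
matrices congruent to the identity modulo 2 (the kernel of mod 2 reduction). -/
def Level2Set (g : ℕ) : Set (Matrix (Fin g ⊕ Fin g) (Fin g ⊕ Fin g) ℤ) :=
  {σ | σ ∈ Matrix.symplecticGroup (Fin g) ℤ ∧
    ∀ i j : Fin g ⊕ Fin g,
      σ i j ≡ (1 : Matrix (Fin g ⊕ Fin g) (Fin g ⊕ Fin g) ℤ) i j [ZMOD 2]}

/-!
Over a field, every isometry `φ` of a nondegenerate alternating form is a product of symplectic
transvections along vectors orthogonal to the fixed space of `φ`: if `B x (φ x) ≠ 0`, the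
transvection along `φ x - x` that sends `φ x` back to `x` enlarges the fixed space of `φ`, and if
`B x (φ x)` vanishes identically, one transvection along any `φ z - z ≠ 0` destroys this identity.
A transvection along a vector orthogonal to the reduction of a unimodular vector `w` lifts to a
transvection along a vector orthogonal to `w`, so reduction maps the stabilizer of `w`
onto the stabilizer of its reduction. Finally `G_S` is exactly the stabilizer of `B_g`, because the
`g`-th row of a symplectic matrix is determined by its `2g`-th column.
-/

section SymplecticTransvection

open LinearMap (BilinForm)

variable {R V : Type*} [CommRing R] [AddCommGroup V] [Module R V] {B : BilinForm R V}
  {φ : Module.End R V}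

/-- The symplectic transvection `x ↦ x + a B(x, v) v` of a module with an alternating form `B`. -/
def symplecticTransvection (B : BilinForm R V) (a : R) (v : V) : Module.End R V :=
  LinearMap.transvection (a • B.flip v) v

theorem symplecticTransvection_apply (B : BilinForm R V) (a : R) (v x : V) :
    symplecticTransvection B a v x = x + (a * B x v) • v :=
  rfl

theorem isOrthogonal_symplecticTransvection (hB : B.IsAlt) (a : R) (v : V) :
    B.IsOrthogonal (symplecticTransvection B a v) := by
  intro x y
  simp only [symplecticTransvection_apply, map_add, map_smul, LinearMap.add_apply,
    LinearMap.smul_apply, hB.self_eq_zero v, ← hB.neg_eq y v, smul_eq_mul]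
  ring

theorem symplecticTransvection_neg_mul_self (hB : B.IsAlt) (a : R) (v : V) :
    symplecticTransvection B (-a) v * symplecticTransvection B a v = 1 := by
  ext x
  simp [symplecticTransvection_apply, hB.self_eq_zero v]

theorem isOrthogonal_mul {ψ : Module.End R V} (hφ : B.IsOrthogonal φ) (hψ : B.IsOrthogonal ψ) :
    B.IsOrthogonal (φ * ψ) :=
  fun x y => (hφ (ψ x) (ψ y)).trans (hψ x y)

/-- The monoid generated by the symplectic transvections along vectors orthogonal to `W`; they fix
`W` pointwise. -/
def transvectionSubmonoid (B : BilinForm R V) (W : Submodule R V) : Submonoid (Module.End R V) :=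
  Submonoid.closure {τ | ∃ a, ∃ v ∈ B.orthogonal W, symplecticTransvection B a v = τ}

theorem symplecticTransvection_mem_transvectionSubmonoid {W : Submodule R V} (a : R) {v : V}
    (hv : v ∈ B.orthogonal W) : symplecticTransvection B a v ∈ transvectionSubmonoid B W :=
  Submonoid.subset_closure ⟨a, v, hv, rfl⟩

theorem transvectionSubmonoid_antitone : Antitone (transvectionSubmonoid B) := by
  intro W W' hW
  apply Submonoid.closure_mono
  rintro _ ⟨a, v, hv, rfl⟩
  exact ⟨a, v, LinearMap.BilinForm.orthogonal_le hW hv, rfl⟩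

theorem sub_mem_orthogonal_fixedSubmodule (hφ : B.IsOrthogonal φ) (x : V) :
    φ x - x ∈ B.orthogonal φ.fixedSubmodule := by
  intro y hy
  have h := hφ y x
  rw [LinearMap.mem_fixedSubmodule_iff.1 hy] at h
  change B y (φ x - x) = 0
  rw [map_sub, h, sub_self]

theorem fixedSubmodule_le_symplecticTransvection_mul (a : R) {v : V}
    (hv : v ∈ B.orthogonal φ.fixedSubmodule) :
    φ.fixedSubmodule ≤ (symplecticTransvection B a v * φ).fixedSubmodule := by
  intro y hy
  have hyv : B y v = 0 := hv y hy
  rw [LinearMap.mem_fixedSubmodule_iff] at hy ⊢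
  simp [symplecticTransvection_apply, hy, hyv]

theorem apply_symplecticTransvection_apply_of_forall_apply_eq_zero (hB : B.IsAlt)
    (hφ : B.IsOrthogonal φ) (h : ∀ x, B x (φ x) = 0) (a : R) (x z : V) :
    B x (symplecticTransvection B a (φ z - z) (φ x)) = -a * B x (φ z - z) ^ 2 := by
  have polarized : B x (φ z) = B (φ x) z := by
    have hxz := h (x + z)
    simp only [map_add, LinearMap.add_apply, h, ← hB.neg_eq (φ x) z] at hxz
    linear_combination hxz
  have hflip : B (φ x) (φ z - z) = -B x (φ z - z) := by
    rw [map_sub, map_sub, hφ, polarized, neg_sub]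
  rw [symplecticTransvection_apply, map_add, h, map_smul, hflip, smul_eq_mul]
  ring

end SymplecticTransvection

section Generation

open LinearMap (BilinForm)

variable {K V : Type*} [Field K] [AddCommGroup V] [Module K V] {B : BilinForm K V}
  {φ : Module.End K V}

theorem symplecticTransvection_sub_apply_apply (hB : B.IsAlt) {x : V} (hx : B x (φ x) ≠ 0) :
    symplecticTransvection B (-(B x (φ x))⁻¹) (φ x - x) (φ x) = x := by
  have h : B (φ x) (φ x - x) = B x (φ x) := by
    rw [map_sub, hB.self_eq_zero, zero_sub, hB.neg_eq]
  rw [symplecticTransvection_apply, h, neg_mul, inv_mul_cancel₀ hx, neg_one_smul]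
  abel

theorem exists_eq_mul_fixedSubmodule_lt_of_apply_ne_zero (hB : B.IsAlt) (hφ : B.IsOrthogonal φ)
    {x : V} (hx : B x (φ x) ≠ 0) :
    ∃ τ ∈ transvectionSubmonoid B φ.fixedSubmodule, ∃ ψ : Module.End K V,
      φ = τ * ψ ∧ B.IsOrthogonal ψ ∧ φ.fixedSubmodule < ψ.fixedSubmodule := by
  set a := -(B x (φ x))⁻¹
  have hv := sub_mem_orthogonal_fixedSubmodule hφ x
  refine ⟨symplecticTransvection B (-a) (φ x - x),
    symplecticTransvection_mem_transvectionSubmonoid _ hv,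
    symplecticTransvection B a (φ x - x) * φ, ?_,
    isOrthogonal_mul (isOrthogonal_symplecticTransvection hB _ _) hφ,
    (fixedSubmodule_le_symplecticTransvection_mul _ hv).lt_of_not_ge fun hle => ?_⟩
  · rw [← mul_assoc, symplecticTransvection_neg_mul_self hB, one_mul]
  · have hφx : φ x = x := LinearMap.mem_fixedSubmodule_iff.1 <|
      hle (LinearMap.mem_fixedSubmodule_iff.2 (symplecticTransvection_sub_apply_apply hB hx))
    exact hx (by rw [hφx, hB.self_eq_zero])

theorem exists_eq_mul_fixedSubmodule_lt (hB : B.IsAlt) (hsep : B.SeparatingRight)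
    (hφ : B.IsOrthogonal φ) (hφ1 : φ ≠ 1) :
    ∃ τ ∈ transvectionSubmonoid B φ.fixedSubmodule, ∃ ψ : Module.End K V,
      φ = τ * ψ ∧ B.IsOrthogonal ψ ∧ φ.fixedSubmodule < ψ.fixedSubmodule := by
  by_cases h : ∃ x, B x (φ x) ≠ 0
  · obtain ⟨x, hx⟩ := h
    exact exists_eq_mul_fixedSubmodule_lt_of_apply_ne_zero hB hφ hx
  push Not at h
  obtain ⟨z, hz⟩ : ∃ z, φ z ≠ z := by
    by_contra! hfix
    exact hφ1 (LinearMap.ext hfix)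
  obtain ⟨x, hx⟩ : ∃ x, B x (φ z - z) ≠ 0 := by
    by_contra! hzero
    exact hz (sub_eq_zero.1 (hsep _ hzero))
  have hv := sub_mem_orthogonal_fixedSubmodule hφ z
  set ρ := symplecticTransvection B 1 (φ z - z)
  have hρφ : B.IsOrthogonal (ρ * φ) :=
    isOrthogonal_mul (isOrthogonal_symplecticTransvection hB _ _) hφ
  have hle : φ.fixedSubmodule ≤ (ρ * φ).fixedSubmodule :=
    fixedSubmodule_le_symplecticTransvection_mul 1 hv
  have hx' : B x ((ρ * φ) x) ≠ 0 := by
    rw [Module.End.mul_apply, apply_symplecticTransvection_apply_of_forall_apply_eq_zero hB hφ h]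
    simpa using hx
  obtain ⟨τ, hτ, ψ, hρφ_eq, hψ, hlt⟩ :=
    exists_eq_mul_fixedSubmodule_lt_of_apply_ne_zero hB hρφ hx'
  refine ⟨symplecticTransvection B (-1) (φ z - z) * τ,
    mul_mem (symplecticTransvection_mem_transvectionSubmonoid _ hv)
      (transvectionSubmonoid_antitone hle hτ), ψ, ?_, hψ, hle.trans_lt hlt⟩
  rw [mul_assoc, ← hρφ_eq, ← mul_assoc, symplecticTransvection_neg_mul_self hB, one_mul]

theorem mem_transvectionSubmonoid_fixedSubmodule [FiniteDimensional K V] (hB : B.IsAlt)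
    (hsep : B.SeparatingRight) (hφ : B.IsOrthogonal φ) :
    φ ∈ transvectionSubmonoid B φ.fixedSubmodule := by
  induction hW : φ.fixedSubmodule using WellFoundedGT.induction generalizing φ with
  | ind W ih =>
    subst hW
    by_cases hφ1 : φ = 1
    · rw [hφ1]
      exact one_mem _
    obtain ⟨τ, hτ, ψ, hφ_eq, hψ, hlt⟩ := exists_eq_mul_fixedSubmodule_lt hB hsep hφ hφ1
    have hψ_mem := transvectionSubmonoid_antitone hlt.le (ih _ hlt hψ rfl)
    have hτψ := mul_mem hτ hψ_mem
    rwa [← hφ_eq] at hτψ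

end Generation

section SymplecticForm

variable {l R S : Type*} [Fintype l] [DecidableEq l] [CommRing R] [CommRing S]

variable (l R) in
/-- The bilinear form with matrix `Matrix.J l R`, whose isometries form `Matrix.symplecticGroup`.
By Mathlib's sign convention for `J` it takes the value `-1` on `(A_i, B_i)`. -/
def symplecticForm : LinearMap.BilinForm R (l ⊕ l → R) :=
  Matrix.toBilin' (J l R)

theorem symplecticForm_apply (x y : l ⊕ l → R) :
    symplecticForm l R x y =
      ∑ i, (x (Sum.inr i) * y (Sum.inl i) - x (Sum.inl i) * y (Sum.inr i)) := by
  rw [symplecticForm, Matrix.toBilin'_apply', J, ← Sum.elim_comp_inl_inr y, fromBlocks_mulVec]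
  simp only [dotProduct, Sum.elim_comp_inl_inr, zero_mulVec, neg_mulVec, one_mulVec, zero_add,
    add_zero, Fintype.sum_sum_type, Sum.elim_inl, Pi.neg_apply, Function.comp_apply, mul_neg,
    Finset.sum_neg_distrib, Sum.elim_inr, Finset.sum_sub_distrib]
  ring

theorem symplecticForm_single_inl (k : l) (y : l ⊕ l → R) :
    symplecticForm l R (Pi.single (Sum.inl k) 1) y = -y (Sum.inr k) := by
  simp [symplecticForm_apply, Pi.single_apply]

theorem symplecticForm_single_inr (k : l) (y : l ⊕ l → R) :
    symplecticForm l R (Pi.single (Sum.inr k) 1) y = y (Sum.inl k) := by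
  simp [symplecticForm_apply, Pi.single_apply]

theorem symplecticForm_comp (f : R →+* S) (x y : l ⊕ l → R) :
    symplecticForm l S (f ∘ x) (f ∘ y) = f (symplecticForm l R x y) := by
  simp [symplecticForm_apply]

theorem isAlt_symplecticForm : (symplecticForm l R).IsAlt := by
  intro x
  simp [symplecticForm_apply, mul_comm]

theorem separatingRight_symplecticForm : (symplecticForm l R).SeparatingRight := by
  intro y hy
  ext (i | i)
  · simpa [symplecticForm_single_inr] using hy (Pi.single (Sum.inr i) 1)
  · simpa [symplecticForm_single_inl] using hy (Pi.single (Sum.inl i) 1)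

theorem mem_symplecticGroup_iff_isOrthogonal {M : Matrix (l ⊕ l) (l ⊕ l) R} :
    M ∈ symplecticGroup l R ↔ (symplecticForm l R).IsOrthogonal (toLin' M) := by
  rw [SymplecticGroup.mem_iff', ← Matrix.toBilin'.injective.eq_iff, ← Matrix.toBilin'_comp]
  exact LinearMap.ext_iff₂

theorem symplecticForm_mulVec {M : Matrix (l ⊕ l) (l ⊕ l) R} (hM : M ∈ symplecticGroup l R)
    (x y : l ⊕ l → R) : symplecticForm l R (M *ᵥ x) (M *ᵥ y) = symplecticForm l R x y :=
  mem_symplecticGroup_iff_isOrthogonal.1 hM x y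

theorem comp_single_one {ι : Type*} [DecidableEq ι] (f : R →+* S) (i : ι) :
    f ∘ Pi.single i 1 = Pi.single i 1 := by
  ext j
  simp [Pi.single_apply, apply_ite f]

theorem mapMatrix_toMatrix'_symplecticTransvection (f : R →+* S) (a : R) (v : l ⊕ l → R) :
    f.mapMatrix (LinearMap.toMatrix' (symplecticTransvection (symplecticForm l R) a v)) =
      LinearMap.toMatrix' (symplecticTransvection (symplecticForm l S) (f a) (f ∘ v)) := by
  ext i j
  simp [LinearMap.toMatrix'_apply, symplecticTransvection_apply, ← comp_single_one f j,
    symplecticForm_comp]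

theorem exists_comp_eq_and_symplecticForm_eq_zero {f : R →+* S} (hf : Function.Surjective f)
    {w u : l ⊕ l → R} (hwu : symplecticForm l R w u = 1) {v : l ⊕ l → S}
    (hv : symplecticForm l S (f ∘ w) v = 0) :
    ∃ v' : l ⊕ l → R, f ∘ v' = v ∧ symplecticForm l R w v' = 0 := by
  obtain ⟨v₀, rfl⟩ := hf.comp_left v
  rw [symplecticForm_comp] at hv
  refine ⟨v₀ - symplecticForm l R w v₀ • u, ?_, ?_⟩
  · ext i
    simp [hv]
  · simp [hwu]

end SymplecticForm

section Stabilizer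

variable {l R S K : Type*} [Fintype l] [DecidableEq l] [CommRing R] [CommRing S] [Field K]

/-- The stabilizer of the vector `w` in the symplectic group, as a submonoid of the monoid of
matrices, like `Matrix.symplecticGroup` itself. -/
def symplecticStabilizer (w : l ⊕ l → R) : Submonoid (Matrix (l ⊕ l) (l ⊕ l) R) where
  carrier := {M | M ∈ symplecticGroup l R ∧ M *ᵥ w = w}
  mul_mem' hM hN := ⟨mul_mem hM.1 hN.1, by rw [← mulVec_mulVec, hN.2, hM.2]⟩
  one_mem' := ⟨one_mem _, one_mulVec w⟩

theorem mem_symplecticStabilizer {w : l ⊕ l → R} {M : Matrix (l ⊕ l) (l ⊕ l) R} :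
    M ∈ symplecticStabilizer w ↔ M ∈ symplecticGroup l R ∧ M *ᵥ w = w :=
  Iff.rfl

theorem toMatrix'_symplecticTransvection_mem_symplecticStabilizer {w v : l ⊕ l → R} (a : R)
    (hv : symplecticForm l R w v = 0) :
    LinearMap.toMatrix' (symplecticTransvection (symplecticForm l R) a v) ∈
      symplecticStabilizer w := by
  rw [mem_symplecticStabilizer, mem_symplecticGroup_iff_isOrthogonal, toLin'_toMatrix',
    LinearMap.toMatrix'_mulVec, symplecticTransvection_apply, hv, mul_zero, zero_smul, add_zero]
  exact ⟨isOrthogonal_symplecticTransvection isAlt_symplecticForm a v, rfl⟩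

theorem toMatrix'_mem_map_symplecticStabilizer {f : R →+* S} (hf : Function.Surjective f)
    {w u : l ⊕ l → R} (hwu : symplecticForm l R w u = 1) {φ : Module.End S (l ⊕ l → S)}
    (hφ : φ ∈ transvectionSubmonoid (symplecticForm l S) (S ∙ (f ∘ w))) :
    LinearMap.toMatrix' φ ∈ (symplecticStabilizer w).map f.mapMatrix := by
  induction hφ using Submonoid.closure_induction with
  | one =>
    rw [LinearMap.toMatrix'_one]
    exact one_mem _
  | mul φ ψ _ _ hφ hψ =>
    rw [LinearMap.toMatrix'_mul]
    exact mul_mem hφ hψ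
  | mem τ hτ =>
    obtain ⟨a, v, hv, rfl⟩ := hτ
    obtain ⟨a', rfl⟩ := hf a
    obtain ⟨v', rfl, hv'⟩ := exists_comp_eq_and_symplecticForm_eq_zero hf hwu
      (hv _ (Submodule.mem_span_singleton_self _))
    exact ⟨_, toMatrix'_symplecticTransvection_mem_symplecticStabilizer a' hv',
      mapMatrix_toMatrix'_symplecticTransvection f a' v'⟩

theorem map_symplecticStabilizer {f : R →+* K} (hf : Function.Surjective f) {w u : l ⊕ l → R}
    (hwu : symplecticForm l R w u = 1) :
    (symplecticStabilizer w).map f.mapMatrix = symplecticStabilizer (f ∘ w) := by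
  apply le_antisymm
  · rintro _ ⟨M, ⟨hM, hMw⟩, rfl⟩
    refine ⟨SymplecticGroup.map_mem hM f, ?_⟩
    ext i
    exact (RingHom.map_mulVec f M w i).symm.trans (by rw [hMw, Function.comp_apply])
  · rintro M ⟨hM, hMw⟩
    have hspan : K ∙ (f ∘ w) ≤ (toLin' M).fixedSubmodule := by
      rwa [Submodule.span_singleton_le_iff_mem, LinearMap.mem_fixedSubmodule_iff]
    have hgen := mem_transvectionSubmonoid_fixedSubmodule isAlt_symplecticForm
      separatingRight_symplecticForm (mem_symplecticGroup_iff_isOrthogonal.1 hM)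
    simpa using toMatrix'_mem_map_symplecticStabilizer hf hwu
      (transvectionSubmonoid_antitone hspan hgen)

theorem mem_symplecticStabilizer_single_inr_iff {k : l} {M : Matrix (l ⊕ l) (l ⊕ l) R} :
    M ∈ symplecticStabilizer (Pi.single (Sum.inr k) 1) ↔
      M ∈ symplecticGroup l R ∧
        ∀ i, M i (Sum.inr k) = (1 : Matrix (l ⊕ l) (l ⊕ l) R) i (Sum.inr k) := by
  simp [mem_symplecticStabilizer, funext_iff, Matrix.one_apply, Pi.single_apply]

theorem apply_inl_eq_one_apply_of_mem_symplecticStabilizer {k : l}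
    {M : Matrix (l ⊕ l) (l ⊕ l) R} (hM : M ∈ symplecticStabilizer (Pi.single (Sum.inr k) 1))
    (j : l ⊕ l) : M (Sum.inl k) j = (1 : Matrix (l ⊕ l) (l ⊕ l) R) (Sum.inl k) j := by
  have h := symplecticForm_mulVec hM.1 (Pi.single (Sum.inr k) 1) (Pi.single j 1)
  rw [hM.2, symplecticForm_single_inr, symplecticForm_single_inr] at h
  simpa [Matrix.one_apply, Pi.single_apply] using h

theorem stmt3_general {f : R →+* K} (hf : Function.Surjective f) {w u : l ⊕ l → R}
    (hwu : symplecticForm l R w u = 1) {σ : Matrix (l ⊕ l) (l ⊕ l) R}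
    (hσ : σ ∈ symplecticGroup l R) (hσw : σ.map f *ᵥ (f ∘ w) = f ∘ w) :
    (∃ σ₀ ∈ symplecticStabilizer w, ∃ γ ∈ symplecticGroup l R, γ.map f = 1 ∧ σ = σ₀ * γ) ∧
      ∃ σ₀ ∈ symplecticStabilizer w, σ₀.map f = σ.map f := by
  obtain ⟨σ₀, hσ₀, hmap⟩ : σ.map f ∈ (symplecticStabilizer w).map f.mapMatrix := by
    rw [map_symplecticStabilizer hf hwu]
    exact ⟨SymplecticGroup.map_mem hσ f, hσw⟩
  refine ⟨⟨σ₀, hσ₀, ?_⟩, σ₀, hσ₀, hmap⟩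
  let s₀ : symplecticGroup l R := ⟨σ₀, hσ₀.1⟩
  have hinv : (s₀⁻¹ : symplecticGroup l R).1 * σ₀ = 1 := congrArg Subtype.val (inv_mul_cancel s₀)
  refine ⟨(s₀⁻¹).1 * σ, mul_mem (s₀⁻¹).2 hσ, ?_, ?_⟩
  · calc
      ((s₀⁻¹).1 * σ).map f = (s₀⁻¹).1.map f * σ₀.map f := by rw [Matrix.map_mul, ← hmap]; rfl
      _ = 1 := by rw [← Matrix.map_mul, hinv]; simp
  · rw [← mul_assoc, mul_eq_one_comm.1 hinv, one_mul]

end Stabilizer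

section Level

theorem intCast_zmod_map_eq_iff {m n : Type*} (N : ℕ) {A A' : Matrix m n ℤ} :
    A.map (Int.castRingHom (ZMod N)) = A'.map (Int.castRingHom (ZMod N)) ↔
      ∀ i j, A i j ≡ A' i j [ZMOD N] := by
  simp [← Matrix.ext_iff, ZMod.intCast_eq_intCast_iff]

theorem mem_GammaP2Set_iff {g : ℕ} {hg : 1 ≤ g} {σ : Matrix (Fin g ⊕ Fin g) (Fin g ⊕ Fin g) ℤ} :
    σ ∈ GammaP2Set g hg ↔ σ ∈ symplecticGroup (Fin g) ℤ ∧
      σ.map (Int.castRingHom (ZMod 2)) *ᵥ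
          (Int.castRingHom (ZMod 2) ∘ Pi.single (Sum.inr ⟨g - 1, by omega⟩) 1) =
        Int.castRingHom (ZMod 2) ∘ Pi.single (Sum.inr ⟨g - 1, by omega⟩) 1 := by
  rw [comp_single_one, mulVec_single_one, funext_iff]
  refine and_congr_right fun _ => forall_congr' fun i => ?_
  exact (ZMod.intCast_eq_intCast_iff _ _ 2).symm.trans (by simp [Matrix.one_apply, Pi.single_apply])

theorem mem_GSSet_iff {g : ℕ} {hg : 1 ≤ g} {σ : Matrix (Fin g ⊕ Fin g) (Fin g ⊕ Fin g) ℤ} :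
    σ ∈ GSSet g hg ↔ σ ∈ symplecticStabilizer (Pi.single (Sum.inr ⟨g - 1, by omega⟩) 1) := by
  refine ⟨fun ⟨hσ, _, hcol⟩ => mem_symplecticStabilizer_single_inr_iff.2 ⟨hσ, hcol⟩, fun hσ => ?_⟩
  exact ⟨hσ.1, apply_inl_eq_one_apply_of_mem_symplecticStabilizer hσ,
    (mem_symplecticStabilizer_single_inr_iff.1 hσ).2⟩

theorem mem_Level2Set_iff {g : ℕ} {γ : Matrix (Fin g ⊕ Fin g) (Fin g ⊕ Fin g) ℤ} :
    γ ∈ Level2Set g ↔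
      γ ∈ symplecticGroup (Fin g) ℤ ∧ γ.map (Int.castRingHom (ZMod 2)) = 1 := by
  have hone : (1 : Matrix (Fin g ⊕ Fin g) (Fin g ⊕ Fin g) ℤ).map (Int.castRingHom (ZMod 2)) = 1 :=
    Matrix.map_one _ (map_zero _) (map_one _)
  rw [← hone, intCast_zmod_map_eq_iff]
  rfl

end Level

/-- `Γ_g(p₂) = G_S · Γ_g[2]`: every `σ ∈ Γ_g(p₂)` factors as `σ = σ₀γ` with
`σ₀ ∈ G_S` and `γ ∈ Γ_g[2]`; equivalently, there is `σ₀ ∈ G_S` with `σ₀ ≡ σ (mod 2)`. -/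
theorem stmt3 (g : ℕ) (hg : 1 ≤ g)
    (σ : Matrix (Fin g ⊕ Fin g) (Fin g ⊕ Fin g) ℤ) (hσ : σ ∈ GammaP2Set g hg) :
    (∃ σ₀ ∈ GSSet g hg, ∃ γ ∈ Level2Set g, σ = σ₀ * γ) ∧
    (∃ σ₀ ∈ GSSet g hg, ∀ i j : Fin g ⊕ Fin g, σ₀ i j ≡ σ i j [ZMOD 2]) := by
  obtain ⟨hσSp, hσw⟩ := mem_GammaP2Set_iff.1 hσ
  have h := stmt3_general (u := Pi.single (Sum.inl _) 1) ZMod.intCast_surjective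
    (by rw [symplecticForm_single_inr, Pi.single_eq_same]) hσSp hσw
  simpa only [mem_GSSet_iff, mem_Level2Set_iff, and_assoc, intCast_zmod_map_eq_iff,
    Nat.cast_ofNat] using h
end

section
/- Let g ≥ 4. The abelianization of the group Γ_g(p₂) is a cyclic group of order 2; equivalently H₁(Γ_g(p₂);ℤ) ≅ ℤ/2ℤ. -/
open Matrix

theorem zmodcast {a b : ℤ} (h : ((a : ZMod 2)) = (b : ZMod 2)) : a ≡ b [ZMOD 2] :=
  (ZMod.intCast_eq_intCast_iff a b 2).mp h

theorem zmodcast' {a b : ℤ} (h : a ≡ b [ZMOD 2]) : ((a : ZMod 2)) = (b : ZMod 2) :=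
  (ZMod.intCast_eq_intCast_iff a b 2).mpr h

def GammaP2 (g : ℕ) (hg : 1 ≤ g) : Subgroup (Matrix.symplecticGroup (Fin g) ℤ) where
  carrier := {σ | ∀ i : Fin g ⊕ Fin g,
    (σ : Matrix (Fin g ⊕ Fin g) (Fin g ⊕ Fin g) ℤ) i (Sum.inr ⟨g - 1, by omega⟩) ≡
      (1 : Matrix (Fin g ⊕ Fin g) (Fin g ⊕ Fin g) ℤ) i (Sum.inr ⟨g - 1, by omega⟩) [ZMOD 2]}
  one_mem' := fun _ => Int.ModEq.refl _
  mul_mem' := by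
    intro a b ha hb i
    set bg : Fin g ⊕ Fin g := Sum.inr ⟨g - 1, by omega⟩ with hbg
    apply zmodcast
    have hab : ((a * b : Matrix.symplecticGroup (Fin g) ℤ) : Matrix (Fin g ⊕ Fin g) (Fin g ⊕ Fin g) ℤ) i bg =
        ∑ k, (a : Matrix (Fin g ⊕ Fin g) (Fin g ⊕ Fin g) ℤ) i k *
          (b : Matrix (Fin g ⊕ Fin g) (Fin g ⊕ Fin g) ℤ) k bg := Matrix.mul_apply
    rw [hab]
    push_cast
    calc (∑ k, ((a : Matrix (Fin g ⊕ Fin g) (Fin g ⊕ Fin g) ℤ) i k : ZMod 2) *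
            ((b : Matrix (Fin g ⊕ Fin g) (Fin g ⊕ Fin g) ℤ) k bg : ZMod 2))
        = ∑ k, ((a : Matrix (Fin g ⊕ Fin g) (Fin g ⊕ Fin g) ℤ) i k : ZMod 2) *
            ((1 : Matrix (Fin g ⊕ Fin g) (Fin g ⊕ Fin g) ℤ) k bg : ZMod 2) :=
          Finset.sum_congr rfl fun k _ => by rw [zmodcast' (hb k)]
      _ = ((a : Matrix (Fin g ⊕ Fin g) (Fin g ⊕ Fin g) ℤ) i bg : ZMod 2) := by
          simp [Matrix.one_apply, apply_ite]
      _ = ((1 : Matrix (Fin g ⊕ Fin g) (Fin g ⊕ Fin g) ℤ) i bg : ZMod 2) := zmodcast' (ha i)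
  inv_mem' := by
    intro a ha i
    set bg : Fin g ⊕ Fin g := Sum.inr ⟨g - 1, by omega⟩ with hbg
    have hmul : ((a⁻¹ : Matrix.symplecticGroup (Fin g) ℤ) : Matrix (Fin g ⊕ Fin g) (Fin g ⊕ Fin g) ℤ) *
        ((a : Matrix.symplecticGroup (Fin g) ℤ) : Matrix (Fin g ⊕ Fin g) (Fin g ⊕ Fin g) ℤ) =
        (1 : Matrix (Fin g ⊕ Fin g) (Fin g ⊕ Fin g) ℤ) :=
      congrArg Subtype.val (inv_mul_cancel a)
    apply zmodcast
    calc (((a⁻¹ : Matrix.symplecticGroup (Fin g) ℤ) : Matrix (Fin g ⊕ Fin g) (Fin g ⊕ Fin g) ℤ) i bg : ZMod 2)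
        = ∑ k, (((a⁻¹ : Matrix.symplecticGroup (Fin g) ℤ) : Matrix (Fin g ⊕ Fin g) (Fin g ⊕ Fin g) ℤ) i k : ZMod 2) *
            ((1 : Matrix (Fin g ⊕ Fin g) (Fin g ⊕ Fin g) ℤ) k bg : ZMod 2) := by
          simp [Matrix.one_apply, apply_ite]
      _ = ∑ k, (((a⁻¹ : Matrix.symplecticGroup (Fin g) ℤ) : Matrix (Fin g ⊕ Fin g) (Fin g ⊕ Fin g) ℤ) i k : ZMod 2) *
            ((a : Matrix (Fin g ⊕ Fin g) (Fin g ⊕ Fin g) ℤ) k bg : ZMod 2) :=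
          Finset.sum_congr rfl fun k _ => by rw [zmodcast' (ha k)]
      _ = ((((a⁻¹ : Matrix.symplecticGroup (Fin g) ℤ) : Matrix (Fin g ⊕ Fin g) (Fin g ⊕ Fin g) ℤ) *
            ((a : Matrix.symplecticGroup (Fin g) ℤ) : Matrix (Fin g ⊕ Fin g) (Fin g ⊕ Fin g) ℤ)) i bg : ZMod 2) := by
          rw [Matrix.mul_apply]; push_cast; rfl
      _ = ((1 : Matrix (Fin g ⊕ Fin g) (Fin g ⊕ Fin g) ℤ) i bg : ZMod 2) := by rw [hmul]

/-!
Let `Γ` be the stabilizer of `B_o` modulo `m`, and let `τ = T_A^m`, where `T_A` is the transvection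
along `A_o`. If `σ ∈ Γ`, then `⟨σ B_o, B_o⟩` is divisible by `m`, and the quotient modulo `m` is
additive in `σ` and equal to `1` at `τ`. So the abelianization surjects onto `ℤ/m`, and it remains
to see that `τ` generates it and that `τ^m` dies in it.

The image `σ B_o` is a unimodular vector congruent to `B_o` modulo `m`. Because `ℤ` has stable
range two, transvections and Eichler transformations in `Γ` carry it back to `B_o`; what is left of
`σ` after that is symplectic on the remaining planes. Induction over the planes shows that `Γ` is
generated by `τ`, transvections along vectors `t` of a single plane and Eichler transformations
`E(t, u)` with `t` and `u` in two different planes, where `t` and `u` pair to multiples of `m` with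
`B_o`. There are at least four planes, so some plane with basis `A_k`, `B_k` avoids `t`, `u` and
`B_o`, and `[E(A_k, t), E(B_k, u)] = E(t, u)` is a commutator in `Γ`. Conjugating `T_{B_k}` by
`E(A_k, t)` then shows that `T_t` is a product of commutators as well. This applies to
`τ^m = T_{m A_o}`, since `m A_o` pairs to `m` with `B_o`.
-/

namespace SymplecticLattice

section CommRing

variable {l R : Type*} [Fintype l] [DecidableEq l] [CommRing R]

/-- The symplectic form on `R^(l ⊕ l)`. Its Gram matrix is `-J`, since the `J` of Mathlib gives
`⟨A_i, B_i⟩ = -1`. -/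
def form : LinearMap.BilinForm R (l ⊕ l → R) := Matrix.toBilin' (-J l R)

/-- The action of the symplectic group on column vectors. -/
def act : symplecticGroup l R →* Module.End R (l ⊕ l → R) :=
  (Matrix.toLinAlgEquiv' (n := l ⊕ l) (R := R) : _ →* _).comp (symplecticGroup l R).subtype

theorem act_eq_mulVec (σ : symplecticGroup l R) (x : l ⊕ l → R) : act σ x = σ.1 *ᵥ x := rfl

theorem form_apply (x y : l ⊕ l → R) :
    form x y = ∑ i, (x (.inl i) * y (.inr i) - x (.inr i) * y (.inl i)) := by
  rw [Finset.sum_sub_distrib, sub_eq_add_neg]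
  simp [form, Matrix.toBilin'_apply', J, fromBlocks_neg, dotProduct, Matrix.fromBlocks_mulVec,
    Matrix.neg_mulVec]

@[simp]
theorem form_self (x : l ⊕ l → R) : form x x = 0 := by
  simp [form_apply, mul_comm]

theorem form_swap (x y : l ⊕ l → R) : form x y = -form y x := by
  simp [form_apply, mul_comm]

theorem mem_symplecticGroup_iff_form {M : Matrix (l ⊕ l) (l ⊕ l) R} :
    M ∈ symplecticGroup l R ↔ ∀ x y, form (M *ᵥ x) (M *ᵥ y) = form x y := by
  have hM : ∀ x y, form (M *ᵥ x) (M *ᵥ y) = Matrix.toBilin' (Mᵀ * -J l R * M) x y := fun x y => by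
    rw [← Matrix.toBilin'_comp]; rfl
  rw [SymplecticGroup.mem_iff']
  simp only [hM]
  rw [← LinearMap.ext_iff₂, form, EmbeddingLike.apply_eq_iff_eq, Matrix.mul_neg, Matrix.neg_mul,
    neg_inj]

@[simp]
theorem form_act (σ : symplecticGroup l R) (x y : l ⊕ l → R) :
    form (act σ x) (act σ y) = form x y :=
  mem_symplecticGroup_iff_form.1 σ.2 x y

theorem act_inv_apply_eq_iff {σ : symplecticGroup l R} {x y : l ⊕ l → R} :
    act σ⁻¹ x = y ↔ act σ y = x := by
  have hmul : ∀ τ ρ : symplecticGroup l R, ∀ z, act τ (act ρ z) = act (τ * ρ) z := by simp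
  constructor <;> rintro rfl <;> simp [hmul]

theorem form_act_left (σ : symplecticGroup l R) (x y : l ⊕ l → R) :
    form (act σ x) y = form x (act σ⁻¹ y) := by
  rw [← form_act σ x, ← Module.End.mul_apply, ← map_mul, mul_inv_cancel, map_one,
    Module.End.one_apply]

theorem act_injective : Function.Injective (act : symplecticGroup l R → _) :=
  Matrix.toLinAlgEquiv'.injective.comp Subtype.val_injective

theorem act_ext {σ τ : symplecticGroup l R} (h : ∀ x, act σ x = act τ x) : σ = τ :=
  act_injective (LinearMap.ext h)

/-- The symplectic transvection `x ↦ x + a ⟨u, x⟩ u`. -/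
def transvection (u : l ⊕ l → R) (a : R) : symplecticGroup l R :=
  ⟨LinearMap.toMatrix' (LinearMap.transvection (a • form u) u),
    mem_symplecticGroup_iff_form.2 fun x y => by
      simp only [LinearMap.toMatrix'_mulVec, LinearMap.transvection.apply, map_add, map_smul,
        LinearMap.add_apply, LinearMap.smul_apply, form_self, form_swap x u, smul_eq_mul]
      ring⟩

theorem act_transvection (u : l ⊕ l → R) (a : R) (x : l ⊕ l → R) :
    act (transvection u a) x = x + (a * form u x) • u :=
  LinearMap.toMatrix'_mulVec _ _

theorem transvection_add (u : l ⊕ l → R) (a b : R) :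
    transvection u (a + b) = transvection u a * transvection u b :=
  act_ext fun x => by
    simp only [map_mul, Module.End.mul_apply, act_transvection, map_add, map_smul, form_self]
    module

theorem transvection_zero (u : l ⊕ l → R) : transvection u 0 = 1 :=
  act_ext fun x => by simp [act_transvection]

theorem transvection_smul (u : l ⊕ l → R) (a b : R) :
    transvection (a • u) b = transvection u (a ^ 2 * b) :=
  act_ext fun x => by
    simp only [act_transvection, map_smul, LinearMap.smul_apply, smul_eq_mul]
    module

theorem transvection_zpow (u : l ⊕ l → R) (a : R) (n : ℤ) :
    transvection u a ^ n = transvection u (n * a) := by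
  induction n with
  | zero => simp [transvection_zero]
  | succ n ih => rw [_root_.zpow_add_one, ih, ← transvection_add]; push_cast; ring_nf
  | pred n ih =>
    rw [_root_.zpow_sub_one, ih, mul_inv_eq_iff_eq_mul, ← transvection_add]; push_cast; ring_nf

theorem conj_transvection (σ : symplecticGroup l R) (u : l ⊕ l → R) (a : R) :
    σ * transvection u a * σ⁻¹ = transvection (act σ u) a := by
  rw [mul_inv_eq_iff_eq_mul]
  exact act_ext fun x => by simp [act_transvection]

/-- The Eichler transformation `x ↦ x + ⟨u, x⟩ w + ⟨w, x⟩ u` attached to orthogonal vectors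
`u` and `w`; writing it as a product of transvections makes it symplectic for all `u` and `w`. -/
def eichler (u w : l ⊕ l → R) : symplecticGroup l R :=
  transvection (u + w) 1 * transvection u (-1) * transvection w (-1)

theorem act_eichler {u w : l ⊕ l → R} (h : form u w = 0) (x : l ⊕ l → R) :
    act (eichler u w) x = x + form u x • w + form w x • u := by
  simp only [eichler, map_mul, Module.End.mul_apply, act_transvection, map_add, map_smul,
    LinearMap.add_apply, form_self, h, form_swap w u]
  module

theorem conj_eichler (σ : symplecticGroup l R) (u w : l ⊕ l → R) :
    σ * eichler u w * σ⁻¹ = eichler (act σ u) (act σ w) := by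
  simp only [eichler, ← map_add, ← conj_transvection]
  group

theorem eichler_zero_left (w : l ⊕ l → R) : eichler 0 w = 1 :=
  act_ext fun x => by simp [act_eichler]

theorem eichler_mul_eichler {p u w : l ⊕ l → R} (hu : form u p = 0) (hw : form w p = 0) :
    eichler u p * eichler w p = transvection p (form u w) * eichler (u + w) p := by
  have huw : form (u + w) p = 0 := by simp [hu, hw]
  refine act_ext fun x => ?_
  simp only [map_mul, Module.End.mul_apply, act_transvection, act_eichler hu, act_eichler hw,
    act_eichler huw, map_add, map_smul, LinearMap.add_apply, form_swap p u, form_swap p w, hu, hw,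
    form_self, smul_eq_mul]
  module

theorem transvection_add_vector {t w : l ⊕ l → R} (h : form w t = 0) (a : R) :
    transvection (w + t) a = transvection w a * transvection t a * eichler w (a • t) := by
  have hat : form w (a • t) = 0 := by simp [h]
  refine act_ext fun x => ?_
  simp only [map_mul, Module.End.mul_apply, act_transvection, act_eichler hat, map_add, map_smul,
    LinearMap.add_apply, LinearMap.smul_apply, form_swap t w, h, form_self, smul_eq_mul]
  module

theorem act_eichler_of_form_eq_zero {u w x : l ⊕ l → R} (h : form u w = 0) (hu : form u x = 0)
    (hw : form w x = 0) : act (eichler u w) x = x := by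
  simp [act_eichler h, hu, hw]

section Commutator

variable {Γ : Subgroup (symplecticGroup l R)} {s t u w : l ⊕ l → R}

theorem inv_mul_conj_mem_commutator {G : Type*} [Group G] {H : Subgroup G} {x y : G} (hx : x ∈ H)
    (hy : y ∈ H) : x⁻¹ * (y * x * y⁻¹) ∈ ⁅H, H⁆ := by
  simpa [commutatorElement_def, mul_assoc] using
    Subgroup.commutator_mem_commutator (inv_mem hx) hy

theorem act_eichler_of_hyperbolic (hst : form s t = 0) (hwt : form w t = 0) (hsw : form s w = 1) :
    act (eichler s t) w = w + t := by
  rw [act_eichler hst, form_swap t w, hwt, hsw]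
  simp

theorem eichler_mem_commutator (hst : form s t = 0) (hwt : form w t = 0) (hsw : form s w = 1)
    (hsu : form s u = 0) (hwu : form w u = 0) (htu : form t u = 0)
    (hΓst : eichler s t ∈ Γ) (hΓwu : eichler w u ∈ Γ) : eichler t u ∈ ⁅Γ, Γ⁆ := by
  have hconj : eichler s t * eichler w u * (eichler s t)⁻¹ = eichler w u * eichler t u := by
    rw [conj_eichler, act_eichler_of_hyperbolic hst hwt hsw,
      act_eichler_of_form_eq_zero hst hsu htu, eichler_mul_eichler hwu htu, hwt, transvection_zero,
      one_mul]
  simpa [hconj] using inv_mul_conj_mem_commutator hΓwu hΓst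

theorem transvection_mem_commutator {a : R} (hst : form s t = 0) (hwt : form w t = 0)
    (hsw : form s w = 1) (hΓst : eichler s t ∈ Γ) (hΓw : transvection w a ∈ Γ)
    (hcomm : eichler w (a • t) ∈ ⁅Γ, Γ⁆) : transvection t a ∈ ⁅Γ, Γ⁆ := by
  have hconj : eichler s t * transvection w a * (eichler s t)⁻¹ =
      transvection w a * (transvection t a * eichler w (a • t)) := by
    rw [conj_transvection, act_eichler_of_hyperbolic hst hwt hsw, transvection_add_vector hwt,
      mul_assoc]
  have hmem := inv_mul_conj_mem_commutator hΓw hΓst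
  rw [hconj, inv_mul_cancel_left] at hmem
  exact (Subgroup.mul_mem_cancel_right _ hcomm).1 hmem

end Commutator

end CommRing

section Coordinates

variable {l R : Type*} [CommRing R] {i : l} {T U : Set l}

/-- The span of the `A_i` and `B_i` with `i ∈ T`. -/
def coordSpace (T : Set l) : Submodule R (l ⊕ l → R) where
  carrier := {x | ∀ i ∉ T, x (.inl i) = 0 ∧ x (.inr i) = 0}
  zero_mem' := by simp
  add_mem' hx hy i hi := by simp [hx i hi, hy i hi]
  smul_mem' a x hx i hi := by simp [hx i hi]

theorem coordSpace_mono (h : T ⊆ U) : coordSpace (R := R) T ≤ coordSpace U :=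
  fun _ hx i hi => hx i fun hiT => hi (h hiT)

theorem coordSpace_empty : coordSpace (R := R) (∅ : Set l) = ⊥ :=
  (Submodule.eq_bot_iff _).2 fun x hx => by ext (j | j) <;> simp [hx j (Set.notMem_empty j)]

variable [DecidableEq l]

/-- The class `A_i`. -/
def basisA (i : l) : l ⊕ l → R := Pi.single (.inl i) 1

/-- The class `B_i`. -/
def basisB (i : l) : l ⊕ l → R := Pi.single (.inr i) 1

theorem basisA_mem_coordSpace (hi : i ∈ T) : (basisA i : l ⊕ l → R) ∈ coordSpace T := fun j hj => by
  simp [basisA, ne_of_mem_of_not_mem hi hj |>.symm]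

theorem basisB_mem_coordSpace (hi : i ∈ T) : (basisB i : l ⊕ l → R) ∈ coordSpace T := fun j hj => by
  simp [basisB, ne_of_mem_of_not_mem hi hj |>.symm]

theorem exists_eq_add_of_mem_coordSpace_insert {x : l ⊕ l → R} (hx : x ∈ coordSpace (insert i T)) :
    ∃ r ∈ coordSpace T, x = x (.inl i) • basisA i + x (.inr i) • basisB i + r := by
  refine ⟨x - (x (.inl i) • basisA i + x (.inr i) • basisB i), fun j hj => ?_, by abel⟩
  rcases eq_or_ne j i with rfl | hji
  · simp [basisA, basisB]
  · simp [basisA, basisB, hji, hx j (by simp [hji, hj])]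

variable [Fintype l]

theorem form_basisA_left (i : l) (x : l ⊕ l → R) : form (basisA i) x = x (.inr i) := by
  simp [form_apply, basisA, Pi.single_apply]

theorem form_basisB_left (i : l) (x : l ⊕ l → R) : form (basisB i) x = -x (.inl i) := by
  simp [form_apply, basisB, Pi.single_apply]

theorem form_basisA_basisB (i : l) : form (basisA i) (basisB i : l ⊕ l → R) = 1 := by
  simp [form_basisA_left, basisB]

theorem form_basisB_basisA (i : l) : form (basisB i) (basisA i : l ⊕ l → R) = -1 := by
  rw [form_swap, form_basisA_basisB]

theorem form_eq_zero_of_disjoint {x y : l ⊕ l → R} (hTU : Disjoint T U) (hx : x ∈ coordSpace T)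
    (hy : y ∈ coordSpace U) : form x y = 0 := by
  rw [form_apply]
  refine Finset.sum_eq_zero fun i _ => ?_
  by_cases hi : i ∈ T
  · simp [hy i (Set.disjoint_left.1 hTU hi)]
  · simp [hx i hi]

theorem form_eq_zero_of_ne {j : l} {x y : l ⊕ l → R} (hij : i ≠ j) (hx : x ∈ coordSpace {i})
    (hy : y ∈ coordSpace {j}) : form x y = 0 :=
  form_eq_zero_of_disjoint (Set.disjoint_singleton.2 hij) hx hy

theorem eichler_mem_of_forall_plane {K : Subgroup (symplecticGroup l R)}
    {p : l ⊕ l → R} (hpU : p ∈ coordSpace U) (hTU : Disjoint T U)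
    (htrans : ∀ n, transvection p n ∈ K)
    (hplane : ∀ j ∈ T, ∀ u ∈ coordSpace {j}, eichler u p ∈ K) :
    ∀ w ∈ coordSpace T, eichler w p ∈ K := by
  induction T, T.toFinite using Set.Finite.induction_on with
  | empty =>
    intro w hw
    rw [coordSpace_empty, Submodule.mem_bot] at hw
    rw [hw, eichler_zero_left]
    exact one_mem K
  | @insert j T _ _ ih =>
    intro w hw
    have hdisj := Set.disjoint_insert_left.1 hTU
    obtain ⟨r, hr, hwr⟩ := exists_eq_add_of_mem_coordSpace_insert hw
    set u : l ⊕ l → R := w (.inl j) • basisA j + w (.inr j) • basisB j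
    have hu : u ∈ coordSpace {j} :=
      add_mem (Submodule.smul_mem _ _ (basisA_mem_coordSpace rfl))
        (Submodule.smul_mem _ _ (basisB_mem_coordSpace rfl))
    have hup := form_eq_zero_of_disjoint (Set.disjoint_singleton_left.2 hdisj.1) hu hpU
    have hrp := form_eq_zero_of_disjoint hdisj.2 hr hpU
    have hmul := mul_mem (hplane j (Set.mem_insert j T) u hu)
      (ih hdisj.2 (fun k hk => hplane k (Set.mem_insert_of_mem j hk)) r hr)
    rwa [eichler_mul_eichler hup hrp, Subgroup.mul_mem_cancel_left _ (htrans _), ← hwr] at hmul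

/-- The subgroup of matrices that fix `A_i` and `B_i` for all `i ∉ T`, that is, the symplectic
group of `coordSpace T`. -/
def symplecticOn (T : Set l) : Subgroup (symplecticGroup l R) where
  carrier := {σ | ∀ i ∉ T, act σ (basisA i) = basisA i ∧ act σ (basisB i) = basisB i}
  one_mem' := by simp
  mul_mem' hσ hτ i hi := by simp [hσ i hi, hτ i hi]
  inv_mem' {σ} hσ i hi := by
    simp only [act_inv_apply_eq_iff, hσ i hi, and_self]

theorem symplecticOn_univ : symplecticOn (R := R) (Set.univ : Set l) = ⊤ :=
  eq_top_iff.2 fun _ _ i hi => (hi (Set.mem_univ i)).elim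

theorem symplecticOn_empty : symplecticOn (R := R) (∅ : Set l) = ⊥ := by
  refine (Subgroup.eq_bot_iff_forall _).2 fun σ hσ => ?_
  refine act_injective ((Pi.basisFun R (l ⊕ l)).ext ?_)
  rw [map_one]
  rintro (i | i)
  · simpa [basisA] using (hσ i (Set.notMem_empty i)).1
  · simpa [basisB] using (hσ i (Set.notMem_empty i)).2

theorem act_mem_coordSpace {σ : symplecticGroup l R} (hσ : σ ∈ symplecticOn T) {x : l ⊕ l → R}
    (hx : x ∈ coordSpace T) : act σ x ∈ coordSpace T := fun j hj => by
  have hinv := inv_mem hσ j hj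
  have hA : form (basisA j) (act σ x) = 0 := by
    rw [form_swap, form_act_left, hinv.1, form_swap, form_basisA_left, (hx j hj).2]; simp
  have hB : form (basisB j) (act σ x) = 0 := by
    rw [form_swap, form_act_left, hinv.2, form_swap, form_basisB_left, (hx j hj).1]; simp
  exact ⟨by simpa [form_basisB_left] using hB, by simpa [form_basisA_left] using hA⟩

end Coordinates

section CongruenceStabilizer

variable {l R : Type*} [Fintype l] [DecidableEq l] [CommRing R]

/-- The stabilizer of `v` modulo `a`; the group `Γ_g(p₂)` is the case `a = 2`, `v = B_g`. -/
def congruenceStabilizer (a : R) (v : l ⊕ l → R) : Subgroup (symplecticGroup l R) where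
  carrier := {σ | ∃ z, act σ v = v + a • z}
  one_mem' := ⟨0, by simp⟩
  mul_mem' := by
    rintro σ τ ⟨y, hy⟩ ⟨z, hz⟩
    exact ⟨y + act σ z, by simp [hy, hz, add_assoc]⟩
  inv_mem' := by
    rintro σ ⟨z, hz⟩
    refine ⟨-act σ⁻¹ z, act_inv_apply_eq_iff.2 ?_⟩
    simp [hz, ← Module.End.mul_apply, ← map_mul]

variable {a : R} {v : l ⊕ l → R}

theorem transvection_mem_congruenceStabilizer {u : l ⊕ l → R} {n : R} (h : a ∣ n * form u v) :
    transvection u n ∈ congruenceStabilizer a v := by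
  obtain ⟨k, hk⟩ := h
  exact ⟨k • u, by rw [act_transvection, hk, mul_smul]⟩

theorem eichler_mem_congruenceStabilizer {u w : l ⊕ l → R} (h : form u w = 0)
    (hu : a ∣ form u v) (hw : a ∣ form w v) : eichler u w ∈ congruenceStabilizer a v := by
  obtain ⟨b, hb⟩ := hu
  obtain ⟨c, hc⟩ := hw
  exact ⟨b • w + c • u, by rw [act_eichler h, hb, hc]; module⟩

variable {i j o : l} {t u : l ⊕ l → R}

theorem eichler_plane_mem_commutator (hl : 4 ≤ Fintype.card l) (hij : i ≠ j)
    (ht : t ∈ coordSpace {i}) (hu : u ∈ coordSpace {j}) (hat : a ∣ form t (basisB o))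
    (hau : a ∣ form u (basisB o)) :
    eichler t u ∈ ⁅congruenceStabilizer a (basisB o), congruenceStabilizer a (basisB o)⁆ := by
  have hcard : ({o, i, j} : Finset l).card < Finset.univ.card := Finset.card_le_three.trans_lt hl
  obtain ⟨k, -, hk⟩ := Finset.exists_mem_notMem_of_card_lt_card hcard
  simp only [Finset.mem_insert, Finset.mem_singleton, not_or] at hk
  have hA := basisA_mem_coordSpace (R := R) (Set.mem_singleton k)
  have hB := basisB_mem_coordSpace (R := R) (Set.mem_singleton k)
  have ho := basisB_mem_coordSpace (R := R) (Set.mem_singleton o)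
  have hAo : a ∣ form (basisA k) (basisB o) := by simp [form_eq_zero_of_ne hk.1 hA ho]
  have hBo : a ∣ form (basisB k) (basisB o) := by simp [form_eq_zero_of_ne hk.1 hB ho]
  exact eichler_mem_commutator (form_eq_zero_of_ne hk.2.1 hA ht)
    (form_eq_zero_of_ne hk.2.1 hB ht) (form_basisA_basisB k) (form_eq_zero_of_ne hk.2.2 hA hu)
    (form_eq_zero_of_ne hk.2.2 hB hu) (form_eq_zero_of_ne hij ht hu)
    (eichler_mem_congruenceStabilizer (form_eq_zero_of_ne hk.2.1 hA ht) hAo hat)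
    (eichler_mem_congruenceStabilizer (form_eq_zero_of_ne hk.2.2 hB hu) hBo hau)

theorem transvection_plane_mem_commutator (hl : 4 ≤ Fintype.card l) (ht : t ∈ coordSpace {i})
    (hat : a ∣ form t (basisB o)) (n : R) :
    transvection t n ∈ ⁅congruenceStabilizer a (basisB o), congruenceStabilizer a (basisB o)⁆ := by
  have hcard : ({o, i} : Finset l).card < Finset.univ.card :=
    Finset.card_le_two.trans_lt (Nat.lt_of_lt_of_le (by norm_num) hl)
  obtain ⟨k, -, hk⟩ := Finset.exists_mem_notMem_of_card_lt_card hcard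
  simp only [Finset.mem_insert, Finset.mem_singleton, not_or] at hk
  have hA := basisA_mem_coordSpace (R := R) (Set.mem_singleton k)
  have hB := basisB_mem_coordSpace (R := R) (Set.mem_singleton k)
  have ho := basisB_mem_coordSpace (R := R) (Set.mem_singleton o)
  have hAo : a ∣ form (basisA k) (basisB o) := by simp [form_eq_zero_of_ne hk.1 hA ho]
  have hBo : a ∣ form (basisB k) (basisB o) := by simp [form_eq_zero_of_ne hk.1 hB ho]
  refine transvection_mem_commutator (form_eq_zero_of_ne hk.2 hA ht)
    (form_eq_zero_of_ne hk.2 hB ht) (form_basisA_basisB k)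
    (eichler_mem_congruenceStabilizer (form_eq_zero_of_ne hk.2 hA ht) hAo hat)
    (transvection_mem_congruenceStabilizer (hBo.mul_left n))
    (eichler_plane_mem_commutator hl hk.2 hB (Submodule.smul_mem _ n ht) hBo ?_)
  simpa using hat.mul_left n

end CongruenceStabilizer

section PlaneCoordinates

variable {l R : Type*} [Fintype l] [DecidableEq l] [CommRing R] {i : l} {T : Set l}
  {r w : l ⊕ l → R}

theorem form_basisA_of_mem_coordSpace (hi : i ∉ T) (hr : r ∈ coordSpace T) :
    form (basisA i) r = 0 := by
  rw [form_basisA_left, (hr i hi).2]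

theorem form_basisB_of_mem_coordSpace (hi : i ∉ T) (hr : r ∈ coordSpace T) :
    form (basisB i) r = 0 := by
  rw [form_basisB_left, (hr i hi).1, neg_zero]

theorem form_of_mem_coordSpace_basisA (hi : i ∉ T) (hr : r ∈ coordSpace T) :
    form r (basisA i) = 0 := by
  rw [form_swap, form_basisA_of_mem_coordSpace hi hr, neg_zero]

theorem form_of_mem_coordSpace_basisB (hi : i ∉ T) (hr : r ∈ coordSpace T) :
    form r (basisB i) = 0 := by
  rw [form_swap, form_basisB_of_mem_coordSpace hi hr, neg_zero]

theorem act_transvection_basisA (hi : i ∉ T) (hr : r ∈ coordSpace T) (n a c : R) :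
    act (transvection (basisA i) n) (a • basisA i + c • basisB i + r) =
      (a + n * c) • basisA i + c • basisB i + r := by
  simp only [act_transvection, map_add, map_smul, form_self, form_basisA_basisB,
    form_basisA_of_mem_coordSpace hi hr]
  module

theorem act_transvection_basisB (hi : i ∉ T) (hr : r ∈ coordSpace T) (n a c : R) :
    act (transvection (basisB i) n) (a • basisA i + c • basisB i + r) =
      a • basisA i + (c - n * a) • basisB i + r := by
  simp only [act_transvection, map_add, map_smul, form_self, form_basisB_basisA,
    form_basisB_of_mem_coordSpace hi hr]
  module

theorem act_eichler_basisB (hi : i ∉ T) (hw : w ∈ coordSpace T) (hr : r ∈ coordSpace T)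
    (a c : R) :
    act (eichler w (basisB i)) (a • basisA i + c • basisB i + r) =
      a • basisA i + (c + form w r) • basisB i + (r - a • w) := by
  simp only [act_eichler (form_of_mem_coordSpace_basisB hi hw), map_add, map_smul, form_self,
    form_basisB_basisA, form_basisB_of_mem_coordSpace hi hr, form_of_mem_coordSpace_basisA hi hw,
    form_of_mem_coordSpace_basisB hi hw, smul_eq_mul]
  module

theorem act_eichler_smul_basisA (hi : i ∉ T) (hw : w ∈ coordSpace T) (hr : r ∈ coordSpace T)
    (m a c : R) :
    act (eichler w (m • basisA i)) (a • basisA i + c • basisB i + r) =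
      (a + m * form w r) • basisA i + c • basisB i + (r + (m * c) • w) := by
  have horth : form w (m • basisA i) = 0 := by simp [form_of_mem_coordSpace_basisA hi hw]
  simp only [act_eichler horth, map_add, map_smul, LinearMap.smul_apply, form_self,
    form_basisA_basisB, form_basisA_of_mem_coordSpace hi hr, form_of_mem_coordSpace_basisA hi hw,
    form_of_mem_coordSpace_basisB hi hw, smul_eq_mul]
  module

end PlaneCoordinates

section Elementary

variable {l R : Type*} [Fintype l] [DecidableEq l] [CommRing R] {m : R} {i : l} {T : Set l}

/-- The group generated by the transvections along `B_i` and `mA_i` and by the Eichler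
transformations that pair these two vectors with `coordSpace T`. -/
def elementary (m : R) (i : l) (T : Set l) : Subgroup (symplecticGroup l R) :=
  Subgroup.closure (Set.range (transvection (basisB i)) ∪
    Set.range (fun n => transvection (basisA i) (m * n)) ∪
    (eichler · (basisB i)) '' (coordSpace (R := R) T) ∪
    (eichler · (m • basisA i)) '' (coordSpace (R := R) T))

theorem elementary_le {H : Subgroup (symplecticGroup l R)}
    (hB : ∀ n, transvection (basisB i) n ∈ H) (hA : ∀ n, transvection (basisA i) (m * n) ∈ H)
    (hTB : ∀ w ∈ coordSpace T, eichler w (basisB i) ∈ H)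
    (hTA : ∀ w ∈ coordSpace T, eichler w (m • basisA i) ∈ H) : elementary m i T ≤ H := by
  rw [elementary, Subgroup.closure_le]
  rintro _ (((⟨n, rfl⟩ | ⟨n, rfl⟩) | ⟨w, hw, rfl⟩) | ⟨w, hw, rfl⟩)
  exacts [hB n, hA n, hTB w hw, hTA w hw]

theorem transvection_basisB_mem_elementary (n : R) :
    transvection (basisB i) n ∈ elementary m i T :=
  Subgroup.subset_closure (.inl (.inl (.inl ⟨n, rfl⟩)))

theorem transvection_basisA_mem_elementary (n : R) :
    transvection (basisA i) (m * n) ∈ elementary m i T :=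
  Subgroup.subset_closure (.inl (.inl (.inr ⟨n, rfl⟩)))

theorem eichler_basisB_mem_elementary {w : l ⊕ l → R} (hw : w ∈ coordSpace T) :
    eichler w (basisB i) ∈ elementary m i T :=
  Subgroup.subset_closure (.inl (.inr ⟨w, hw, rfl⟩))

theorem eichler_basisA_mem_elementary {w : l ⊕ l → R} (hw : w ∈ coordSpace T) :
    eichler w (m • basisA i) ∈ elementary m i T :=
  Subgroup.subset_closure (.inr ⟨w, hw, rfl⟩)

/-- The vector with plane coordinates `ma`, `c` and remaining part `mr` can be moved to `B_i` by
the elementary group. -/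
def IsReducible (m : R) (i : l) (T : Set l) (a c : R) (r : l ⊕ l → R) : Prop :=
  ∃ σ ∈ elementary m i T, act σ ((m * a) • basisA i + c • basisB i + m • r) = basisB i

variable {a c : R} {r w : l ⊕ l → R}

theorem IsReducible.of_act {a' c' : R} {r' : l ⊕ l → R} {σ : symplecticGroup l R}
    (h : IsReducible m i T a' c' r') (hσ : σ ∈ elementary m i T)
    (hact : act σ ((m * a) • basisA i + c • basisB i + m • r) =
      (m * a') • basisA i + c' • basisB i + m • r') : IsReducible m i T a c r := by
  obtain ⟨τ, hτ, h⟩ := h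
  exact ⟨τ * σ, mul_mem hτ hσ, by rw [map_mul, Module.End.mul_apply, hact, h]⟩

theorem isReducible_of_transvection_basisA (hi : i ∉ T) (hr : r ∈ coordSpace T) (n : R)
    (h : IsReducible m i T (a + n * c) c r) : IsReducible m i T a c r :=
  h.of_act (transvection_basisA_mem_elementary n) <| by
    rw [act_transvection_basisA hi (Submodule.smul_mem _ _ hr)]
    module

theorem isReducible_of_transvection_basisB (hi : i ∉ T) (hr : r ∈ coordSpace T) (n : R)
    (h : IsReducible m i T a (c - n * (m * a)) r) : IsReducible m i T a c r :=
  h.of_act (transvection_basisB_mem_elementary n) <| by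
    rw [act_transvection_basisB hi (Submodule.smul_mem _ _ hr)]

theorem isReducible_of_eichler_basisB (hi : i ∉ T) (hr : r ∈ coordSpace T) (hw : w ∈ coordSpace T)
    (h : IsReducible m i T a (c + m * form w r) (r - a • w)) : IsReducible m i T a c r :=
  h.of_act (eichler_basisB_mem_elementary hw) <| by
    rw [act_eichler_basisB hi hw (Submodule.smul_mem _ _ hr), map_smul, smul_eq_mul]
    module

theorem isReducible_of_eichler_basisA (hi : i ∉ T) (hr : r ∈ coordSpace T) (hw : w ∈ coordSpace T)
    (h : IsReducible m i T (a + m * form w r) c (r + c • w)) : IsReducible m i T a c r :=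
  h.of_act (eichler_basisA_mem_elementary hw) <| by
    rw [act_eichler_smul_basisA hi hw (Submodule.smul_mem _ _ hr), map_smul, smul_eq_mul]
    module

theorem isReducible_of_add (hi : i ∉ T) (hac : IsCoprime a c) (hr : r ∈ coordSpace T)
    (hw : w ∈ coordSpace T) (hwr : form w r = 0) (h : IsReducible m i T a c (r + w)) :
    IsReducible m i T a c r := by
  -- The first move adds `(α * a) • w` to `r`, the second adds `(β * c) • w`.
  obtain ⟨α, β, hαβ⟩ := hac
  have hαw : -α • w ∈ coordSpace T := Submodule.smul_mem _ _ hw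
  refine isReducible_of_eichler_basisB hi hr hαw ?_
  have hr' := sub_mem hr (Submodule.smul_mem _ a hαw)
  refine isReducible_of_eichler_basisA hi hr' (Submodule.smul_mem _ β hw) ?_
  have hsum : r - a • -α • w + c • β • w = r + (α * a + β * c) • w := by module
  rw [hαβ, one_smul] at hsum
  rw [← hsum] at h
  simpa [hwr] using h

theorem isReducible_one (hi : i ∉ T) (hr : r ∈ coordSpace T) : IsReducible m i T a 1 r := by
  have hbase : IsReducible m i T 0 1 0 := ⟨1, one_mem _, by simp⟩
  refine isReducible_of_eichler_basisA hi hr (neg_mem hr) ?_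
  refine isReducible_of_transvection_basisA hi (by simp) (-a) ?_
  simpa using hbase

theorem isReducible_of_isCoprime (hi : i ∉ T) (hT : T.Nonempty) (hac : IsCoprime a c) {d : R}
    (hc : c = 1 + m * d) (hr : r ∈ coordSpace T) : IsReducible m i T a c r := by
  obtain ⟨j, hj⟩ := hT
  have hA : (basisA j : l ⊕ l → R) ∈ coordSpace T := basisA_mem_coordSpace hj
  have hdB : d • basisB j ∈ coordSpace T := Submodule.smul_mem _ d (basisB_mem_coordSpace hj)
  -- Once `r` has become `A_j`, pairing it with `d B_j` lowers `c = 1 + m * d` to `1`.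
  refine isReducible_of_add hi hac hr (neg_mem hr) (by simp) ?_
  rw [add_neg_cancel]
  refine isReducible_of_add hi hac (zero_mem _) hA (by simp) ?_
  rw [zero_add]
  refine isReducible_of_eichler_basisB hi hA hdB ?_
  have hc' : c + m * form (d • basisB j) (basisA j) = 1 := by
    simp [hc, form_basisB_basisA, add_assoc]
  rw [hc']
  exact isReducible_one hi (sub_mem hA (Submodule.smul_mem _ a hdB))

end Elementary

section Integers

theorem exists_isCoprime_add_mul {a c d p q s : ℤ} (ha : a ≠ 0) (h : p * c + q * a + s * d = 1) :
    ∃ n, IsCoprime a (c + n * d) := by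
  -- `c` is a unit modulo `gcd a d`, and units lift along `ZMod a → ZMod (gcd a d)`.
  have : NeZero a.natAbs := ⟨Int.natAbs_ne_zero.2 ha⟩
  have hdvd : Int.gcd a d ∣ a.natAbs := Int.natCast_dvd.1 (Int.gcd_dvd_left ..)
  obtain ⟨x, hx⟩ := Int.gcd_dvd_left a d
  obtain ⟨y, hy⟩ := Int.gcd_dvd_right a d
  have hunit : IsUnit (c : ZMod (Int.gcd a d)) :=
    (ZMod.coe_int_isUnit_iff_isCoprime _ _).2
      ⟨q * x + s * y, p, by linear_combination h - q * hx - s * hy⟩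
  obtain ⟨u, hu⟩ := ZMod.unitsMap_surjective hdvd hunit.unit
  obtain ⟨e, he⟩ := ZMod.intCast_surjective (u : ZMod a.natAbs)
  have hea : IsCoprime a e := by
    have hcop := (ZMod.coe_int_isUnit_iff_isCoprime e a.natAbs).1 (he ▸ u.isUnit)
    rwa [Int.natCast_natAbs, IsCoprime.abs_left_iff] at hcop
  obtain ⟨k, hk⟩ : (Int.gcd a d : ℤ) ∣ e - c := by
    rw [← ZMod.intCast_eq_intCast_iff_dvd_sub, ← hunit.unit_spec, ← hu, ZMod.unitsMap_val, ← he,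
      ZMod.cast_intCast hdvd]
  refine ⟨k * Int.gcdB a d, ?_⟩
  have hn : c + k * Int.gcdB a d * d = e + a * (-k * Int.gcdA a d) := by
    linear_combination -hk - k * Int.gcd_eq_gcd_ab a d
  rw [hn]
  exact IsCoprime.add_mul_left_right_iff.2 hea

variable {l : Type*} [Fintype l] [DecidableEq l] {m : ℤ} {i : l} {T : Set l} {a c : ℤ}
  {r w : l ⊕ l → ℤ}

theorem isReducible_of_unimodular (hi : i ∉ T) (hT : T.Nonempty) {d p q : ℤ} (hc : c = 1 + m * d)
    (hr : r ∈ coordSpace T) (hw : w ∈ coordSpace T)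
    (h : p * c + q * a + m * form w r = 1) : IsReducible m i T a c r := by
  rcases eq_or_ne a 0 with rfl | ha
  · refine isReducible_of_eichler_basisA hi hr hw ?_
    exact isReducible_of_isCoprime hi hT ⟨1, p, by linarith⟩ hc
      (add_mem hr (Submodule.smul_mem _ c hw))
  · obtain ⟨n, hn⟩ := exists_isCoprime_add_mul (c := c) (p := p) (q := q) (s := 1) ha
      (by rwa [one_mul])
    have hnw : n • w ∈ coordSpace T := Submodule.smul_mem _ n hw
    refine isReducible_of_eichler_basisB hi hr hnw ?_
    refine isReducible_of_isCoprime hi hT ?_ (d := d + n * form w r) ?_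
      (sub_mem hr (Submodule.smul_mem _ a hnw))
    · rw [map_smul, LinearMap.smul_apply, smul_eq_mul, mul_left_comm]
      exact hn
    · rw [hc, map_smul, LinearMap.smul_apply, smul_eq_mul]
      ring

theorem isReducible_rotate (hi : i ∉ T) (h : IsReducible 1 i T c (-a) 0) :
    IsReducible 1 i T a c 0 := by
  -- `T_A T_B T_A` is a quarter turn of the plane.
  refine isReducible_of_transvection_basisA hi (zero_mem _) 1 ?_
  refine isReducible_of_transvection_basisB hi (zero_mem _) 1 ?_
  refine isReducible_of_transvection_basisA hi (zero_mem _) 1 ?_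
  convert h using 1 <;> ring

theorem isReducible_plane (hi : i ∉ T) (hac : IsCoprime a c) : IsReducible 1 i T a c 0 := by
  induction hn : a.natAbs using Nat.strong_induction_on generalizing a c with
  | _ n ih =>
    subst hn
    rcases eq_or_ne a 0 with rfl | ha
    · rcases Int.isUnit_iff.1 (isCoprime_zero_left.1 hac) with rfl | rfl
      · exact isReducible_one hi (zero_mem _)
      · refine isReducible_rotate hi (isReducible_rotate hi ?_)
        simpa using isReducible_one hi (zero_mem _)
    · refine isReducible_of_transvection_basisB hi (zero_mem _) (c / a) (isReducible_rotate hi ?_)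
      have hmod : c - c / a * (1 * a) = c % a := by
        rw [Int.emod_def]
        ring
      rw [hmod]
      have hlt : (c % a).natAbs < a.natAbs := by
        zify
        rw [abs_of_nonneg (Int.emod_nonneg c ha)]
        exact Int.emod_lt_abs c ha
      refine ih _ hlt ?_ rfl
      rw [IsCoprime.neg_right_iff, ← IsCoprime.add_mul_left_left_iff (z := c / a),
        Int.emod_add_mul_ediv]
      exact hac.symm

end Integers

section Generation

variable {l R : Type*} [Fintype l] [DecidableEq l] [CommRing R] {m : R} {i : l} {T : Set l}
  {σ : symplecticGroup l R}

theorem transvection_mem_symplecticOn {u : l ⊕ l → R} (hu : u ∈ coordSpace T) (n : R) :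
    transvection u n ∈ symplecticOn T := fun j hj => by
  simp [act_transvection, form_of_mem_coordSpace_basisA hj hu, form_of_mem_coordSpace_basisB hj hu]

theorem eichler_mem_symplecticOn {u w : l ⊕ l → R} (hu : u ∈ coordSpace T) (hw : w ∈ coordSpace T)
    (h : form u w = 0) : eichler u w ∈ symplecticOn T := fun j hj => by
  simp [act_eichler h, form_of_mem_coordSpace_basisA hj hu, form_of_mem_coordSpace_basisB hj hu,
    form_of_mem_coordSpace_basisA hj hw, form_of_mem_coordSpace_basisB hj hw]

theorem elementary_le_symplecticOn (hi : i ∉ T) : elementary m i T ≤ symplecticOn (insert i T) := by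
  have hA := basisA_mem_coordSpace (R := R) (Set.mem_insert i T)
  have hB := basisB_mem_coordSpace (R := R) (Set.mem_insert i T)
  have hsub := coordSpace_mono (R := R) (Set.subset_insert i T)
  refine elementary_le (transvection_mem_symplecticOn hB)
    (fun n => transvection_mem_symplecticOn hA (m * n))
    (fun w hw => eichler_mem_symplecticOn (hsub hw) hB (form_of_mem_coordSpace_basisB hi hw))
    (fun w hw => eichler_mem_symplecticOn (hsub hw) (Submodule.smul_mem _ m hA) ?_)
  rw [map_smul, form_of_mem_coordSpace_basisA hi hw, smul_zero]

theorem elementary_le_of_forall_plane (hi : i ∉ T) {H : Subgroup (symplecticGroup l R)}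
    (hB : ∀ n, transvection (basisB i) n ∈ H) (hA : ∀ n, transvection (basisA i) (m * n) ∈ H)
    (hTB : ∀ j ∈ T, ∀ u ∈ coordSpace {j}, eichler u (basisB i) ∈ H)
    (hTA : ∀ j ∈ T, ∀ u ∈ coordSpace {j}, eichler u (m • basisA i) ∈ H) :
    elementary m i T ≤ H := by
  have hdisj : Disjoint T {i} := Set.disjoint_singleton_right.2 hi
  have hmA : ∀ n, transvection (m • basisA i) n ∈ H := fun n => by
    rw [transvection_smul, sq, mul_assoc]
    exact hA (m * n)
  have hmAi : m • basisA i ∈ coordSpace {i} :=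
    Submodule.smul_mem _ m (basisA_mem_coordSpace (Set.mem_singleton i))
  exact elementary_le hB hA
    (eichler_mem_of_forall_plane (basisB_mem_coordSpace (Set.mem_singleton i)) hdisj hB hTB)
    (eichler_mem_of_forall_plane hmAi hdisj hmA hTA)

theorem mem_symplecticOn_of_insert (hσ : σ ∈ symplecticOn (insert i T))
    (hA : act σ (basisA i) = basisA i) (hB : act σ (basisB i) = basisB i) :
    σ ∈ symplecticOn T := fun j hj => by
  rcases eq_or_ne j i with rfl | hji
  · exact ⟨hA, hB⟩
  · exact hσ j (by simp [hji, hj])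

theorem mem_elementary_sup_of_act_basisB (hi : i ∉ T) (hσ : σ ∈ symplecticOn (insert i T))
    (hB : act σ (basisB i) = basisB i) : σ ∈ elementary m i T ⊔ symplecticOn T := by
  obtain ⟨r, hr, hA⟩ := exists_eq_add_of_mem_coordSpace_insert
    (act_mem_coordSpace hσ (basisA_mem_coordSpace (Set.mem_insert i T)))
  have hone : act σ (basisA i) (.inl i) = 1 := by
    rw [← neg_neg (act σ (basisA i) (.inl i)), ← form_basisB_left, ← form_swap,
      ← form_basisA_basisB i, ← form_act σ (basisA i), hB]
  rw [hone] at hA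
  set b := act σ (basisA i) (.inr i)
  set τ := transvection (basisB i) b * eichler r (basisB i)
  have hτ : τ ∈ elementary m i T :=
    mul_mem (transvection_basisB_mem_elementary b) (eichler_basisB_mem_elementary hr)
  have hτA : act (τ * σ) (basisA i) = basisA i := by
    rw [map_mul, Module.End.mul_apply, hA, map_mul, Module.End.mul_apply,
      act_eichler_basisB hi hr hr, one_smul R r, sub_self,
      act_transvection_basisB hi (zero_mem _)]
    simp
  have hτB : act (τ * σ) (basisB i) = basisB i := by
    simp [τ, hB, act_eichler (form_of_mem_coordSpace_basisB hi hr),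
      form_of_mem_coordSpace_basisB hi hr, act_transvection]
  have hmem := mem_symplecticOn_of_insert (mul_mem (elementary_le_symplecticOn hi hτ) hσ) hτA hτB
  exact (Subgroup.mul_mem_cancel_left _ (Subgroup.mem_sup_left hτ)).1 (Subgroup.mem_sup_right hmem)

theorem mem_elementary_sup_of_isReducible (hi : i ∉ T) (hσ : σ ∈ symplecticOn (insert i T))
    {a c : R} {r : l ⊕ l → R}
    (hB : act σ (basisB i) = (m * a) • basisA i + c • basisB i + m • r)
    (h : IsReducible m i T a c r) : σ ∈ elementary m i T ⊔ symplecticOn T := by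
  obtain ⟨τ, hτ, hact⟩ := h
  rw [← hB, ← Module.End.mul_apply, ← map_mul] at hact
  exact (Subgroup.mul_mem_cancel_left _ (Subgroup.mem_sup_left hτ)).1
    (mem_elementary_sup_of_act_basisB hi (mul_mem (elementary_le_symplecticOn hi hτ) hσ) hact)

theorem exists_unimodular_coordinates (hi : i ∉ T) (hσ : σ ∈ symplecticOn (insert i T))
    {z : l ⊕ l → R} (hz : z ∈ coordSpace (insert i T))
    (hB : act σ (basisB i) = basisB i + m • z) :
    ∃ a d p q : R, ∃ r ∈ coordSpace T, ∃ w ∈ coordSpace T,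
      act σ (basisB i) = (m * a) • basisA i + (1 + m * d) • basisB i + m • r ∧
      p * (1 + m * d) + q * a + m * form w r = 1 := by
  obtain ⟨r, hr, hzr⟩ := exists_eq_add_of_mem_coordSpace_insert hz
  obtain ⟨w, hw, hA⟩ := exists_eq_add_of_mem_coordSpace_insert
    (act_mem_coordSpace hσ (basisA_mem_coordSpace (Set.mem_insert i T)))
  set a := z (.inl i)
  set d := z (.inr i)
  set p := act σ (basisA i) (.inl i)
  set q := act σ (basisA i) (.inr i)
  have hB' : act σ (basisB i) = (m * a) • basisA i + (1 + m * d) • basisB i + m • r := by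
    rw [hB, hzr]
    module
  refine ⟨a, d, p, -(q * m), r, hr, w, hw, hB', ?_⟩
  have hform := form_act σ (basisA i) (basisB i)
  rw [hA, hB', form_basisA_basisB] at hform
  simp only [map_add, map_smul, LinearMap.add_apply, LinearMap.smul_apply, form_self,
    form_basisA_basisB, form_basisB_basisA, form_basisA_of_mem_coordSpace hi hr,
    form_basisB_of_mem_coordSpace hi hr, form_of_mem_coordSpace_basisA hi hw,
    form_of_mem_coordSpace_basisB hi hw, smul_eq_mul] at hform
  linear_combination hform

end Generation

section IntegralGeneration

variable {l : Type*} [Fintype l] [DecidableEq l] {m : ℤ} {i o : l} {T : Set l}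

theorem mem_elementary_sup_symplecticOn (hi : i ∉ T) (hT : T.Nonempty)
    {σ : symplecticGroup l ℤ} (hσ : σ ∈ symplecticOn (insert i T)) {z : l ⊕ l → ℤ}
    (hz : z ∈ coordSpace (insert i T)) (hB : act σ (basisB i) = basisB i + m • z) :
    σ ∈ elementary m i T ⊔ symplecticOn T := by
  obtain ⟨a, d, p, q, r, hr, w, hw, hB', hone⟩ := exists_unimodular_coordinates hi hσ hz hB
  exact mem_elementary_sup_of_isReducible hi hσ hB' (isReducible_of_unimodular hi hT rfl hr hw hone)

theorem symplecticOn_insert_le (hi : i ∉ T) :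
    symplecticOn (R := ℤ) (insert i T) ≤ elementary 1 i T ⊔ symplecticOn T := by
  intro σ hσ
  have hBi : (basisB i : l ⊕ l → ℤ) ∈ coordSpace (insert i T) :=
    basisB_mem_coordSpace (Set.mem_insert i T)
  have hz := sub_mem (act_mem_coordSpace hσ hBi) hBi
  have hB : act σ (basisB i) = basisB i + (1 : ℤ) • (act σ (basisB i) - basisB i) := by module
  rcases T.eq_empty_or_nonempty with rfl | hT
  · obtain ⟨a, d, p, q, r, hr, w, hw, hB', hone⟩ := exists_unimodular_coordinates hi hσ hz hB
    rw [coordSpace_empty, Submodule.mem_bot] at hr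
    subst hr
    rw [map_zero, mul_zero, add_zero] at hone
    exact mem_elementary_sup_of_isReducible hi hσ hB'
      (isReducible_plane hi ⟨q, p, by rw [add_comm, hone]⟩)
  · exact mem_elementary_sup_symplecticOn hi hT hσ hz hB

theorem symplecticOn_le_of_forall_plane {H : Subgroup (symplecticGroup l ℤ)}
    (htrans : ∀ i ∈ T, ∀ u ∈ coordSpace {i}, ∀ n, transvection u n ∈ H)
    (heichler : ∀ i ∈ T, ∀ j ∈ T, i ≠ j → ∀ t ∈ coordSpace {i}, ∀ u ∈ coordSpace {j},
      eichler t u ∈ H) : symplecticOn T ≤ H := by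
  induction T, T.toFinite using Set.Finite.induction_on with
  | empty =>
    rw [symplecticOn_empty]
    exact bot_le
  | @insert i T hi _ ih =>
    have hiT := Set.mem_insert i T
    have hsub := Set.subset_insert i T
    have hA : (basisA i : l ⊕ l → ℤ) ∈ coordSpace {i} := basisA_mem_coordSpace rfl
    have hB : (basisB i : l ⊕ l → ℤ) ∈ coordSpace {i} := basisB_mem_coordSpace rfl
    have hpair : ∀ p ∈ coordSpace {i}, ∀ j ∈ T, ∀ u ∈ coordSpace {j}, eichler u p ∈ H :=
      fun p hp j hj u hu => heichler j (hsub hj) i hiT (ne_of_mem_of_not_mem hj hi) u hu p hp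
    refine (symplecticOn_insert_le hi).trans (sup_le ?_ (ih ?_ ?_))
    · exact elementary_le_of_forall_plane hi (htrans i hiT _ hB)
        (fun n => htrans i hiT _ hA (1 * n)) (hpair _ hB) (hpair _ (Submodule.smul_mem _ 1 hA))
    · exact fun j hj => htrans j (hsub hj)
    · exact fun j hj k hk => heichler j (hsub hj) k (hsub hk)

theorem symplecticOn_compl_le_commutator (hl : 4 ≤ Fintype.card l) :
    symplecticOn {o}ᶜ ≤
      ⁅congruenceStabilizer m (basisB o), congruenceStabilizer m (basisB o)⁆ := by
  have hdvd : ∀ i ∈ ({o}ᶜ : Set l), ∀ u ∈ coordSpace {i}, m ∣ form u (basisB o) :=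
      fun i hi u hu => by
    rw [form_eq_zero_of_ne hi hu (basisB_mem_coordSpace rfl)]
    exact dvd_zero m
  exact symplecticOn_le_of_forall_plane
    (fun i hi u hu => transvection_plane_mem_commutator hl hu (hdvd i hi u hu))
    (fun i hi j hj hij t ht u hu =>
      eichler_plane_mem_commutator hl hij ht hu (hdvd i hi t ht) (hdvd j hj u hu))

theorem elementary_compl_le_commutator_sup (hl : 4 ≤ Fintype.card l) :
    elementary m o {o}ᶜ ≤
      ⁅congruenceStabilizer m (basisB o), congruenceStabilizer m (basisB o)⁆ ⊔
        Subgroup.zpowers (transvection (basisA o) m) := by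
  have ho : o ∉ ({o}ᶜ : Set l) := Set.notMem_compl_iff.2 rfl
  have hB : (basisB o : l ⊕ l → ℤ) ∈ coordSpace {o} := basisB_mem_coordSpace rfl
  have hA : m • (basisA o : l ⊕ l → ℤ) ∈ coordSpace {o} :=
    Submodule.smul_mem _ m (basisA_mem_coordSpace rfl)
  have hmB : m ∣ form (basisB o) (basisB o : l ⊕ l → ℤ) := by simp
  have hmA : m ∣ form (m • basisA o) (basisB o : l ⊕ l → ℤ) := by
    rw [map_smul, LinearMap.smul_apply, smul_eq_mul]
    exact dvd_mul_right m _
  have hpair : ∀ p ∈ coordSpace {o}, m ∣ form p (basisB o) → ∀ j ∈ ({o}ᶜ : Set l),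
      ∀ u ∈ coordSpace {j}, eichler u p ∈
        ⁅congruenceStabilizer m (basisB o), congruenceStabilizer m (basisB o)⁆ ⊔
          Subgroup.zpowers (transvection (basisA o) m) := fun p hp hmp j hj u hu =>
    Subgroup.mem_sup_left <| eichler_plane_mem_commutator hl hj hu hp
      (by simp [form_eq_zero_of_ne hj hu hB]) hmp
  refine elementary_le_of_forall_plane ho (fun n => Subgroup.mem_sup_left ?_)
    (fun n => Subgroup.mem_sup_right ⟨n, ?_⟩) (hpair _ hB hmB) (hpair _ hA hmA)
  · exact transvection_plane_mem_commutator hl hB hmB n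
  · exact (transvection_zpow _ _ _).trans (by rw [Int.cast_id, mul_comm])

theorem congruenceStabilizer_le_commutator_sup (hl : 4 ≤ Fintype.card l) :
    congruenceStabilizer m (basisB o) ≤
      ⁅congruenceStabilizer m (basisB o), congruenceStabilizer m (basisB o)⁆ ⊔
        Subgroup.zpowers (transvection (basisA o) m) := by
  rintro σ ⟨z, hz⟩
  have huniv : insert o ({o}ᶜ : Set l) = Set.univ := by simp [Set.insert_eq]
  have hT : ({o}ᶜ : Set l).Nonempty := by
    have : Nontrivial l := Fintype.one_lt_card_iff_nontrivial.1 (by omega)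
    exact Set.nonempty_compl_of_nontrivial o
  have hz' : z ∈ coordSpace (insert o {o}ᶜ) := by
    rw [huniv]
    exact fun j hj => (hj (Set.mem_univ j)).elim
  have hσ : σ ∈ symplecticOn (insert o {o}ᶜ) := by
    rw [huniv, symplecticOn_univ]
    exact Subgroup.mem_top σ
  have ho : o ∉ ({o}ᶜ : Set l) := Set.notMem_compl_iff.2 rfl
  have hσ' := mem_elementary_sup_symplecticOn ho hT hσ hz' hz
  exact sup_le (elementary_compl_le_commutator_sup hl)
    ((symplecticOn_compl_le_commutator hl).trans le_sup_left) hσ'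

theorem transvection_basisA_pow_mem_commutator (hl : 4 ≤ Fintype.card l) {m : ℕ} :
    transvection (basisA o) (m : ℤ) ^ m ∈
      ⁅congruenceStabilizer (m : ℤ) (basisB o), congruenceStabilizer (m : ℤ) (basisB o)⁆ := by
  have hpow : transvection (basisA o) (m : ℤ) ^ m = transvection ((m : ℤ) • basisA o) 1 := by
    rw [← zpow_natCast, transvection_zpow, transvection_smul, Int.cast_natCast, mul_one, sq]
  rw [hpow]
  refine transvection_plane_mem_commutator hl
    (Submodule.smul_mem _ _ (basisA_mem_coordSpace (Set.mem_singleton o))) ?_ 1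
  rw [map_smul, LinearMap.smul_apply, smul_eq_mul]
  exact dvd_mul_right _ _

end IntegralGeneration

section Abelianization

variable {G : Type*} [Group G]

theorem nonempty_abelianization_mulEquiv {C : Type*} [CommGroup C] {t : G} {c : C} (φ : G →* C)
    (hφ : φ t = c) (hc : ∀ x, x ∈ Subgroup.zpowers c)
    (hgen : commutator G ⊔ Subgroup.zpowers t = ⊤) (hpow : t ^ orderOf c ∈ commutator G) :
    Nonempty (Abelianization G ≃* C) := by
  have htop : Subgroup.zpowers (Abelianization.of t) = ⊤ := by
    have hker : (commutator G).map Abelianization.of = ⊥ := by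
      rw [Subgroup.map_eq_bot_iff, Abelianization.ker_of]
    have hsurj : Function.Surjective (Abelianization.of : G →* _) := QuotientGroup.mk_surjective
    have hmap := congrArg (Subgroup.map Abelianization.of) hgen
    rwa [Subgroup.map_sup, hker, bot_sup_eq, MonoidHom.map_zpowers, ← MonoidHom.range_eq_map,
      MonoidHom.range_eq_top.2 hsurj] at hmap
  have horder : orderOf (Abelianization.of t) = orderOf c := by
    refine Nat.dvd_antisymm (orderOf_dvd_of_pow_eq_one ?_) ?_
    · rwa [← map_pow, ← MonoidHom.mem_ker, Abelianization.ker_of]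
    · simpa [hφ] using orderOf_map_dvd (Abelianization.lift φ) (Abelianization.of t)
  exact ⟨mulEquivOfOrderOfEq (fun x => htop ▸ Subgroup.mem_top x) hc horder⟩

theorem commutator_sup_zpowers_eq_top {Γ : Subgroup G} {t : Γ}
    (h : Γ ≤ ⁅Γ, Γ⁆ ⊔ Subgroup.zpowers (t : G)) : commutator Γ ⊔ Subgroup.zpowers t = ⊤ := by
  refine top_le_iff.1 ((Subgroup.map_le_map_iff_of_injective Γ.subtype_injective).1 ?_)
  rwa [Subgroup.map_sup, Subgroup.map_subtype_commutator, MonoidHom.map_zpowers,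
    ← MonoidHom.range_eq_map, Subgroup.range_subtype]

theorem mem_commutator_iff_coe_mem {Γ : Subgroup G} {t : Γ} :
    t ∈ commutator Γ ↔ (t : G) ∈ ⁅Γ, Γ⁆ := by
  rw [← Subgroup.map_subtype_commutator]
  exact (Subgroup.mem_map_iff_mem Γ.subtype_injective).symm

end Abelianization

section CongruenceHom

variable {l : Type*} [Fintype l] [DecidableEq l]

theorem form_act_mul_ediv_modEq {m : ℤ} (hm : m ≠ 0) {v : l ⊕ l → ℤ} {σ τ : symplecticGroup l ℤ}
    (hσ : σ ∈ congruenceStabilizer m v) (hτ : τ ∈ congruenceStabilizer m v) :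
    form (act (σ * τ) v) v / m ≡ form (act σ v) v / m + form (act τ v) v / m [ZMOD m] := by
  obtain ⟨y, hy⟩ := inv_mem hσ
  obtain ⟨z, hz⟩ := hτ
  have hστ : form (act (σ * τ) v) v = m * (form v y + form z v + m * form z y) := by
    rw [map_mul, Module.End.mul_apply, form_act_left, hy, hz]
    simp only [map_add, map_smul, LinearMap.add_apply, LinearMap.smul_apply, form_self, smul_eq_mul]
    ring
  have hσv : form (act σ v) v = m * form v y := by
    rw [form_act_left, hy, map_add, form_self, zero_add, map_smul, smul_eq_mul]
  have hτv : form (act τ v) v = m * form z v := by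
    rw [hz, map_add, LinearMap.add_apply, form_self, zero_add, map_smul, LinearMap.smul_apply,
      smul_eq_mul]
  rw [hστ, hσv, hτv]
  simp only [Int.mul_ediv_cancel_left _ hm]
  exact Int.modEq_iff_dvd.2 ⟨-form z y, by ring⟩

variable (m : ℕ) [NeZero m]

/-- The homomorphism `σ ↦ ⟨σ v, v⟩ / m` modulo `m`. The division is exact on the congruence
stabilizer. -/
def congruenceHom (v : l ⊕ l → ℤ) :
    congruenceStabilizer (m : ℤ) v →* Multiplicative (ZMod m) where
  toFun σ := Multiplicative.ofAdd ((form (act σ.1 v) v / m : ℤ) : ZMod m)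
  map_one' := by simp
  map_mul' σ τ := by
    rw [← ofAdd_add, ← Int.cast_add]
    exact congrArg _ ((ZMod.intCast_eq_intCast_iff ..).2
      (form_act_mul_ediv_modEq (NeZero.ne (m : ℤ)) σ.2 τ.2))

theorem congruenceHom_transvection {o : l}
    (h : transvection (basisA o) (m : ℤ) ∈ congruenceStabilizer (m : ℤ) (basisB o)) :
    congruenceHom m (basisB o) ⟨transvection (basisA o) m, h⟩ = Multiplicative.ofAdd 1 := by
  have hform : form (act (transvection (basisA o) (m : ℤ)) (basisB o)) (basisB o) = (m : ℤ) := by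
    rw [act_transvection, form_basisA_basisB, mul_one, map_add, LinearMap.add_apply, form_self,
      zero_add, map_smul, LinearMap.smul_apply, form_basisA_basisB, smul_eq_mul, mul_one]
  rw [congruenceHom, MonoidHom.coe_mk, OneHom.coe_mk, hform, Int.ediv_self (NeZero.ne (m : ℤ)),
    Int.cast_one]

end CongruenceHom

theorem GammaP2_eq_congruenceStabilizer (g : ℕ) (hg : 1 ≤ g) :
    GammaP2 g hg = congruenceStabilizer 2 (basisB ⟨g - 1, by omega⟩) := by
  ext σ
  set o : Fin g := ⟨g - 1, by omega⟩
  have hcol : ∀ i, act σ (basisB o) i = σ.1 i (.inr o) := fun i => by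
    rw [act_eq_mulVec, basisB, mulVec_single_one, col_apply]
  have hone : ∀ i, (basisB o : Fin g ⊕ Fin g → ℤ) i =
      (1 : Matrix (Fin g ⊕ Fin g) (Fin g ⊕ Fin g) ℤ) i (.inr o) := fun i => by
    rw [basisB, one_eq_pi_single, Pi.single_comm]
  have hmem : σ ∈ GammaP2 g hg ↔ ∀ i, (2 : ℤ) ∣ act σ (basisB o) i - basisB o i := by
    simp only [hcol, hone]
    exact forall_congr' fun i => Int.modEq_comm.trans Int.modEq_iff_dvd
  rw [hmem]
  constructor
  · intro h
    choose z hz using h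
    exact ⟨z, funext fun i => sub_eq_iff_eq_add'.1 (hz i)⟩
  · rintro ⟨z, hz⟩ i
    exact ⟨z i, sub_eq_iff_eq_add'.2 (congrFun hz i)⟩

end SymplecticLattice

open SymplecticLattice

theorem stmt8_general {l : Type*} [Fintype l] [DecidableEq l] (hl : 4 ≤ Fintype.card l) (o : l)
    (m : ℕ) [NeZero m] :
    Nonempty (Abelianization (congruenceStabilizer (m : ℤ) (basisB o)) ≃*
      Multiplicative (ZMod m)) := by
  have hτ : transvection (basisA o) (m : ℤ) ∈ congruenceStabilizer (m : ℤ) (basisB o) :=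
    transvection_mem_congruenceStabilizer (dvd_mul_right _ _)
  have hcyclic : ∀ x, x ∈ Subgroup.zpowers (Multiplicative.ofAdd (1 : ZMod m)) := fun x =>
    ⟨x.toAdd.cast, by simp [← ofAdd_zsmul]⟩
  refine nonempty_abelianization_mulEquiv (congruenceHom m (basisB o))
    (congruenceHom_transvection m hτ) hcyclic
    (commutator_sup_zpowers_eq_top (congruenceStabilizer_le_commutator_sup hl)) ?_
  rw [orderOf_ofAdd_eq_addOrderOf, ZMod.addOrderOf_one, mem_commutator_iff_coe_mem]
  exact transvection_basisA_pow_mem_commutator hl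

/-- for `g ≥ 4`, the abelianization of `Γ_g(p₂)` (equivalently, its first
integral group homology `H₁(Γ_g(p₂);ℤ)`) is a cyclic group of order 2. -/
theorem stmt8 (g : ℕ) (hg : 4 ≤ g) :
    Nonempty (Abelianization (GammaP2 g (by omega)) ≃* Multiplicative (ZMod 2)) := by
  rw [GammaP2_eq_congruenceStabilizer]
  exact stmt8_general (by simpa using hg) _ 2
end

section
/- Let g ≥ 1, let σ ∈ Γ_g(p₂), let m̃ = (m̃′|m̃″) ∈ ℤ^{2(g−1)}, and set m := (m̃′,0 | m̃″,1) and n := (m̃′,0 | m̃″,0) in ℤ^{2g}. Then: (1) σ·m − σ·n ≡ m − n (mod 2), i.e. σ·m − σ·n is congruent mod 2 to the row vector with a single 1 in the last coordinate; and (2) the g-th coordinates of the first halves of σ·m and σ·n are even, i.e. (σ·m)′_g ≡ (σ·n)′_g ≡ (ᵗβα)_{gg} ≡ 0 (mod 2), where β, α are the blocks of σ. -/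
/-- The action `σ·m` of a symplectic matrix `σ` (in `g×g` blocks `(α β; γ δ)`, where
`Sum.inl` indexes the first half and `Sum.inr` the second half) on a `g`-characteristic
`m = (m′|m″) ∈ ℤ^{2g}`:
`σ·m := m·[[ᵗα, −ᵗγ],[−ᵗβ, ᵗδ]] + ((ᵗβα)₀ | (ᵗδγ)₀)`,
where `M₀` is the row vector of diagonal entries of `M`. -/
def charAction {g : ℕ} (σ : Matrix (Fin g ⊕ Fin g) (Fin g ⊕ Fin g) ℤ)
    (m : Fin g ⊕ Fin g → ℤ) : Fin g ⊕ Fin g → ℤ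
  | Sum.inl j =>
      (∑ i : Fin g, m (Sum.inl i) * σ (Sum.inl j) (Sum.inl i))
      - (∑ i : Fin g, m (Sum.inr i) * σ (Sum.inl j) (Sum.inr i))
      + ∑ k : Fin g, σ (Sum.inl k) (Sum.inr j) * σ (Sum.inl k) (Sum.inl j)
  | Sum.inr j =>
      -(∑ i : Fin g, m (Sum.inl i) * σ (Sum.inr j) (Sum.inl i))
      + (∑ i : Fin g, m (Sum.inr i) * σ (Sum.inr j) (Sum.inr i))
      + ∑ k : Fin g, σ (Sum.inr k) (Sum.inr j) * σ (Sum.inr k) (Sum.inl j)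

/-- Extension of a `(g-1)`-characteristic `m̃ = (m̃′|m̃″)` to the `g`-characteristic
`(m̃′,0 | m̃″,c)`, whose last first-half coordinate is `0` and whose last second-half
coordinate is `c`. -/
def extChar {g : ℕ} (c : ℤ) (mt : Fin (g - 1) ⊕ Fin (g - 1) → ℤ) : Fin g ⊕ Fin g → ℤ
  | Sum.inl i => if h : (i : ℕ) < g - 1 then mt (Sum.inl ⟨i, h⟩) else 0
  | Sum.inr i => if h : (i : ℕ) < g - 1 then mt (Sum.inr ⟨i, h⟩) else c

/-- The projection `π : ℤ^{2g} → ℤ^{2g-2}` deleting the `g`-th and `2g`-th coordinates. -/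
def projChar {g : ℕ} (m : Fin g ⊕ Fin g → ℤ) : Fin (g - 1) ⊕ Fin (g - 1) → ℤ
  | Sum.inl i => m (Sum.inl (Fin.castLE (Nat.sub_le g 1) i))
  | Sum.inr i => m (Sum.inr (Fin.castLE (Nat.sub_le g 1) i))

/-! Modulo 2 the signs in `σ·m` disappear, so `m ↦ σ·m` is the affine map `m ↦ σ m + σ·0`, whose
linear part is `σ` itself acting on column vectors. Hence `σ·m - σ·n ≡ σ (m - n) = σ e_{2g} ≡
e_{2g}`. Since `σ` preserves the symplectic form and fixes `e_{2g}` modulo 2, it preserves the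
functional `⟨·, e_{2g}⟩` modulo 2, which reads off the `g`-th coordinate; so `σ·m` has the same
`g`-th coordinate as `m` up to the constant term `(ᵗβα)_{gg}`, which is even because the `g`-th
column of `β` is the upper half of `σ e_{2g}`.
-/

section SymplecticGroup

open Matrix Sum

variable {l : Type*} [DecidableEq l]

theorem row_inr_J {R : Type*} [CommRing R] (i : l) :
    (J l R).row (inr i) = Pi.single (inl i) 1 := by
  ext (j | j) <;> simp [J, one_apply, Pi.single_apply, eq_comm]

variable [Fintype l]

theorem row_inl_eq_single_of_col_inr_eq_single {R : Type*} [CommRing R]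
    {A : Matrix (l ⊕ l) (l ⊕ l) R} (hA : A ∈ symplecticGroup l R) {i : l}
    (hcol : A.col (inr i) = Pi.single (inr i) 1) :
    A.row (inl i) = Pi.single (inl i) 1 := by
  calc A.row (inl i)
    _ = A.col (inr i) ᵥ* J l R ᵥ* A := by
      rw [hcol, single_one_vecMul, row_inr_J, single_one_vecMul]
    _ = (Aᵀ * J l R * A).row (inr i) := by
      rw [← row_transpose, ← single_one_vecMul, vecMul_vecMul, vecMul_vecMul, single_one_vecMul,
        Matrix.mul_assoc]
    _ = Pi.single (inl i) 1 := by rw [SymplecticGroup.mem_iff'.1 hA, row_inr_J]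

theorem row_inl_modEq_one_of_col_inr_modEq_one {N : ℕ} {σ : Matrix (l ⊕ l) (l ⊕ l) ℤ}
    (hσ : σ ∈ symplecticGroup l ℤ) {i : l}
    (hcol : ∀ k, σ k (inr i) ≡ (1 : Matrix (l ⊕ l) (l ⊕ l) ℤ) k (inr i) [ZMOD N]) (k : l ⊕ l) :
    σ (inl i) k ≡ (1 : Matrix (l ⊕ l) (l ⊕ l) ℤ) (inl i) k [ZMOD N] := by
  have hcol_mod : (σ.map (Int.castRingHom (ZMod N))).col (inr i) = Pi.single (inr i) 1 := by
    ext k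
    simpa [one_apply, Pi.single_apply] using (ZMod.intCast_eq_intCast_iff _ _ N).2 (hcol k)
  have hrow_mod :=
    row_inl_eq_single_of_col_inr_eq_single (SymplecticGroup.map_mem hσ _) hcol_mod
  rw [← ZMod.intCast_eq_intCast_iff]
  simpa [one_apply, Pi.single_apply, eq_comm] using congrFun hrow_mod k

end SymplecticGroup

section ModEq

open Matrix

variable {l m n : Type*} {N : ℤ}

theorem mulVec_apply_modEq_of_row_modEq_one [Fintype n] [DecidableEq n] {A : Matrix n n ℤ} {i : n}
    (hrow : ∀ j, A i j ≡ (1 : Matrix n n ℤ) i j [ZMOD N]) (v : n → ℤ) :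
    (A *ᵥ v) i ≡ v i [ZMOD N] := by
  calc (A *ᵥ v) i
    _ ≡ ((1 : Matrix n n ℤ) *ᵥ v) i [ZMOD N] := Int.ModEq.sum fun j _ ↦ (hrow j).mul_right (v j)
    _ = v i := by rw [one_mulVec]

theorem transpose_mul_apply_modEq_zero [Fintype l] {B : Matrix l m ℤ} {i : m}
    (hcol : ∀ k, B k i ≡ 0 [ZMOD N]) (C : Matrix l n ℤ) (j : n) :
    (Bᵀ * C) i j ≡ 0 [ZMOD N] := by
  calc ∑ k, B k i * C k j
    _ ≡ ∑ k, 0 * C k j [ZMOD N] := Int.ModEq.sum fun k _ ↦ (hcol k).mul_right (C k j)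
    _ = 0 := by simp only [zero_mul, Finset.sum_const_zero]

end ModEq

section Characteristic

open Matrix Sum

variable {g : ℕ} (σ : Matrix (Fin g ⊕ Fin g) (Fin g ⊕ Fin g) ℤ)

theorem charAction_zero_inl (i : Fin g) :
    charAction σ 0 (inl i) = (σ.toBlocks₁₂ᵀ * σ.toBlocks₁₁) i i := by
  simp [charAction, mul_apply, toBlocks₁₁, toBlocks₁₂]

theorem charAction_modEq_mulVec_add (m : Fin g ⊕ Fin g → ℤ) (k : Fin g ⊕ Fin g) :
    charAction σ m k ≡ (σ *ᵥ m) k + charAction σ 0 k [ZMOD 2] := by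
  have neg_modEq_self (a : ℤ) : -a ≡ a [ZMOD 2] := Int.neg_emod_two a
  rcases k with j | j
  · simp only [charAction, mulVec, dotProduct, Fintype.sum_sum_type, mul_comm (σ _ _) (m _),
      Pi.zero_apply, zero_mul, Finset.sum_const_zero, neg_zero, zero_add, sub_eq_add_neg]
    exact ((neg_modEq_self _).add_left _).add_right _
  · simp only [charAction, mulVec, dotProduct, Fintype.sum_sum_type, mul_comm (σ _ _) (m _),
      Pi.zero_apply, zero_mul, Finset.sum_const_zero, neg_zero, zero_add]
    exact ((neg_modEq_self _).add_right _).add_right _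

theorem charAction_sub_modEq_mulVec_sub (m n : Fin g ⊕ Fin g → ℤ) (k : Fin g ⊕ Fin g) :
    charAction σ m k - charAction σ n k ≡ (σ *ᵥ (m - n)) k [ZMOD 2] := by
  simpa only [mulVec_sub, Pi.sub_apply, add_sub_add_right_eq_sub] using
    (charAction_modEq_mulVec_add σ m k).sub (charAction_modEq_mulVec_add σ n k)

variable {σ}

theorem transpose_toBlocks₁₂_mul_toBlocks₁₁_modEq_zero {N : ℤ} {i : Fin g}
    (hcol : ∀ k, σ k (inr i) ≡
      (1 : Matrix (Fin g ⊕ Fin g) (Fin g ⊕ Fin g) ℤ) k (inr i) [ZMOD N]) :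
    (σ.toBlocks₁₂ᵀ * σ.toBlocks₁₁) i i ≡ 0 [ZMOD N] :=
  transpose_mul_apply_modEq_zero (fun k ↦ by simpa [toBlocks₁₂] using hcol (inl k)) _ _

theorem charAction_inl_modEq (hσ : σ ∈ symplecticGroup (Fin g) ℤ) {i : Fin g}
    (hcol : ∀ k, σ k (inr i) ≡
      (1 : Matrix (Fin g ⊕ Fin g) (Fin g ⊕ Fin g) ℤ) k (inr i) [ZMOD 2])
    (m : Fin g ⊕ Fin g → ℤ) :
    charAction σ m (inl i) ≡ m (inl i) [ZMOD 2] := by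
  have hlinear : (σ *ᵥ m) (inl i) ≡ m (inl i) [ZMOD 2] :=
    mulVec_apply_modEq_of_row_modEq_one (row_inl_modEq_one_of_col_inr_modEq_one hσ hcol) m
  have hconst : charAction σ 0 (inl i) ≡ 0 [ZMOD 2] := by
    rw [charAction_zero_inl]
    exact transpose_toBlocks₁₂_mul_toBlocks₁₁_modEq_zero hcol
  simpa only [add_zero] using
    (charAction_modEq_mulVec_add σ m (inl i)).trans (hlinear.add hconst)

theorem extChar_inl_last (hg : 0 < g) (c : ℤ) (mt : Fin (g - 1) ⊕ Fin (g - 1) → ℤ) :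
    extChar c mt (inl ⟨g - 1, Nat.sub_one_lt_of_lt hg⟩) = 0 :=
  dif_neg (lt_irrefl _)

theorem extChar_sub_extChar (hg : 0 < g) (c d : ℤ) (mt : Fin (g - 1) ⊕ Fin (g - 1) → ℤ) :
    extChar c mt - extChar d mt =
      Pi.single (inr ⟨g - 1, Nat.sub_one_lt_of_lt hg⟩) (c - d) := by
  ext (i | i)
  · simp [extChar]
  · have hlast : (i : ℕ) < g - 1 ↔ i ≠ ⟨g - 1, Nat.sub_one_lt_of_lt hg⟩ := by
      simp only [ne_eq, Fin.ext_iff]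
      omega
    by_cases hi : i = ⟨g - 1, Nat.sub_one_lt_of_lt hg⟩ <;> simp [extChar, hlast, hi]

end Characteristic

/-- let `g ≥ 1`, `σ ∈ Γ_g(p₂)` (a symplectic matrix fixing `e_{2g}`
modulo 2), `m̃ ∈ ℤ^{2(g-1)}`, and set `m := (m̃′,0|m̃″,1)`, `n := (m̃′,0|m̃″,0)`.  Then
(1) `σ·m − σ·n ≡ m − n (mod 2)`, and (2) the `g`-th coordinates of the first halves of
`σ·m` and `σ·n`, as well as `(ᵗβα)_{gg}`, are even. -/
theorem stmt12 (g : ℕ) (hg : 1 ≤ g)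
    (σ : Matrix (Fin g ⊕ Fin g) (Fin g ⊕ Fin g) ℤ)
    (hσ : σ ∈ Matrix.symplecticGroup (Fin g) ℤ)
    (hfix : ∀ i : Fin g ⊕ Fin g,
      σ i (Sum.inr ⟨g - 1, by omega⟩) ≡
        (1 : Matrix (Fin g ⊕ Fin g) (Fin g ⊕ Fin g) ℤ) i (Sum.inr ⟨g - 1, by omega⟩) [ZMOD 2])
    (mt : Fin (g - 1) ⊕ Fin (g - 1) → ℤ) :
    (∀ k : Fin g ⊕ Fin g,
      charAction σ (extChar 1 mt) k - charAction σ (extChar 0 mt) k ≡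
        extChar 1 mt k - extChar 0 mt k [ZMOD 2]) ∧
    charAction σ (extChar 1 mt) (Sum.inl ⟨g - 1, by omega⟩) ≡ 0 [ZMOD 2] ∧
    charAction σ (extChar 0 mt) (Sum.inl ⟨g - 1, by omega⟩) ≡ 0 [ZMOD 2] ∧
    (∑ k : Fin g, σ (Sum.inl k) (Sum.inr ⟨g - 1, by omega⟩) *
        σ (Sum.inl k) (Sum.inl ⟨g - 1, by omega⟩)) ≡ 0 [ZMOD 2] := by
  refine ⟨fun k ↦ ?_, ?_, ?_, transpose_toBlocks₁₂_mul_toBlocks₁₁_modEq_zero hfix⟩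
  · have hdiff := extChar_sub_extChar hg 1 0 mt
    calc charAction σ (extChar 1 mt) k - charAction σ (extChar 0 mt) k
      _ ≡ σ.mulVec (extChar 1 mt - extChar 0 mt) k [ZMOD 2] :=
        charAction_sub_modEq_mulVec_sub σ _ _ k
      _ = σ k (Sum.inr ⟨g - 1, by omega⟩) := by
        rw [hdiff, sub_zero, Matrix.mulVec_single_one, Matrix.col_apply]
      _ ≡ (1 : Matrix (Fin g ⊕ Fin g) (Fin g ⊕ Fin g) ℤ) k (Sum.inr ⟨g - 1, by omega⟩) [ZMOD 2] :=
        hfix k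
      _ = extChar 1 mt k - extChar 0 mt k := by
        rw [← Pi.sub_apply, hdiff, sub_zero, Matrix.one_apply, Pi.single_apply]
  · simpa only [extChar_inl_last hg] using charAction_inl_modEq hσ hfix (extChar 1 mt)
  · simpa only [extChar_inl_last hg] using charAction_inl_modEq hσ hfix (extChar 0 mt)
end

section
/- Let g ≥ 4. The coinvariant module (B³)_{Γ̄} of the degree-≤3 boolean polynomials under the stabilizer Γ̄ of B_g in Sp(2g,ℤ/2ℤ) is a one-dimensional ℤ/2ℤ-vector space, generated by the image of the element Ā₁B̄₁Ā_g. (Via the Birman–Craggs–Johnson homomorphism this computes H₁(I_{g,1};ℤ)_{M_{g,1}(p₂)} ≅ ℤ/2ℤ, the coinvariants of the abelianized Torelli group.) -/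
open MvPolynomial

/-- `V = (ℤ/2ℤ)^{2g}`, with standard basis `A_i = Pi.single (Sum.inl i) 1` and
`B_i = Pi.single (Sum.inr i) 1`. -/
abbrev VV (g : ℕ) := Fin g ⊕ Fin g → ZMod 2

/-- The mod 2 intersection (symplectic) form on `V`, with `A_i · B_i = 1` and all other
pairings of basis vectors zero. -/
def symF {g : ℕ} (x y : VV g) : ZMod 2 :=
  ∑ i : Fin g, (x (Sum.inl i) * y (Sum.inr i) + x (Sum.inr i) * y (Sum.inl i))

/-- The ideal of relations defining the algebra of boolean polynomials:
`(x+y)‾ = x̄ + ȳ + (x·y)·1` and `x̄² = x̄`. -/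
noncomputable def boolRel (g : ℕ) : Ideal (MvPolynomial (VV g) (ZMod 2)) :=
  Ideal.span
    ({q | ∃ x y : VV g, q = X (x + y) - X x - X y - C (symF x y)} ∪
     {q | ∃ x : VV g, q = X x ^ 2 - X x})

/-- The algebra of boolean polynomials on `V`. -/
abbrev BoolPoly (g : ℕ) := MvPolynomial (VV g) (ZMod 2) ⧸ boolRel g

/-- The generator `x̄` of the boolean algebra, for `x ∈ V`. -/
noncomputable def bgen {g : ℕ} (x : VV g) : BoolPoly g := Ideal.Quotient.mk (boolRel g) (X x)

/-- `B^n`: the subspace of boolean polynomials of degree at most `n`, spanned by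
products of at most `n` generators. -/
noncomputable def BoolDeg (g n : ℕ) : Submodule (ZMod 2) (BoolPoly g) :=
  Submodule.span (ZMod 2) {b | ∃ l : List (VV g), l.length ≤ n ∧ b = (l.map bgen).prod}

/-- A linear automorphism of `V` preserving the symplectic form induces a ring
endomorphism of the boolean algebra, `x̄ ↦ (f x)‾`. -/
noncomputable def actB {g : ℕ} (f : VV g ≃ₗ[ZMod 2] VV g)
    (hf : ∀ x y : VV g, symF (f x) (f y) = symF x y) : BoolPoly g →+* BoolPoly g :=
  Ideal.Quotient.lift (boolRel g)
    ((Ideal.Quotient.mk (boolRel g)).comp (rename (⇑f)).toRingHom)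
    (by
      have hle : boolRel g ≤ Ideal.comap (rename (⇑f)).toRingHom (boolRel g) := by
        rw [boolRel, Ideal.span_le]
        rintro q (⟨x, y, rfl⟩ | ⟨x, rfl⟩)
        · have : (rename (⇑f)) (X (x + y) - X x - X y - C (symF x y)) =
              X (f x + f y) - X (f x) - X (f y) - C (symF (f x) (f y)) := by
            simp [map_add, hf x y]
          refine Ideal.mem_comap.mpr ?_
          simp only [AlgHom.toRingHom_eq_coe, RingHom.coe_coe, this]
          exact Ideal.subset_span (Or.inl ⟨f x, f y, rfl⟩)
        · refine Ideal.mem_comap.mpr ?_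
          have : (rename (⇑f)) (X x ^ 2 - X x) =
              (X (f x) ^ 2 - X (f x) : MvPolynomial (VV g) (ZMod 2)) := by simp
          simp only [AlgHom.toRingHom_eq_coe, RingHom.coe_coe, this]
          exact Ideal.subset_span (Or.inr ⟨f x, rfl⟩)
      intro a ha
      rw [RingHom.comp_apply, Ideal.Quotient.eq_zero_iff_mem]
      exact Ideal.mem_comap.mp (hle ha))

/-- The subspace of `B` spanned by the elements `γ·m − m` for `γ ∈ Γ̄` (a linear
automorphism of `V` preserving the symplectic form and fixing `B_g`) and `m ∈ B³`;
the coinvariant module `(B³)_Γ̄` is the quotient of `B³` by this subspace. -/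
noncomputable def coinvRel (g : ℕ) (hg1 : 1 ≤ g) : Submodule (ZMod 2) (BoolPoly g) :=
  Submodule.span (ZMod 2)
    {b | ∃ (f : VV g ≃ₗ[ZMod 2] VV g) (hf : ∀ x y : VV g, symF (f x) (f y) = symF x y),
      f (Pi.single (Sum.inr (⟨g - 1, by omega⟩ : Fin g)) 1) =
        Pi.single (Sum.inr (⟨g - 1, by omega⟩ : Fin g)) 1 ∧
      ∃ m ∈ BoolDeg g 3, b = actB f hf m - m}

/-! The product `x̄₀⋯x̄ₙ` modulo `Bⁿ` is an alternating form in `x₀, …, xₙ`. If `v ≠ 0` is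
orthogonal to `b` and to `x₁, …, xₙ`, a transvection along `v` shows that `v̄x̄₁⋯x̄ₙ ≡ x̄₁⋯x̄ₙ` in
the coinvariants under the stabilizer of `b`. Comparing this relation for `v`, `w` and `v + w`,
where `v` and `w` are orthogonal, gives `x̄₁⋯x̄ₙ ≡ 0`. So for `b = B_p` the coinvariants of `B³`
are the values of an alternating trilinear form that vanishes as soon as one argument is
orthogonal to `b` and to the other arguments; on basis vectors only the arguments `Aᵢ, Bᵢ, A_p`
survive, and `(Aᵢ + Aₒ, Bᵢ + Bₒ, A_p)` identifies their values for different `i`. Conversely, the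
contraction `x̄ȳz̄ ↦ (x·y)(b·z) + (y·z)(b·x) + (x·z)(b·y)` extends to an invariant functional:
view boolean polynomials as functions on quadratic forms and take third differences along `Aᵢ, Bᵢ,
b`, summed over `i`. -/

section SymplecticForm

variable {g : ℕ}

/-- The standard basis of `V`: `stdVec (Sum.inl i) = A_i` and `stdVec (Sum.inr i) = B_i`. -/
abbrev stdVec (k : Fin g ⊕ Fin g) : VV g := Pi.single k 1

lemma symF_comm (x y : VV g) : symF x y = symF y x := by
  simp only [symF]
  exact Finset.sum_congr rfl fun i _ => by ring

lemma symF_add_left (x y z : VV g) : symF (x + y) z = symF x z + symF y z := by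
  simp only [symF, Pi.add_apply, ← Finset.sum_add_distrib]
  exact Finset.sum_congr rfl fun i _ => by ring

lemma symF_add_right (x y z : VV g) : symF x (y + z) = symF x y + symF x z := by
  rw [symF_comm, symF_add_left, symF_comm y, symF_comm z]

lemma symF_smul_left (c : ZMod 2) (x y : VV g) : symF (c • x) y = c * symF x y := by
  simp only [symF, Pi.smul_apply, smul_eq_mul, Finset.mul_sum]
  exact Finset.sum_congr rfl fun i _ => by ring

lemma symF_smul_right (c : ZMod 2) (x y : VV g) : symF x (c • y) = c * symF x y := by
  rw [symF_comm, symF_smul_left, symF_comm]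

lemma symF_self (x : VV g) : symF x x = 0 :=
  Finset.sum_eq_zero fun i _ => by rw [mul_comm]; exact CharTwo.add_self_eq_zero _

lemma symF_stdVec_left (k : Fin g ⊕ Fin g) (x : VV g) : symF (stdVec k) x = x k.swap := by
  rcases k with k | k <;> simp [symF, Pi.single_apply]

lemma symF_stdVec_stdVec (k l : Fin g ⊕ Fin g) :
    symF (stdVec k) (stdVec l) = if k.swap = l then 1 else 0 := by
  rw [symF_stdVec_left, stdVec, Pi.single_apply]

lemma exists_symF_eq_one {v : VV g} (hv : v ≠ 0) : ∃ w, symF v w = 1 := by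
  obtain ⟨k, hk⟩ := Function.ne_iff.mp hv
  refine ⟨stdVec k.swap, ?_⟩
  rw [symF_comm, symF_stdVec_left, Sum.swap_swap]
  exact Fin.eq_one_of_ne_zero _ hk

/-- The symplectic form `symF` as a bilinear form in Mathlib's sense. -/
def symForm (g : ℕ) : LinearMap.BilinForm (ZMod 2) (VV g) :=
  LinearMap.mk₂ (ZMod 2) symF symF_add_left symF_smul_left symF_add_right symF_smul_right

lemma symForm_apply (x y : VV g) : symForm g x y = symF x y := rfl

lemma exists_ne_zero_forall_symF_eq_zero (l : List (VV g)) (hl : l.length < 2 * g) :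
    ∃ v : VV g, v ≠ 0 ∧ ∀ x ∈ l, symF v x = 0 := by
  let pairing : VV g →ₗ[ZMod 2] Fin l.length → ZMod 2 := LinearMap.pi fun i => symForm g (l.get i)
  have hker : LinearMap.ker pairing ≠ ⊥ := LinearMap.ker_ne_bot_of_finrank_lt (by simp; omega)
  obtain ⟨v, hv, hv0⟩ := Submodule.exists_mem_ne_zero_of_ne_bot hker
  refine ⟨v, hv0, fun x hx => ?_⟩
  obtain ⟨i, rfl⟩ := List.mem_iff_get.mp hx
  rw [symF_comm]
  exact congrFun (LinearMap.mem_ker.mp hv) i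

lemma exists_isotropic_pair (l : List (VV g)) (hl : l.length + 3 ≤ 2 * g) :
    ∃ v w : VV g, v ≠ 0 ∧ w ≠ 0 ∧ v + w ≠ 0 ∧ symF v w = 0 ∧
      (∀ x ∈ l, symF v x = 0) ∧ ∀ x ∈ l, symF w x = 0 := by
  obtain ⟨v, hv0, hv⟩ := exists_ne_zero_forall_symF_eq_zero l (by omega)
  obtain ⟨u, hu⟩ := exists_symF_eq_one hv0
  obtain ⟨w, hw0, hw⟩ := exists_ne_zero_forall_symF_eq_zero (v :: u :: l) (by simp; omega)
  simp only [List.forall_mem_cons] at hw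
  obtain ⟨hwv, hwu, hwl⟩ := hw
  refine ⟨v, w, hv0, hw0, fun hvw => ?_, symF_comm v w ▸ hwv, hv, hwl⟩
  have hsum : symF (v + w) u = 1 := by rw [symF_add_left, hu, hwu, add_zero]
  rw [hvw, ← symForm_apply, map_zero] at hsum
  exact zero_ne_one hsum

/-- The symplectic transvection `x ↦ x + (v·x) v` along `v`. -/
def symTransvection (v : VV g) : VV g ≃ₗ[ZMod 2] VV g :=
  LinearEquiv.transvection (f := symForm g v) (v := v) (symF_self v)

lemma symTransvection_apply (v x : VV g) : symTransvection v x = x + symF v x • v := rfl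

lemma symF_symTransvection (v x y : VV g) :
    symF (symTransvection v x) (symTransvection v y) = symF x y := by
  simp only [symTransvection_apply, symF_add_left, symF_add_right, symF_smul_left,
    symF_smul_right, symF_self, symF_comm x v]
  linear_combination CharTwo.add_self_eq_zero (symF v x * symF v y)

lemma symTransvection_apply_of_symF_eq_zero {v x : VV g} (h : symF v x = 0) :
    symTransvection v x = x := by
  rw [symTransvection_apply, h, zero_smul, add_zero]

end SymplecticForm

section BooleanPolynomials

variable {g n : ℕ}

lemma bgen_add (x y : VV g) :
    bgen (x + y) = bgen x + bgen y + algebraMap (ZMod 2) (BoolPoly g) (symF x y) := by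
  have h : Ideal.Quotient.mk (boolRel g) (X (x + y) - X x - X y - C (symF x y)) = 0 :=
    Ideal.Quotient.eq_zero_iff_mem.mpr (Ideal.subset_span (Or.inl ⟨x, y, rfl⟩))
  have hC : algebraMap (ZMod 2) (BoolPoly g) (symF x y) =
      Ideal.Quotient.mk (boolRel g) (C (symF x y)) := rfl
  simp only [map_sub] at h
  rw [hC, bgen, bgen, bgen]
  linear_combination h

lemma bgen_mul_self (x : VV g) : bgen x * bgen x = bgen x := by
  have h : Ideal.Quotient.mk (boolRel g) (X x ^ 2 - X x) = 0 :=
    Ideal.Quotient.eq_zero_iff_mem.mpr (Ideal.subset_span (Or.inr ⟨x, rfl⟩))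
  simp only [map_sub, map_pow] at h
  rw [bgen]
  linear_combination h

lemma bgen_mul_prod_of_mem {ι : Type*} {s : Finset ι} (v : ι → VV g) {j : ι} (hj : j ∈ s) :
    bgen (v j) * ∏ i ∈ s, bgen (v i) = ∏ i ∈ s, bgen (v i) := by
  classical
  rw [← Finset.mul_prod_erase s _ hj, ← mul_assoc, bgen_mul_self]

lemma bgen_zero : bgen (0 : VV g) = 0 := by
  simpa [symF_self] using bgen_add (0 : VV g) 0

lemma actB_bgen (f : VV g ≃ₗ[ZMod 2] VV g) (hf : ∀ x y : VV g, symF (f x) (f y) = symF x y)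
    (x : VV g) : actB f hf (bgen x) = bgen (f x) := by
  simp [actB, bgen]

lemma prod_map_bgen_mem_boolDeg {l : List (VV g)} (hl : l.length ≤ n) :
    (l.map bgen).prod ∈ BoolDeg g n :=
  Submodule.subset_span ⟨l, hl, rfl⟩

lemma prod_bgen_mem_boolDeg {ι : Type*} (s : Finset ι) (v : ι → VV g) (hs : s.card ≤ n) :
    ∏ i ∈ s, bgen (v i) ∈ BoolDeg g n := by
  have h := prod_map_bgen_mem_boolDeg (l := s.toList.map v) (by simpa using hs)
  rwa [List.map_map, Finset.prod_map_toList] at h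

lemma bgen_mul_mem_boolDeg (x : VV g) {m : BoolPoly g} (hm : m ∈ BoolDeg g n) :
    bgen x * m ∈ BoolDeg g (n + 1) := by
  induction hm using Submodule.span_induction with
  | mem _ h =>
    obtain ⟨l, hl, rfl⟩ := h
    exact prod_map_bgen_mem_boolDeg (l := x :: l) (by simpa using hl)
  | zero => simp
  | add a b _ _ ha hb => simpa [mul_add] using add_mem ha hb
  | smul c a _ ha => simpa only [mul_smul_comm] using Submodule.smul_mem _ c ha

lemma boolDeg_succ_le {S : Submodule (ZMod 2) (BoolPoly g)} (hS : BoolDeg g n ≤ S)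
    (hprod : ∀ v : Fin (n + 1) → VV g, ∏ i, bgen (v i) ∈ S) : BoolDeg g (n + 1) ≤ S := by
  refine Submodule.span_le.mpr ?_
  rintro _ ⟨l, hl, rfl⟩
  rcases hl.lt_or_eq with hlt | heq
  · exact hS (prod_map_bgen_mem_boolDeg (Nat.lt_succ_iff.mp hlt))
  · obtain ⟨v, rfl⟩ : ∃ v : Fin (n + 1) → VV g, List.ofFn v = l :=
      ⟨fun i => l[i], List.ext_getElem (by rw [List.length_ofFn, heq]) fun _ _ _ =>
        List.getElem_ofFn _⟩
    rw [List.map_ofFn, List.prod_ofFn]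
    exact hprod v

lemma boolDeg_zero_le {S : Submodule (ZMod 2) (BoolPoly g)} (hone : 1 ∈ S) : BoolDeg g 0 ≤ S := by
  refine Submodule.span_le.mpr ?_
  rintro _ ⟨l, hl, rfl⟩
  simpa [List.length_eq_zero_iff.mp (Nat.le_zero.mp hl)] using hone

-- Shorter products are brought to length `n + 1` by repeating a factor, as `x̄² = x̄`.
lemma boolDeg_succ_le_of_one_mem {S : Submodule (ZMod 2) (BoolPoly g)} (hone : 1 ∈ S)
    (hprod : ∀ v : Fin (n + 1) → VV g, ∏ i, bgen (v i) ∈ S) : BoolDeg g (n + 1) ≤ S := by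
  induction n with
  | zero => exact boolDeg_succ_le (boolDeg_zero_le hone) hprod
  | succ n ih =>
    refine boolDeg_succ_le (ih fun v => ?_) hprod
    have hv := hprod (Fin.cons (v 0) v)
    simp only [Fin.prod_univ_succ (n := n + 1), Fin.cons_zero, Fin.cons_succ] at hv
    rwa [bgen_mul_prod_of_mem v (Finset.mem_univ 0)] at hv

end BooleanPolynomials

section AlternatingForm

variable {g n : ℕ}

lemma prod_bgen_update {ι : Type*} [Fintype ι] [DecidableEq ι] (v : ι → VV g) (i : ι) (x : VV g) :
    ∏ j, bgen (Function.update v i x j) = bgen x * ∏ j ∈ Finset.univ \ {i}, bgen (v j) := by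
  simpa [Function.comp_def, Function.apply_update (fun _ => bgen)] using
    Finset.prod_update_of_mem (Finset.mem_univ i) (fun j => bgen (v j)) (bgen x)

lemma prod_bgen_eq_mul_prod_sdiff {ι : Type*} [Fintype ι] [DecidableEq ι] (v : ι → VV g) (i : ι) :
    ∏ j, bgen (v j) = bgen (v i) * ∏ j ∈ Finset.univ \ {i}, bgen (v j) := by
  simpa using prod_bgen_update v i (v i)

lemma prod_bgen_sdiff_mem_boolDeg {ι : Type*} [Fintype ι] [DecidableEq ι]
    (hι : Fintype.card ι ≤ n + 1) (v : ι → VV g) (i : ι) :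
    ∏ j ∈ Finset.univ \ {i}, bgen (v j) ∈ BoolDeg g n :=
  prod_bgen_mem_boolDeg _ v (by rw [Finset.card_univ_sdiff, Finset.card_singleton]; omega)

/-- The class of `x̄₀⋯x̄ₙ` modulo `S ⊇ Bⁿ` as an alternating form in `x₀, …, xₙ`: the correction
terms `(x·y)·1` in `(x + y)‾` only contribute products of lower degree. -/
noncomputable def prodClass {S : Submodule (ZMod 2) (BoolPoly g)} (hS : BoolDeg g n ≤ S) :
    VV g [⋀^Fin (n + 1)]→ₗ[ZMod 2] (BoolPoly g ⧸ S) where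
  toFun v := S.mkQ (∏ i, bgen (v i))
  map_update_add' v i x y := by
    rw [← map_add, ← sub_eq_zero, ← map_sub, Submodule.mkQ_apply, Submodule.Quotient.mk_eq_zero]
    have hcorr : algebraMap (ZMod 2) (BoolPoly g) (symF x y) *
        ∏ j ∈ Finset.univ \ {i}, bgen (v j) ∈ S := by
      rw [← Algebra.smul_def]
      exact S.smul_mem _ (hS (prod_bgen_sdiff_mem_boolDeg (Fintype.card_fin _).le v i))
    convert hcorr using 1
    rw [prod_bgen_update, prod_bgen_update, prod_bgen_update, bgen_add]
    ring
  map_update_smul' v i c x := by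
    obtain rfl | rfl : c = 0 ∨ c = 1 := by decide +revert
    · simp [prod_bgen_update, bgen_zero]
    · simp
  map_eq_zero_of_eq' v i j hij hne := by
    rw [Submodule.mkQ_apply, Submodule.Quotient.mk_eq_zero, prod_bgen_eq_mul_prod_sdiff v i, hij,
      bgen_mul_prod_of_mem v (by simpa using hne.symm)]
    exact hS (prod_bgen_sdiff_mem_boolDeg (Fintype.card_fin _).le v i)

lemma prodClass_eq_zero_iff {S : Submodule (ZMod 2) (BoolPoly g)} {hS : BoolDeg g n ≤ S}
    {v : Fin (n + 1) → VV g} : prodClass hS v = 0 ↔ ∏ i, bgen (v i) ∈ S :=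
  Submodule.Quotient.mk_eq_zero S

end AlternatingForm

section CoinvariantRelations

variable {g n : ℕ}

/-- The subspace spanned by the elements `γ·m − m` for `m ∈ Bⁿ` and `γ` in the stabilizer of `b` in
the symplectic group, so that the coinvariants of `Bⁿ` are its quotient by this subspace. -/
noncomputable def stabCoinvRel (b : VV g) (n : ℕ) : Submodule (ZMod 2) (BoolPoly g) :=
  Submodule.span (ZMod 2)
    {r | ∃ (f : VV g ≃ₗ[ZMod 2] VV g) (hf : ∀ x y : VV g, symF (f x) (f y) = symF x y),
      f b = b ∧ ∃ m ∈ BoolDeg g n, r = actB f hf m - m}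

lemma bgen_mul_sub_self_mem_stabCoinvRel {b v : VV g} {m : BoolPoly g} (hv : v ≠ 0)
    (hvb : symF v b = 0) (hm : m ∈ BoolDeg g n)
    (hfix : actB (symTransvection v) (symF_symTransvection v) m = m) :
    bgen v * m - m ∈ stabCoinvRel b (n + 1) := by
  obtain ⟨w, hw⟩ := exists_symF_eq_one hv
  refine Submodule.subset_span ⟨symTransvection v, symF_symTransvection v,
    symTransvection_apply_of_symF_eq_zero hvb, bgen w * m, bgen_mul_mem_boolDeg w hm, ?_⟩
  rw [map_mul, hfix, actB_bgen, symTransvection_apply, hw, one_smul, bgen_add, symF_comm, hw,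
    map_one, ZModModule.sub_eq_add]
  ring

lemma actB_symTransvection_prod_map_bgen {v : VV g} {l : List (VV g)}
    (hv : ∀ x ∈ l, symF v x = 0) :
    actB (symTransvection v) (symF_symTransvection v) (l.map bgen).prod = (l.map bgen).prod := by
  rw [map_list_prod, List.map_map]
  refine congrArg List.prod (List.map_congr_left fun x hx => ?_)
  rw [Function.comp_apply, actB_bgen, symTransvection_apply_of_symF_eq_zero (hv x hx)]

lemma actB_symTransvection_prod_bgen {ι : Type*} {v : VV g} {s : Finset ι} {x : ι → VV g}
    (hv : ∀ i ∈ s, symF v (x i) = 0) :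
    actB (symTransvection v) (symF_symTransvection v) (∏ i ∈ s, bgen (x i)) =
      ∏ i ∈ s, bgen (x i) := by
  rw [map_prod]
  refine Finset.prod_congr rfl fun i hi => ?_
  rw [actB_bgen, symTransvection_apply_of_symF_eq_zero (hv i hi)]

lemma boolDeg_le_stabCoinvRel (b : VV g) (hn : n + 4 ≤ 2 * g) :
    BoolDeg g n ≤ stabCoinvRel b (n + 1) := by
  refine Submodule.span_le.mpr ?_
  rintro _ ⟨l, hl, rfl⟩
  obtain ⟨v, w, hv0, hw0, hvw0, hvw, hv, hw⟩ := exists_isotropic_pair (b :: l) (by simp; omega)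
  set m : BoolPoly g := (l.map bgen).prod
  have hrel : ∀ u : VV g, u ≠ 0 → (∀ x ∈ b :: l, symF u x = 0) →
      bgen u * m - m ∈ stabCoinvRel b (n + 1) := fun u hu0 hu => by
    rw [List.forall_mem_cons] at hu
    exact bgen_mul_sub_self_mem_stabCoinvRel hu0 hu.1 (prod_map_bgen_mem_boolDeg hl)
      (actB_symTransvection_prod_map_bgen hu.2)
  have hvw_rel := hrel (v + w) hvw0 fun x hx => by rw [symF_add_left, hv x hx, hw x hx, add_zero]
  have hm : bgen (v + w) * m - m - (bgen v * m - m) - (bgen w * m - m) = m := by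
    rw [bgen_add, hvw, map_zero]; ring
  rw [SetLike.mem_coe, ← hm]
  exact sub_mem (sub_mem hvw_rel (hrel v hv0 hv)) (hrel w hw0 hw)

/-- The alternating forms `T` with `T(x₁, …, xₙ) = 0` as soon as some `xᵢ` is orthogonal to `b` and
to all `xⱼ`. -/
def VanishesOnPerp {M : Type*} [AddCommGroup M] [Module (ZMod 2) M] (b : VV g)
    (T : VV g [⋀^Fin n]→ₗ[ZMod 2] M) : Prop :=
  ∀ x i, symF (x i) b = 0 → (∀ j, symF (x i) (x j) = 0) → T x = 0

lemma vanishesOnPerp_prodClass {b : VV g} {S : Submodule (ZMod 2) (BoolPoly g)}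
    (hrel : stabCoinvRel b (n + 1) ≤ S) (hS : BoolDeg g n ≤ S) :
    VanishesOnPerp b (prodClass hS) := by
  intro x i hb hx
  rcases eq_or_ne (x i) 0 with h0 | h0
  · exact (prodClass hS).map_coord_zero i h0
  · have hrest := prod_bgen_sdiff_mem_boolDeg (Fintype.card_fin _).le x i
    have h := hrel (bgen_mul_sub_self_mem_stabCoinvRel h0 hb hrest
      (actB_symTransvection_prod_bgen fun j _ => hx j))
    rw [prodClass_eq_zero_iff, prod_bgen_eq_mul_prod_sdiff x i]
    exact (S.sub_mem_iff_left (hS hrest)).mp h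

end CoinvariantRelations

section TrilinearForm

variable {g : ℕ} {M : Type*} [AddCommGroup M] [Module (ZMod 2) M]

lemma alternatingMap_comp_perm_eq_zero_iff {R N M ι : Type*} [Semiring R] [AddCommMonoid N]
    [Module R N] [AddCommGroup M] [Module R M] [Finite ι] (T : N [⋀^ι]→ₗ[R] M)
    (x : ι → N) (σ : Equiv.Perm ι) : T (x ∘ σ) = 0 ↔ T x = 0 := by
  classical
  have := Fintype.ofFinite ι
  rw [T.map_perm, smul_eq_zero_iff_eq]

lemma alternatingMap_add_add {R N M : Type*} [Semiring R] [AddCommMonoid N] [Module R N]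
    [AddCommMonoid M] [Module R M] (T : N [⋀^Fin 3]→ₗ[R] M) (x x' y y' z : N) :
    T ![x + x', y + y', z] =
      T ![x, y, z] + T ![x', y, z] + (T ![x, y', z] + T ![x', y', z]) := by
  have hfst : ∀ u, T ![x + x', u, z] = T ![x, u, z] + T ![x', u, z] := fun u =>
    T.toMultilinearMap.cons_add ![u, z] x x'
  have hsnd : T ![x + x', y + y', z] = T ![x + x', y, z] + T ![x + x', y', z] := by
    have hupd : ∀ u, Function.update ![x + x', 0, z] 1 u = ![x + x', u, z] := fun u => by
      ext j : 1
      fin_cases j <;> rfl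
    simpa only [hupd] using T.map_update_add ![x + x', 0, z] 1 y y'
  rw [hsnd, hfst, hfst]

/-- The hyperbolic pairs `(A_i, B_i)` and `(A_o, B_o)` combine to the isotropic pair
`(A_i + A_o, B_i + B_o)`. -/
lemma VanishesOnPerp.apply_stdVec_inl_inr_eq_zero {T : VV g [⋀^Fin 3]→ₗ[ZMod 2] M} {o p i : Fin g}
    (hT : VanishesOnPerp (stdVec (Sum.inr p)) T) (hop : o ≠ p)
    (hTo : T ![stdVec (Sum.inl o), stdVec (Sum.inr o), stdVec (Sum.inl p)] = 0) :
    T ![stdVec (Sum.inl i), stdVec (Sum.inr i), stdVec (Sum.inl p)] = 0 := by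
  rcases eq_or_ne i p with rfl | hip
  · exact T.map_eq_zero_of_eq _ (i := 0) (j := 2) rfl (by decide)
  rcases eq_or_ne i o with rfl | hio
  · exact hTo
  have hsum : T ![stdVec (Sum.inl i) + stdVec (Sum.inl o),
      stdVec (Sum.inr i) + stdVec (Sum.inr o), stdVec (Sum.inl p)] = 0 := by
    refine hT _ 0 ?_ fun j => ?_
    · simp [symF_add_left, symF_stdVec_stdVec, hip, hop]
    · fin_cases j <;>
        simp [symF_add_left, symF_add_right, symF_stdVec_stdVec, hio, hio.symm,
          CharTwo.add_self_eq_zero]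
  have hoi : T ![stdVec (Sum.inl o), stdVec (Sum.inr i), stdVec (Sum.inl p)] = 0 := by
    refine hT _ 0 ?_ fun j => ?_
    · simp [symF_stdVec_stdVec, hop]
    · fin_cases j <;> simp [symF_stdVec_stdVec, hio.symm]
  have hio' : T ![stdVec (Sum.inl i), stdVec (Sum.inr o), stdVec (Sum.inl p)] = 0 := by
    refine hT _ 0 ?_ fun j => ?_
    · simp [symF_stdVec_stdVec, hip]
    · fin_cases j <;> simp [symF_stdVec_stdVec, hio]
  simpa [alternatingMap_add_add, hTo, hoi, hio'] using hsum

lemma VanishesOnPerp.apply_stdVec_swap_eq_zero {T : VV g [⋀^Fin 3]→ₗ[ZMod 2] M} {o p : Fin g}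
    (hT : VanishesOnPerp (stdVec (Sum.inr p)) T) (hop : o ≠ p)
    (hTo : T ![stdVec (Sum.inl o), stdVec (Sum.inr o), stdVec (Sum.inl p)] = 0)
    (k : Fin g ⊕ Fin g) : T ![stdVec k, stdVec k.swap, stdVec (Sum.inl p)] = 0 := by
  rcases k with i | i
  · exact hT.apply_stdVec_inl_inr_eq_zero hop hTo
  · rw [← alternatingMap_comp_perm_eq_zero_iff T _ (Equiv.swap 0 1)]
    convert hT.apply_stdVec_inl_inr_eq_zero (i := i) hop hTo using 2
    ext j : 1
    fin_cases j <;> rfl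

lemma exists_perm_eq_of_swap_mem {α : Type*} {c : α ⊕ α} {k : Fin 3 → α ⊕ α}
    (hk : Function.Injective k) (hswap : ∀ i, k i ≠ c → ∃ j, (k i).swap = k j) :
    ∃ σ : Equiv.Perm (Fin 3), k (σ 1) = (k (σ 0)).swap ∧ k (σ 2) = c := by
  have hfix : ∀ a : α ⊕ α, a.swap ≠ a := by rintro (a | a) <;> simp
  have h01 := hk.ne (show (0 : Fin 3) ≠ 1 by decide)
  have h02 := hk.ne (show (0 : Fin 3) ≠ 2 by decide)
  have h12 := hk.ne (show (1 : Fin 3) ≠ 2 by decide)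
  have hcases : (k 2 = (k 1).swap ∧ k 0 = c) ∨ (k 2 = (k 0).swap ∧ k 1 = c) ∨
      (k 1 = (k 0).swap ∧ k 2 = c) := by
    have h0 := hswap 0
    have h1 := hswap 1
    have h2 := hswap 2
    simp only [Fin.exists_fin_succ, Fin.exists_fin_zero] at h0 h1 h2
    grind [Sum.swap_swap]
  rcases hcases with h | h | h
  · exact ⟨finRotate 3, h⟩
  · exact ⟨Equiv.swap 1 2, h⟩
  · exact ⟨1, h⟩

theorem VanishesOnPerp.eq_zero {T : VV g [⋀^Fin 3]→ₗ[ZMod 2] M} {o p : Fin g}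
    (hT : VanishesOnPerp (stdVec (Sum.inr p)) T) (hop : o ≠ p)
    (hTo : T ![stdVec (Sum.inl o), stdVec (Sum.inr o), stdVec (Sum.inl p)] = 0) : T = 0 := by
  refine (Pi.basisFun (ZMod 2) (Fin g ⊕ Fin g)).ext_alternating fun k hk => ?_
  simp only [Pi.basisFun_apply, AlternatingMap.zero_apply]
  by_cases hswap : ∀ i, k i ≠ Sum.inl p → ∃ j, (k i).swap = k j
  · obtain ⟨σ, hσ, hσp⟩ := exists_perm_eq_of_swap_mem hk hswap
    rw [← alternatingMap_comp_perm_eq_zero_iff T _ σ]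
    convert hT.apply_stdVec_swap_eq_zero hop hTo (k (σ 0)) using 2
    ext j : 1
    fin_cases j <;> simp [hσ, hσp]
  · push Not at hswap
    obtain ⟨i, hip, hi⟩ := hswap
    refine hT _ i ?_ fun j => ?_
    · rw [symF_stdVec_stdVec, if_neg fun h => hip (by rw [← Sum.swap_swap (k i), h, Sum.swap_inr])]
    · rw [symF_stdVec_stdVec, if_neg (hi j)]

theorem boolDeg_three_le {S : Submodule (ZMod 2) (BoolPoly g)} {o p : Fin g} (hg : 3 ≤ g)
    (hop : o ≠ p) (hrel : stabCoinvRel (stdVec (Sum.inr p)) 3 ≤ S)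
    (hmem : bgen (stdVec (Sum.inl o)) * bgen (stdVec (Sum.inr o)) * bgen (stdVec (Sum.inl p)) ∈ S) :
    BoolDeg g 3 ≤ S := by
  have hS : BoolDeg g 2 ≤ S := (boolDeg_le_stabCoinvRel _ (by omega)).trans hrel
  have hzero : prodClass hS = 0 := (vanishesOnPerp_prodClass hrel hS).eq_zero hop <|
    prodClass_eq_zero_iff.mpr (by simpa [Fin.prod_univ_three] using hmem)
  exact boolDeg_succ_le hS fun v => prodClass_eq_zero_iff.mp (by rw [hzero]; rfl)

end TrilinearForm

section InvariantFunctional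

variable {g : ℕ}

lemma fwdDiff_fwdDiff_fwdDiff_affine_mul {N R : Type*} [AddCommMonoid N] [CommRing R] (a b c : R)
    (α β γ : N →+ R) (u v w t : N) :
    fwdDiff u (fwdDiff v (fwdDiff w fun t => (a + α t) * (b + β t) * (c + γ t))) t =
      (α u * β v + α v * β u) * γ w + (β u * γ v + β v * γ u) * α w +
        (α u * γ v + α v * γ u) * β w := by
  simp only [fwdDiff, map_add]
  ring

/-- The standard quadratic form on `V` with polarization `symF`. -/
def stdQuad (x : VV g) : ZMod 2 := ∑ i : Fin g, x (Sum.inl i) * x (Sum.inr i)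

lemma stdQuad_add (x y : VV g) : stdQuad (x + y) = stdQuad x + stdQuad y + symF x y := by
  simp only [stdQuad, symF, Pi.add_apply, ← Finset.sum_add_distrib]
  exact Finset.sum_congr rfl fun i _ => by ring

/-- Boolean polynomials as functions on the quadratic forms with polarization `symF`; the forms
`x ↦ stdQuad x + u·x` are parametrized by `u ∈ V`. -/
noncomputable def quadEval : BoolPoly g →ₐ[ZMod 2] (VV g → ZMod 2) :=
  Ideal.Quotient.liftₐ (boolRel g) (aeval fun x u => stdQuad x + symF x u) fun q hq => by
    suffices boolRel g ≤ RingHom.ker (aeval fun x u => stdQuad x + symF x u :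
        MvPolynomial (VV g) (ZMod 2) →ₐ[ZMod 2] (VV g → ZMod 2)) from this hq
    rw [boolRel, Ideal.span_le]
    rintro _ (⟨x, y, rfl⟩ | ⟨x, rfl⟩)
    · ext u
      simp only [map_sub, aeval_X, stdQuad_add, symF_add_left, algHom_C, Pi.sub_apply,
        Pi.algebraMap_apply, Algebra.algebraMap_self, RingHom.id_apply, Pi.zero_apply]
      ring
    · ext u
      simp [ZMod.pow_card]

lemma quadEval_bgen (x u : VV g) : quadEval (bgen x) u = stdQuad x + symF x u :=
  congrFun (aeval_X (fun x u => stdQuad x + symF x u) x) u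

/-- The third differences along `A_i`, `B_i`, `b`, summed over `i`: on the alternating form
`x ∧ y ∧ z` represented by `x̄ȳz̄` this is contraction with `symF` and `b`. -/
noncomputable def contraction (b : VV g) : BoolPoly g →ₗ[ZMod 2] ZMod 2 :=
  (AddMonoidHom.mk' (fun m => ∑ i : Fin g, fwdDiff (stdVec (Sum.inl i))
    (fwdDiff (stdVec (Sum.inr i)) (fwdDiff b (quadEval m))) 0)
    fun m m' => by simp [Finset.sum_add_distrib]).toZModLinearMap 2

lemma sum_symF_stdVec (x y : VV g) :
    ∑ i, (symF x (stdVec (Sum.inl i)) * symF y (stdVec (Sum.inr i)) +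
      symF x (stdVec (Sum.inr i)) * symF y (stdVec (Sum.inl i))) = symF x y := by
  refine Finset.sum_congr rfl fun i _ => ?_
  simp only [symF_comm _ (stdVec _), symF_stdVec_left, Sum.swap_inl, Sum.swap_inr]
  ring

lemma contraction_bgen_mul_bgen_mul_bgen (b x y z : VV g) :
    contraction b (bgen x * bgen y * bgen z) =
      symF x y * symF z b + symF y z * symF x b + symF x z * symF y b := by
  have heval : quadEval (bgen x * bgen y * bgen z) = fun t =>
      (stdQuad x + (symForm g x).toAddMonoidHom t) * (stdQuad y + (symForm g y).toAddMonoidHom t) *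
        (stdQuad z + (symForm g z).toAddMonoidHom t) := by
    ext t
    simp only [map_mul, Pi.mul_apply, quadEval_bgen]
    rfl
  have hcontr : contraction b (bgen x * bgen y * bgen z) = ∑ i : Fin g,
      fwdDiff (stdVec (Sum.inl i)) (fwdDiff (stdVec (Sum.inr i))
        (fwdDiff b (quadEval (bgen x * bgen y * bgen z)))) 0 := rfl
  rw [hcontr, heval]
  simp only [fwdDiff_fwdDiff_fwdDiff_affine_mul]
  simp only [LinearMap.toAddMonoidHom_coe, symForm_apply]
  rw [Finset.sum_add_distrib, Finset.sum_add_distrib]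
  simp only [← Finset.sum_mul, sum_symF_stdVec]

lemma contraction_actB {b : VV g} {f : VV g ≃ₗ[ZMod 2] VV g}
    {hf : ∀ x y : VV g, symF (f x) (f y) = symF x y} (hfb : f b = b) {m : BoolPoly g}
    (hm : m ∈ BoolDeg g 3) : contraction b (actB f hf m) = contraction b m := by
  have hb : ∀ x : VV g, symF (f x) b = symF x b := fun x => by
    conv_lhs => rw [← hfb, hf]
  let act : BoolPoly g →ₗ[ZMod 2] BoolPoly g := (actB f hf).toAddMonoidHom.toZModLinearMap 2
  have hle : BoolDeg g 3 ≤ LinearMap.eqLocus (contraction b ∘ₗ act) (contraction b) := by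
    refine boolDeg_succ_le_of_one_mem ?_ fun v => ?_
    · exact congrArg (contraction b) (map_one (actB f hf))
    · change contraction b (actB f hf (∏ i : Fin 3, bgen (v i))) =
        contraction b (∏ i : Fin 3, bgen (v i))
      simp only [Fin.prod_univ_three, map_mul, actB_bgen, contraction_bgen_mul_bgen_mul_bgen, hf,
        hb]
  exact hle hm

theorem stabCoinvRel_three_le_ker_contraction (b : VV g) :
    stabCoinvRel b 3 ≤ LinearMap.ker (contraction b) := by
  refine Submodule.span_le.mpr ?_
  rintro _ ⟨f, hf, hfb, m, hm, rfl⟩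
  rw [SetLike.mem_coe, LinearMap.mem_ker, map_sub, contraction_actB hfb hm, sub_self]

lemma contraction_stdVec_eq_one {o p : Fin g} (hop : o ≠ p) :
    contraction (stdVec (Sum.inr p)) (bgen (stdVec (Sum.inl o)) * bgen (stdVec (Sum.inr o)) *
      bgen (stdVec (Sum.inl p))) = 1 := by
  simp [contraction_bgen_mul_bgen_mul_bgen, symF_stdVec_stdVec, hop]

end InvariantFunctional

theorem stmt15_general (g : ℕ) (hg : 3 ≤ g) (o p : Fin g) (hop : o ≠ p) :
    (∀ m ∈ BoolDeg g 3, ∃ c : ZMod 2,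
      m - c • (bgen (stdVec (Sum.inl o)) * bgen (stdVec (Sum.inr o)) *
        bgen (stdVec (Sum.inl p))) ∈ stabCoinvRel (stdVec (Sum.inr p)) 3) ∧
    (bgen (stdVec (Sum.inl o)) * bgen (stdVec (Sum.inr o)) *
        bgen (stdVec (Sum.inl p)) ∉ stabCoinvRel (stdVec (Sum.inr p)) 3) := by
  constructor
  · intro m hm
    have hsup := boolDeg_three_le hg hop le_sup_left
      (Submodule.mem_sup_right (Submodule.mem_span_singleton_self _)) hm
    obtain ⟨r, hr, _, he, rfl⟩ := Submodule.mem_sup.mp hsup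
    obtain ⟨c, rfl⟩ := Submodule.mem_span_singleton.mp he
    exact ⟨c, by rwa [add_sub_cancel_right]⟩
  · intro hmem
    have hzero := stabCoinvRel_three_le_ker_contraction _ hmem
    rw [LinearMap.mem_ker, contraction_stdVec_eq_one hop] at hzero
    exact one_ne_zero hzero

/-- for `g ≥ 4`, the coinvariant module `(B³)_Γ̄` of the degree ≤ 3
boolean polynomials under the stabilizer `Γ̄` of `B_g` in `Sp(2g,ℤ/2ℤ)` is a
one-dimensional `ℤ/2ℤ`-vector space generated by the image of `Ā₁B̄₁Ā_g`: every
`m ∈ B³` is congruent to a multiple of `Ā₁B̄₁Ā_g` modulo the relation subspace, and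
`Ā₁B̄₁Ā_g` itself is not in the relation subspace. -/
theorem stmt15 (g : ℕ) (hg1 : 1 ≤ g) (hg : 4 ≤ g) :
    (∀ m ∈ BoolDeg g 3, ∃ c : ZMod 2,
      m - c • (bgen (Pi.single (Sum.inl (⟨0, by omega⟩ : Fin g)) 1) *
        bgen (Pi.single (Sum.inr (⟨0, by omega⟩ : Fin g)) 1) *
        bgen (Pi.single (Sum.inl (⟨g - 1, by omega⟩ : Fin g)) 1)) ∈ coinvRel g hg1) ∧
    (bgen (Pi.single (Sum.inl (⟨0, by omega⟩ : Fin g)) 1) *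
        bgen (Pi.single (Sum.inr (⟨0, by omega⟩ : Fin g)) 1) *
        bgen (Pi.single (Sum.inl (⟨g - 1, by omega⟩ : Fin g)) 1) ∉ coinvRel g hg1) :=
  stmt15_general g (by omega) ⟨0, by omega⟩ ⟨g - 1, by omega⟩ (by rw [Ne, Fin.mk.injEq]; omega)
end

section
/- Let g ≥ 4. Let α := Σ_{i=1}^g ĀᵢB̄ᵢ ∈ B² and let B³_{g,0} denote the cokernel of the ℤ/2ℤ-linear map B¹ → B³ given by multiplication by α. The Sp(2g,ℤ/2ℤ)-action descends to B³_{g,0}, and the coinvariant module (B³_{g,0})_{Γ̄} under the stabilizer Γ̄ of B_g is: a one-dimensional ℤ/2ℤ-vector space generated by the image of Ā₁B̄₁Ā_g if g is odd, and the zero module if g is even. (Via the Birman–Craggs–Johnson homomorphism this computes H₁(I_g;ℤ)_{M_g(p₂)}.) -/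
open MvPolynomial

/-- The element `α = Σ_{i=1}^g Āᵢ B̄ᵢ ∈ B²`. -/
noncomputable def alphaElt (g : ℕ) : BoolPoly g :=
  ∑ i : Fin g, bgen (Pi.single (Sum.inl i) 1) * bgen (Pi.single (Sum.inr i) 1)

/-- The image of the multiplication map `α · : B¹ → B³`; `B³_{g,0}` is its cokernel
`B³ / α·B¹`. -/
noncomputable def imgAlpha (g : ℕ) : Submodule (ZMod 2) (BoolPoly g) :=
  Submodule.span (ZMod 2) {b | ∃ x ∈ BoolDeg g 1, b = alphaElt g * x}

/-!
Ring homomorphisms `B → ℤ/2ℤ` are the quadratic forms refining the symplectic form, and `α`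
evaluates on such a form to its Arf invariant. The Arf invariant is the majority value of the form,
so it does not change under symplectic automorphisms; as `B` is a Boolean ring, its elements are
determined by their values under these homomorphisms, and hence `α` itself is invariant.

If `v ≠ 0` is orthogonal to `B_g`, `y` and `z`, the transvection along `v` fixes these three vectors
and moves `x̄ȳz̄` by `(v̄ + 1)ȳz̄` as soon as `x·v = 1`; hence `v̄ȳz̄` and `ȳz̄` agree in the
coinvariants. Taking for `v` two orthogonal vectors and their sum kills all products of two basis
elements, then all triple products of basis elements except the `ĀᵢB̄ᵢĀ_g` with `i ≠ g`; the choice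
`v = Aᵢ + Aⱼ`, `y = Bᵢ + Bⱼ`, `z = A_g` identifies the latter with each other. Since `αĀ_g` is
congruent to their sum, `g - 1` times the remaining generator vanishes, which settles the even case.

For odd `g`, the contraction `x̄ȳz̄ ↦ (x·y)(z·B_g) + (y·z)(x·B_g) + (z·x)(y·B_g)` detects the
generator. It is the sum over `i` of third differences, in the directions `Aᵢ`, `Bᵢ`, `B_g`, of a
boolean polynomial regarded as a function on the affine space of quadratic forms.
-/

namespace BoolPoly

open scoped fwdDiff

local notation "𝐞[" e "]" => (Pi.single e 1 : VV _)

section General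

lemma eq_zero_of_forall_algHom_zmodTwo {R : Type*} [CommRing R] [Algebra (ZMod 2) R]
    (hR : ∀ r : R, IsIdempotentElem r) {r : R} (hr : ∀ φ : R →ₐ[ZMod 2] ZMod 2, φ r = 0) :
    r = 0 := by
  suffices hnil : r ∈ nilradical R by
    obtain ⟨n, hn⟩ := hnil
    simpa using (hR r).pow_succ_eq n ▸ pow_eq_zero_of_le n.le_succ hn
  rw [nilradical_eq_sInf, Ideal.mem_sInf]
  intro P (hP : P.IsPrime)
  have hbij : Function.Bijective (algebraMap (ZMod 2) (R ⧸ P)) := by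
    refine ⟨(algebraMap (ZMod 2) (R ⧸ P)).injective, fun x => ?_⟩
    obtain ⟨s, rfl⟩ := Ideal.Quotient.mk_surjective x
    rcases IsIdempotentElem.iff_eq_zero_or_one.mp ((hR s).map (Ideal.Quotient.mk P)) with h | h
    · exact ⟨0, by rw [map_zero, h]⟩
    · exact ⟨1, by rw [map_one, h]⟩
  let e := AlgEquiv.ofBijective (Algebra.ofId (ZMod 2) (R ⧸ P)) hbij
  have he : e.symm (Ideal.Quotient.mk P r) = 0 :=
    hr (e.symm.toAlgHom.comp (Ideal.Quotient.mkₐ (ZMod 2) P))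
  exact Ideal.Quotient.eq_zero_iff_mem.mp ((map_eq_zero_iff e.symm e.symm.injective).mp he)

lemma fwdDiff_fwdDiff_fwdDiff_mul_mul {M R : Type*} [AddCommMonoid M] [CommRing R]
    (l₁ l₂ l₃ : M →+ R) (c₁ c₂ c₃ : R) (u v w x : M) :
    Δ_[u] (Δ_[v] (Δ_[w] fun y => (c₁ + l₁ y) * (c₂ + l₂ y) * (c₃ + l₃ y))) x =
      (l₁ u * l₂ v + l₁ v * l₂ u) * l₃ w + (l₂ u * l₃ v + l₂ v * l₃ u) * l₁ w +
        (l₃ u * l₁ v + l₃ v * l₁ u) * l₂ w := by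
  simp only [fwdDiff, map_add]
  ring

lemma exists_pair_ne_of_four_le_card {α : Type*} [Fintype α] (h : 4 ≤ Fintype.card α) (i j : α) :
    ∃ k l, k ≠ l ∧ k ≠ i ∧ k ≠ j ∧ l ≠ i ∧ l ≠ j := by
  classical
  have hcard : 1 < (Finset.univ \ {i, j}).card := by
    have hsdiff := Finset.le_card_sdiff {i, j} (Finset.univ : Finset α)
    have hpair : ({i, j} : Finset α).card ≤ 2 := Finset.card_le_two
    rw [Finset.card_univ] at hsdiff
    lia
  obtain ⟨k, hk, l, hl, hkl⟩ := Finset.one_lt_card.mp hcard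
  simp only [Finset.mem_sdiff, Finset.mem_univ, Finset.mem_insert, Finset.mem_singleton, not_or,
    true_and] at hk hl
  exact ⟨k, l, hkl, hk.1, hk.2, hl.1, hl.2⟩

lemma addChar_map_sum {A M ι : Type*} [AddCommMonoid A] [CommMonoid M] (ψ : AddChar A M)
    (s : Finset ι) (f : ι → A) : ψ (∑ i ∈ s, f i) = ∏ i ∈ s, ψ (f i) :=
  map_prod ψ.toMonoidHom (fun i => Multiplicative.ofAdd (f i)) s

lemma one_sup_pow_succ_of_le_sq {R A : Type*} [CommSemiring R] [Semiring A] [Algebra R A]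
    {P : Submodule R A} (hP : P ≤ P ^ 2) (n : ℕ) : (1 ⊔ P) ^ (n + 1) = 1 ⊔ P ^ (n + 1) := by
  have hmono (k : ℕ) : P ^ (k + 1) ≤ P ^ (k + 2) := by
    simpa only [pow_succ, pow_zero, one_mul, mul_assoc] using mul_le_mul_right hP (P ^ k)
  have hle (k : ℕ) : P ≤ P ^ (k + 1) := by
    simpa using monotone_nat_of_le_succ (f := fun k => P ^ (k + 1)) hmono k.zero_le
  induction n with
  | zero => simp
  | succ n ih =>
    rw [pow_succ, ih, Submodule.sup_mul, Submodule.mul_sup, Submodule.mul_sup, one_mul, one_mul,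
      mul_one, ← pow_succ]
    refine le_antisymm ?_ ?_
    · simp only [sup_le_iff, le_sup_left, le_sup_right, true_and, and_true]
      exact ⟨le_sup_of_le_right (hle _), le_sup_of_le_right (hmono n)⟩
    · exact sup_le (le_sup_of_le_left le_sup_left) (le_sup_of_le_right le_sup_right)

lemma span_pow_three {R A : Type*} [CommSemiring R] [Semiring A] [Algebra R A] (S : Set A) :
    Submodule.span R S ^ 3 =
      Submodule.span R {m | ∃ x ∈ S, ∃ y ∈ S, ∃ z ∈ S, m = x * y * z} := by
  rw [pow_three', Submodule.span_mul_span, Submodule.span_mul_span]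
  congr 1
  ext m
  simp only [Set.mem_mul, exists_exists_and_exists_and_eq_and, Set.mem_ofPred_eq, eq_comm (a := m)]

lemma span_list_prod_eq_span_pow {R A ι : Type*} [CommSemiring R] [CommSemiring A] [Algebra R A]
    {b : ι → A} (h : 1 ∈ Submodule.span R (Set.range b)) (n : ℕ) :
    Submodule.span R {m | ∃ l : List ι, l.length ≤ n ∧ m = (l.map b).prod} =
      Submodule.span R (Set.range b) ^ n := by
  refine le_antisymm (Submodule.span_le.mpr ?_) ?_
  · rintro _ ⟨l, hl, rfl⟩
    suffices hprod : (l.map b).prod ∈ Submodule.span R (Set.range b) ^ l.length from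
      pow_le_pow_right₀ (Submodule.one_le.mpr h) hl hprod
    clear hl
    induction l with
    | nil => exact Submodule.one_le.mp le_rfl
    | cons i l ih =>
      rw [List.map_cons, List.prod_cons, List.length_cons, pow_succ']
      exact Submodule.mul_mem_mul (Submodule.subset_span (Set.mem_range_self i)) ih
  · rw [Submodule.span_pow, Submodule.span_le]
    intro m hm
    obtain ⟨x, rfl⟩ := Set.mem_pow.mp hm
    choose y hy using fun i => (x i).2
    refine Submodule.subset_span ⟨List.ofFn y, (List.length_ofFn).le, ?_⟩
    simp only [List.map_ofFn, Function.comp_def, hy, List.prod_ofFn]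

end General

variable {g : ℕ}

section SymplecticForm

lemma symF_comm (x y : VV g) : symF x y = symF y x :=
  Finset.sum_congr rfl fun i _ => by ring

lemma symF_add_left (x y z : VV g) : symF (x + y) z = symF x z + symF y z := by
  simp only [symF, ← Finset.sum_add_distrib, Pi.add_apply]
  exact Finset.sum_congr rfl fun i _ => by ring

lemma symF_smul_left (c : ZMod 2) (x y : VV g) : symF (c • x) y = c * symF x y := by
  simp only [symF, Finset.mul_sum, Pi.smul_apply, smul_eq_mul]
  exact Finset.sum_congr rfl fun i _ => by ring

lemma symF_add_right (x y z : VV g) : symF x (y + z) = symF x y + symF x z := by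
  simp only [symF_comm x, symF_add_left]

lemma symF_smul_right (c : ZMod 2) (x y : VV g) : symF x (c • y) = c * symF x y := by
  simp only [symF_comm x, symF_smul_left]

/-- The symplectic form `symF`, bundled as a bilinear form. -/
def symBilin (g : ℕ) : LinearMap.BilinForm (ZMod 2) (VV g) :=
  LinearMap.mk₂ (ZMod 2) symF symF_add_left symF_smul_left symF_add_right symF_smul_right

lemma symF_self (x : VV g) : symF x x = 0 :=
  Finset.sum_eq_zero fun i _ => by rw [mul_comm, CharTwo.add_self_eq_zero]

lemma symF_single_right (x : VV g) (e : Fin g ⊕ Fin g) : symF x 𝐞[e] = x e.swap := by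
  rcases e with i | i <;> simp [symF, Pi.single_apply]

lemma symF_single_left (e : Fin g ⊕ Fin g) (x : VV g) : symF 𝐞[e] x = x e.swap := by
  rw [symF_comm, symF_single_right]

lemma symF_single_single_of_ne_swap {e₁ e₂ : Fin g ⊕ Fin g} (h : e₂ ≠ e₁.swap) :
    symF 𝐞[e₁] 𝐞[e₂] = 0 := by
  rw [symF_single_left, Pi.single_eq_of_ne h.symm]

lemma exists_symF_eq_one {v : VV g} (hv : v ≠ 0) : ∃ x, symF v x = 1 := by
  obtain ⟨e, he⟩ := Function.ne_iff.mp hv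
  exact ⟨𝐞[e.swap], by rw [symF_single_right, Sum.swap_swap]; exact Fin.eq_one_of_ne_zero _ he⟩

lemma symF_eq_sum (x y : VV g) : symF x y =
    ∑ i, (symF x 𝐞[.inl i] * symF y 𝐞[.inr i] + symF x 𝐞[.inr i] * symF y 𝐞[.inl i]) := by
  simp only [symF_single_right, Sum.swap_inl, Sum.swap_inr]
  exact Finset.sum_congr rfl fun i _ => add_comm _ _

/-- The symplectic transvection `x ↦ x + (v·x) v`. -/
def transvection (v : VV g) : VV g ≃ₗ[ZMod 2] VV g :=
  LinearEquiv.transvection (f := symBilin g v) (symF_self v)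

lemma transvection_apply (v x : VV g) : transvection v x = x + symF v x • v := rfl

lemma transvection_apply_of_symF_eq_zero {v x : VV g} (h : symF v x = 0) :
    transvection v x = x := by
  rw [transvection_apply, h, zero_smul, add_zero]

lemma symF_transvection (v x y : VV g) :
    symF (transvection v x) (transvection v y) = symF x y := by
  simp only [transvection_apply, symF_add_left, symF_add_right, symF_smul_left, symF_smul_right,
    symF_self, symF_comm x v]
  linear_combination CharTwo.add_self_eq_zero (symF v x * symF v y)

/-- The quadratic form `∑ᵢ xᵢ yᵢ` refining the symplectic form and vanishing on the standard
basis. -/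
def stdQuad (x : VV g) : ZMod 2 := ∑ i : Fin g, x (.inl i) * x (.inr i)

lemma stdQuad_add (x y : VV g) : stdQuad (x + y) = stdQuad x + stdQuad y + symF x y := by
  simp only [stdQuad, symF, ← Finset.sum_add_distrib, Pi.add_apply]
  exact Finset.sum_congr rfl fun i _ => by ring

lemma stdQuad_single (e : Fin g ⊕ Fin g) : stdQuad 𝐞[e] = 0 := by
  rcases e with i | i <;> simp [stdQuad]

end SymplecticForm

section BooleanRing

lemma bgen_add (x y : VV g) :
    bgen (x + y) = bgen x + bgen y + algebraMap (ZMod 2) (BoolPoly g) (symF x y) := by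
  have h : (X (x + y) - X x - X y - C (symF x y) : MvPolynomial (VV g) (ZMod 2)) ∈ boolRel g :=
    Ideal.subset_span (Or.inl ⟨x, y, rfl⟩)
  rw [← Ideal.Quotient.eq_zero_iff_mem, map_sub, sub_eq_zero, map_sub, map_sub, sub_sub,
    sub_eq_iff_eq_add'] at h
  exact h

lemma bgen_add_of_symF_eq_zero {x y : VV g} (h : symF x y = 0) :
    bgen (x + y) = bgen x + bgen y := by
  rw [bgen_add, h, map_zero, add_zero]

lemma bgen_add_of_symF_eq_one {x y : VV g} (h : symF x y = 1) :
    bgen (x + y) = bgen x + bgen y + 1 := by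
  rw [bgen_add, h, map_one]

lemma bgen_mul_self (x : VV g) : bgen x * bgen x = bgen x := by
  have h : (X x ^ 2 - X x : MvPolynomial (VV g) (ZMod 2)) ∈ boolRel g :=
    Ideal.subset_span (Or.inr ⟨x, rfl⟩)
  rw [← Ideal.Quotient.eq_zero_iff_mem, map_sub, sub_eq_zero, map_pow, sq] at h
  exact h

/-- Evaluation of boolean polynomials at the quadratic form `stdQuad + (·, w)`. Every quadratic form
refining the symplectic form is of this shape. -/
noncomputable def evalForm (w : VV g) : BoolPoly g →+* ZMod 2 :=
  Ideal.Quotient.lift (boolRel g) (eval fun x => stdQuad x + symF x w) <| by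
    intro r hr
    suffices hle : boolRel g ≤ RingHom.ker (eval fun x : VV g => stdQuad x + symF x w) from
      RingHom.mem_ker.mp (hle hr)
    rw [boolRel, Ideal.span_le]
    rintro _ (⟨x, y, rfl⟩ | ⟨x, rfl⟩)
    · simp only [SetLike.mem_coe, RingHom.mem_ker, map_sub, eval_X, eval_C, stdQuad_add,
        symF_add_left]
      ring
    · simp only [SetLike.mem_coe, RingHom.mem_ker, map_sub, map_pow, eval_X,
        ZMod.pow_card, sub_self]

lemma evalForm_bgen (w x : VV g) : evalForm w (bgen x) = stdQuad x + symF x w := by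
  rw [evalForm, bgen, Ideal.Quotient.lift_mk, eval_X]

instance : Nontrivial (BoolPoly g) := (evalForm 0).domain_nontrivial

instance : CharP (BoolPoly g) 2 := charP_of_injective_algebraMap' (ZMod 2) 2

lemma isIdempotentElem (r : BoolPoly g) : IsIdempotentElem r := by
  have h : frobenius (BoolPoly g) 2 = RingHom.id _ := by
    refine Ideal.Quotient.ringHom_ext (MvPolynomial.ringHom_ext (fun c => ?_) fun x => ?_)
    · simp [frobenius_def, ← map_pow]
    · exact (sq _).trans (bgen_mul_self x)
  rw [IsIdempotentElem, ← sq]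
  exact DFunLike.congr_fun h r

lemma bgen_eq_sum (x : VV g) :
    bgen x = ∑ e, x e • bgen 𝐞[e] + algebraMap (ZMod 2) (BoolPoly g) (stdQuad x) := by
  let f : VV g →ₗ[ZMod 2] BoolPoly g := AddMonoidHom.toZModLinearMap 2 <|
    AddMonoidHom.mk' (fun x => bgen x - algebraMap (ZMod 2) (BoolPoly g) (stdQuad x)) fun x y => by
      rw [bgen_add, stdQuad_add, map_add, map_add]
      ring
  have hf (x : VV g) : f x = bgen x - algebraMap (ZMod 2) (BoolPoly g) (stdQuad x) := rfl
  rw [← sub_eq_iff_eq_add, ← hf]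
  conv_lhs => rw [pi_eq_sum_univ' x, map_sum]
  refine Finset.sum_congr rfl fun e _ => ?_
  rw [map_smul, hf, stdQuad_single, map_zero, sub_zero]

end BooleanRing

section Arf

/-- The sign character `0 ↦ 1`, `1 ↦ -1`. -/
def signChar : AddChar (ZMod 2) ℤ := AddChar.zmodChar 2 (ζ := -1) (by norm_num)

lemma signChar_injective : Function.Injective signChar := by decide

lemma sum_signChar_quadratic (a b : ZMod 2) :
    ∑ p : ZMod 2 × ZMod 2, signChar (p.1 * a + p.2 * b + p.1 * p.2) = 2 * signChar (a * b) := by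
  revert a b
  decide

lemma algHom_bgen (φ : BoolPoly g →ₐ[ZMod 2] ZMod 2) (x : VV g) :
    φ (bgen x) = ∑ i, (x (.inl i) * φ (bgen 𝐞[.inl i]) + x (.inr i) * φ (bgen 𝐞[.inr i]) +
      x (.inl i) * x (.inr i)) := by
  rw [bgen_eq_sum, map_add, AlgHom.commutes, Algebra.algebraMap_self_apply, map_sum,
    Fintype.sum_sum_type, stdQuad, ← Finset.sum_add_distrib, ← Finset.sum_add_distrib]
  simp only [map_smul, smul_eq_mul]

lemma sum_signChar_algHom (φ : BoolPoly g →ₐ[ZMod 2] ZMod 2) :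
    ∑ x : VV g, signChar (φ (bgen x)) = 2 ^ g * signChar (φ (alphaElt g)) := by
  let F (i : Fin g) (p : ZMod 2 × ZMod 2) : ℤ :=
    signChar (p.1 * φ (bgen 𝐞[.inl i]) + p.2 * φ (bgen 𝐞[.inr i]) + p.1 * p.2)
  let e : (Fin g → ZMod 2 × ZMod 2) ≃ VV g :=
    (Equiv.arrowProdEquivProdArrow _ _ _).trans (Equiv.sumArrowEquivProdArrow _ _ _).symm
  calc ∑ x : VV g, signChar (φ (bgen x))
      = ∑ c, signChar (φ (bgen (e c))) := (e.sum_comp _).symm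
    _ = ∑ c : Fin g → ZMod 2 × ZMod 2, ∏ i, F i (c i) :=
        Finset.sum_congr rfl fun c _ => by rw [algHom_bgen, addChar_map_sum]; rfl
    _ = ∏ i, ∑ p, F i p := (Fintype.prod_sum _).symm
    _ = ∏ i, 2 * signChar (φ (bgen 𝐞[.inl i]) * φ (bgen 𝐞[.inr i])) :=
        Finset.prod_congr rfl fun i _ => sum_signChar_quadratic _ _
    _ = 2 ^ g * signChar (φ (alphaElt g)) := by
        rw [Finset.prod_mul_distrib, Fin.prod_const, alphaElt, map_sum, addChar_map_sum]
        simp only [map_mul]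

/-- The map `actB` induced by a symplectic automorphism, as an algebra homomorphism. -/
noncomputable def actAlgHom (f : VV g ≃ₗ[ZMod 2] VV g)
    (hf : ∀ x y : VV g, symF (f x) (f y) = symF x y) : BoolPoly g →ₐ[ZMod 2] BoolPoly g :=
  { actB f hf with
    commutes' := RingHom.congr_fun (Subsingleton.elim ((actB f hf).comp (algebraMap _ _)) _) }

variable {f : VV g ≃ₗ[ZMod 2] VV g} (hf : ∀ x y : VV g, symF (f x) (f y) = symF x y)

lemma actAlgHom_bgen (x : VV g) : actAlgHom f hf (bgen x) = bgen (f x) := by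
  change Ideal.Quotient.mk (boolRel g) (rename f (X x)) = bgen (f x)
  rw [rename_X, bgen]

lemma actAlgHom_alphaElt : actAlgHom f hf (alphaElt g) = alphaElt g := by
  refine sub_eq_zero.mp (eq_zero_of_forall_algHom_zmodTwo isIdempotentElem fun φ => ?_)
  have hsum : ∑ x, signChar (φ (bgen (f x))) = ∑ x, signChar (φ (bgen x)) :=
    f.toEquiv.sum_comp fun x => signChar (φ (bgen x))
  have hact := sum_signChar_algHom (φ.comp (actAlgHom f hf))
  simp only [AlgHom.comp_apply, actAlgHom_bgen] at hact
  rw [hsum, sum_signChar_algHom] at hact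
  rw [map_sub, sub_eq_zero]
  exact (signChar_injective (mul_left_cancel₀ (pow_ne_zero g two_ne_zero) hact)).symm

end Arf

section Degree

lemma one_mem_span_range_bgen [NeZero g] :
    (1 : BoolPoly g) ∈ Submodule.span (ZMod 2) (Set.range (bgen (g := g))) := by
  have hadd : bgen (𝐞[.inl 0] + 𝐞[.inr 0]) = bgen 𝐞[.inl 0] + bgen (𝐞[.inr 0] : VV g) + 1 :=
    bgen_add_of_symF_eq_one (by simp [symF_single_right])
  rw [← sub_eq_iff_eq_add'] at hadd
  rw [← hadd]
  have hmem (x : VV g) := Submodule.subset_span (R := ZMod 2) (Set.mem_range_self (f := bgen) x)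
  exact sub_mem (hmem _) (add_mem (hmem _) (hmem _))

lemma boolDeg_eq_span_range_bgen_pow [NeZero g] (n : ℕ) :
    BoolDeg g n = Submodule.span (ZMod 2) (Set.range bgen) ^ n :=
  span_list_prod_eq_span_pow one_mem_span_range_bgen n

lemma one_mem_boolDeg (n : ℕ) : 1 ∈ BoolDeg g n :=
  Submodule.subset_span ⟨[], n.zero_le, rfl⟩

lemma bgen_mul_mem_boolDeg_succ {n : ℕ} {m : BoolPoly g} (x : VV g)
    (hm : m ∈ BoolDeg g n) : bgen x * m ∈ BoolDeg g (n + 1) := by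
  suffices h : BoolDeg g n ≤ (BoolDeg g (n + 1)).comap (LinearMap.mulLeft (ZMod 2) (bgen x)) from
    h hm
  conv_lhs => rw [BoolDeg]
  rw [Submodule.span_le]
  rintro _ ⟨l, hl, rfl⟩
  exact Submodule.subset_span ⟨x :: l, Nat.succ_le_succ hl, rfl⟩

lemma bgen_mem_boolDeg_one (x : VV g) : bgen x ∈ BoolDeg g 1 := by
  simpa only [mul_one] using bgen_mul_mem_boolDeg_succ x (one_mem_boolDeg 0)

lemma boolDeg_one_eq_span [NeZero g] :
    BoolDeg g 1 = Submodule.span (ZMod 2) (Set.range bgen) :=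
  (boolDeg_eq_span_range_bgen_pow 1).trans (Submodule.pow_one _)

lemma boolDeg_three_eq_span [NeZero g] : BoolDeg g 3 =
    Submodule.span (ZMod 2) {m | ∃ x y z, m = bgen x * bgen y * bgen z} := by
  rw [boolDeg_eq_span_range_bgen_pow, span_pow_three]
  simp only [Set.exists_range_iff]

lemma span_range_bgen_le : Submodule.span (ZMod 2) (Set.range bgen) ≤
    1 ⊔ Submodule.span (ZMod 2) (Set.range fun e : Fin g ⊕ Fin g => bgen 𝐞[e]) := by
  rw [Submodule.span_le]
  rintro _ ⟨x, rfl⟩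
  rw [bgen_eq_sum, add_comm]
  exact Submodule.add_mem_sup (Submodule.algebraMap_mem _)
    (sum_mem fun e _ => Submodule.smul_mem _ _ (Submodule.subset_span (Set.mem_range_self e)))

lemma boolDeg_three_le [NeZero g] {N : Submodule (ZMod 2) (BoolPoly g)} (h_one : 1 ∈ N)
    (h : ∀ e₁ e₂ e₃, bgen 𝐞[e₁] * bgen 𝐞[e₂] * bgen 𝐞[e₃] ∈ N) : BoolDeg g 3 ≤ N := by
  have hsq : Submodule.span (ZMod 2) (Set.range fun e : Fin g ⊕ Fin g => bgen 𝐞[e]) ≤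
      Submodule.span (ZMod 2) (Set.range fun e : Fin g ⊕ Fin g => bgen 𝐞[e]) ^ 2 := by
    rw [Submodule.span_le]
    rintro _ ⟨e, rfl⟩
    have he := Submodule.subset_span (R := ZMod 2)
      (Set.mem_range_self (f := fun e : Fin g ⊕ Fin g => bgen 𝐞[e]) e)
    have hmul := Submodule.mul_mem_mul he he
    rwa [bgen_mul_self, ← sq] at hmul
  rw [boolDeg_eq_span_range_bgen_pow]
  refine (pow_le_pow_left' span_range_bgen_le 3).trans ?_
  rw [one_sup_pow_succ_of_le_sq hsq, span_pow_three]
  refine sup_le (Submodule.one_le.mpr h_one) (Submodule.span_le.mpr ?_)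
  rintro _ ⟨_, ⟨e₁, rfl⟩, _, ⟨e₂, rfl⟩, _, ⟨e₃, rfl⟩, rfl⟩
  exact h e₁ e₂ e₃

lemma actAlgHom_mem_boolDeg {f : VV g ≃ₗ[ZMod 2] VV g}
    (hf : ∀ x y : VV g, symF (f x) (f y) = symF x y) {n : ℕ} {m : BoolPoly g}
    (hm : m ∈ BoolDeg g n) : actAlgHom f hf m ∈ BoolDeg g n := by
  suffices h : BoolDeg g n ≤ (BoolDeg g n).comap (actAlgHom f hf).toLinearMap from h hm
  conv_lhs => rw [BoolDeg]
  rw [Submodule.span_le]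
  rintro _ ⟨l, hl, rfl⟩
  refine Submodule.subset_span ⟨l.map f, by rwa [List.length_map], ?_⟩
  simp [map_list_prod, Function.comp_def, actAlgHom_bgen]

end Degree

section Coinvariants

/-- The kernel of the projection from `B³` to the coinvariants of `B³ / α B¹` under the stabilizer
of `b`; for `b = B_g` this is `coinvRel g _ ⊔ imgAlpha g`. -/
noncomputable def coinvKernel (b : VV g) : Submodule (ZMod 2) (BoolPoly g) :=
  Submodule.span (ZMod 2)
    {b' | ∃ (f : VV g ≃ₗ[ZMod 2] VV g) (hf : ∀ x y : VV g, symF (f x) (f y) = symF x y),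
      f b = b ∧ ∃ m ∈ BoolDeg g 3, b' = actB f hf m - m} ⊔ imgAlpha g

/-- The cubic polynomial `ĀᵢB̄ᵢĀₐ`. -/
noncomputable def handleCubic (a i : Fin g) : BoolPoly g :=
  bgen 𝐞[.inl i] * bgen 𝐞[.inr i] * bgen 𝐞[.inl a]

lemma actAlgHom_smodEq_self {b : VV g} {f : VV g ≃ₗ[ZMod 2] VV g}
    (hf : ∀ x y : VV g, symF (f x) (f y) = symF x y) (hb : f b = b) {m : BoolPoly g}
    (hm : m ∈ BoolDeg g 3) : actAlgHom f hf m ≡ m [SMOD coinvKernel b] :=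
  SModEq.sub_mem.mpr (Submodule.mem_sup_left (Submodule.subset_span ⟨f, hf, hb, m, hm, rfl⟩))

lemma alphaElt_mul_mem_coinvKernel (b : VV g) {m : BoolPoly g} (hm : m ∈ BoolDeg g 1) :
    alphaElt g * m ∈ coinvKernel b :=
  Submodule.mem_sup_right (Submodule.subset_span ⟨m, hm, rfl⟩)

lemma bgen_mul_smodEq_self {b v : VV g} (hv : v ≠ 0) (hvb : symF v b = 0) {m : BoolPoly g}
    (hm : m ∈ BoolDeg g 2) (hfix : actAlgHom (transvection v) (symF_transvection v) m = m) :
    bgen v * m ≡ m [SMOD coinvKernel b] := by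
  obtain ⟨x, hx⟩ := exists_symF_eq_one hv
  have hmove := actAlgHom_smodEq_self (symF_transvection v)
    (transvection_apply_of_symF_eq_zero hvb) (bgen_mul_mem_boolDeg_succ x hm)
  rw [map_mul, hfix, actAlgHom_bgen, transvection_apply, hx, one_smul,
    bgen_add_of_symF_eq_one (symF_comm x v ▸ hx), SModEq.sub_mem] at hmove
  rw [SModEq.sub_mem]
  convert hmove using 1
  linear_combination -CharTwo.add_self_eq_zero m

lemma bgen_mul_bgen_mul_bgen_smodEq {b v y z : VV g} (hv : v ≠ 0) (hvb : symF v b = 0)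
    (hvy : symF v y = 0) (hvz : symF v z = 0) :
    bgen v * (bgen y * bgen z) ≡ bgen y * bgen z [SMOD coinvKernel b] := by
  refine bgen_mul_smodEq_self hv hvb
    (bgen_mul_mem_boolDeg_succ y (bgen_mem_boolDeg_one z)) ?_
  rw [map_mul, actAlgHom_bgen, actAlgHom_bgen, transvection_apply_of_symF_eq_zero hvy,
    transvection_apply_of_symF_eq_zero hvz]

variable (hg : 4 ≤ g) {a : Fin g}
include hg

lemma bgen_single_mul_bgen_single_smodEq_zero (e₁ e₂ : Fin g ⊕ Fin g) :
    bgen 𝐞[e₁] * bgen 𝐞[e₂] ≡ 0 [SMOD coinvKernel 𝐞[.inr a]] := by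
  obtain ⟨k, l, hkl, hk₁, hk₂, hl₁, hl₂⟩ :=
    exists_pair_ne_of_four_le_card (by rwa [Fintype.card_fin]) (e₁.elim id id) (e₂.elim id id)
  have horth {k : Fin g} {e : Fin g ⊕ Fin g} (hk : k ≠ e.elim id id) :
      symF 𝐞[.inr k] 𝐞[e] = 0 := by
    refine symF_single_single_of_ne_swap ?_
    rintro rfl
    exact hk rfl
  have hne {e : Fin g ⊕ Fin g} : 𝐞[e] ≠ 0 := Pi.single_ne_zero_iff.mpr one_ne_zero
  have ha (k : Fin g) : symF 𝐞[.inr k] 𝐞[.inr a] = 0 := symF_single_single_of_ne_swap (by simp)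
  have hk := bgen_mul_bgen_mul_bgen_smodEq hne (ha k) (horth hk₁) (horth hk₂)
  have hl := bgen_mul_bgen_mul_bgen_smodEq hne (ha l) (horth hl₁) (horth hl₂)
  have hadd : 𝐞[.inr k] + 𝐞[.inr l] ≠ (0 : VV g) := fun h => by
    simpa [hkl] using congrFun h (.inr k)
  have hsum : bgen (𝐞[.inr k] + 𝐞[.inr l]) * (bgen 𝐞[e₁] * bgen 𝐞[e₂]) ≡
      bgen 𝐞[e₁] * bgen 𝐞[e₂] [SMOD coinvKernel 𝐞[.inr a]] :=
    bgen_mul_bgen_mul_bgen_smodEq hadd (by rw [symF_add_left, ha, ha, add_zero])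
      (by rw [symF_add_left, horth hk₁, horth hl₁, add_zero])
      (by rw [symF_add_left, horth hk₂, horth hl₂, add_zero])
  rw [bgen_add_of_symF_eq_zero (symF_single_single_of_ne_swap (by simp)), add_mul] at hsum
  calc bgen 𝐞[e₁] * bgen 𝐞[e₂]
      ≡ bgen 𝐞[.inr k] * (bgen 𝐞[e₁] * bgen 𝐞[e₂]) +
          bgen 𝐞[.inr l] * (bgen 𝐞[e₁] * bgen 𝐞[e₂]) [SMOD coinvKernel 𝐞[.inr a]] := hsum.symm
    _ ≡ bgen 𝐞[e₁] * bgen 𝐞[e₂] + bgen 𝐞[e₁] * bgen 𝐞[e₂] [SMOD coinvKernel 𝐞[.inr a]] :=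
        hk.add hl
    _ ≡ 0 [SMOD coinvKernel 𝐞[.inr a]] := by rw [CharTwo.add_self_eq_zero]

lemma one_mem_coinvKernel : 1 ∈ coinvKernel (𝐞[.inr a] : VV g) := by
  have hzero := bgen_single_mul_bgen_single_smodEq_zero hg (a := a) (.inr a) (.inr a)
  have hone : bgen 𝐞[.inr a] * 1 ≡ 1 [SMOD coinvKernel (𝐞[.inr a] : VV g)] :=
    bgen_mul_smodEq_self (Pi.single_ne_zero_iff.mpr one_ne_zero) (symF_self _)
      (one_mem_boolDeg 2) (map_one _)
  rw [bgen_mul_self] at hzero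
  rw [mul_one] at hone
  exact SModEq.zero.mp (hone.symm.trans hzero)

lemma bgen_triple_smodEq_zero_of_ne_swap {e₁ e₂ e₃ : Fin g ⊕ Fin g} (h₁ : e₁ ≠ .inl a)
    (h₂ : e₂ ≠ e₁.swap) (h₃ : e₃ ≠ e₁.swap) :
    bgen 𝐞[e₁] * bgen 𝐞[e₂] * bgen 𝐞[e₃] ≡ 0 [SMOD coinvKernel 𝐞[.inr a]] := by
  have ha : .inr a ≠ e₁.swap := fun h => h₁ (by rw [← e₁.swap_swap, ← h, Sum.swap_inr])
  rw [mul_assoc]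
  exact (bgen_mul_bgen_mul_bgen_smodEq (Pi.single_ne_zero_iff.mpr one_ne_zero)
    (symF_single_single_of_ne_swap ha)
    (symF_single_single_of_ne_swap h₂) (symF_single_single_of_ne_swap h₃)).trans
      (bgen_single_mul_bgen_single_smodEq_zero hg e₂ e₃)

lemma handleCubic_self_smodEq_zero : handleCubic a a ≡ 0 [SMOD coinvKernel 𝐞[.inr a]] := by
  rw [handleCubic, mul_right_comm, bgen_mul_self]
  exact bgen_single_mul_bgen_single_smodEq_zero hg _ _

lemma handleCubic_smodEq {i j : Fin g} (hi : i ≠ a) (hj : j ≠ a) :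
    handleCubic a i ≡ handleCubic a j [SMOD coinvKernel 𝐞[.inr a]] := by
  obtain rfl | hij := eq_or_ne i j
  · rfl
  have hcross {k l : Fin g} (hk : k ≠ a) (hkl : l ≠ k) :
      bgen 𝐞[.inl k] * bgen 𝐞[.inr l] * bgen 𝐞[.inl a] ≡ 0 [SMOD coinvKernel 𝐞[.inr a]] :=
    bgen_triple_smodEq_zero_of_ne_swap hg (by simpa using hk) (by simpa using hkl) (by simp)
  have hv : 𝐞[.inl i] + 𝐞[.inl j] ≠ (0 : VV g) := fun h => by
    simpa [hij] using congrFun h (.inl i)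
  have hvyz : bgen (𝐞[.inl i] + 𝐞[.inl j]) * (bgen (𝐞[.inr i] + 𝐞[.inr j]) * bgen 𝐞[.inl a]) ≡
      bgen (𝐞[.inr i] + 𝐞[.inr j]) * bgen 𝐞[.inl a] [SMOD coinvKernel 𝐞[.inr a]] := by
    refine bgen_mul_bgen_mul_bgen_smodEq hv ?_ ?_ ?_ <;>
      simp [symF_add_left, symF_single_left, hi.symm, hj.symm, hij, hij.symm,
        CharTwo.add_self_eq_zero]
  rw [bgen_add_of_symF_eq_zero (symF_single_single_of_ne_swap (by simp)),
    bgen_add_of_symF_eq_zero (symF_single_single_of_ne_swap (by simp))] at hvyz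
  refine sub_smodEq_zero.mp ?_
  calc handleCubic a i - handleCubic a j
      = (bgen 𝐞[.inl i] + bgen 𝐞[.inl j]) *
            ((bgen 𝐞[.inr i] + bgen 𝐞[.inr j]) * bgen 𝐞[.inl a]) -
          (bgen 𝐞[.inl i] * bgen 𝐞[.inr j] * bgen 𝐞[.inl a] +
            bgen 𝐞[.inl j] * bgen 𝐞[.inr i] * bgen 𝐞[.inl a]) := by
        rw [handleCubic, handleCubic, CharTwo.sub_eq_add]
        ring
    _ ≡ (bgen 𝐞[.inr i] + bgen 𝐞[.inr j]) * bgen 𝐞[.inl a] - (0 + 0)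
          [SMOD coinvKernel 𝐞[.inr a]] :=
        hvyz.sub ((hcross hi hij.symm).add (hcross hj hij))
    _ = bgen 𝐞[.inr i] * bgen 𝐞[.inl a] + bgen 𝐞[.inr j] * bgen 𝐞[.inl a] := by ring
    _ ≡ 0 + 0 [SMOD coinvKernel 𝐞[.inr a]] :=
        (bgen_single_mul_bgen_single_smodEq_zero hg _ _).add
          (bgen_single_mul_bgen_single_smodEq_zero hg _ _)
    _ = 0 := add_zero 0

variable {i₀ : Fin g} (hi₀ : i₀ ≠ a)
include hi₀

section

variable {M : Submodule (ZMod 2) (BoolPoly g)} (hM : coinvKernel 𝐞[.inr a] ≤ M)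
  (hcubic : handleCubic a i₀ ∈ M)
include hM hcubic

lemma handleCubic_mem (i : Fin g) : handleCubic a i ∈ M := by
  obtain rfl | hi := eq_or_ne i a
  · exact hM (SModEq.zero.mp (handleCubic_self_smodEq_zero hg))
  · have hsub := hM (SModEq.sub_mem.mp (handleCubic_smodEq hg hi hi₀))
    exact (Submodule.sub_mem_iff_left M hcubic).mp hsub

lemma bgen_mul_bgen_swap_mul_bgen_mem (e e' : Fin g ⊕ Fin g) :
    bgen 𝐞[e] * bgen 𝐞[e.swap] * bgen 𝐞[e'] ∈ M := by
  have hquad (e₁ e₂ : Fin g ⊕ Fin g) : bgen 𝐞[e₁] * bgen 𝐞[e₂] ∈ M :=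
    hM (SModEq.zero.mp (bgen_single_mul_bgen_single_smodEq_zero hg e₁ e₂))
  by_cases ha : e' = .inl a
  · subst ha
    rcases e with i | i
    · exact handleCubic_mem hg hi₀ hM hcubic i
    · rw [mul_comm (bgen _)]
      exact handleCubic_mem hg hi₀ hM hcubic i
  by_cases he : e' = e
  · rw [he, mul_right_comm, bgen_mul_self]
    exact hquad _ _
  by_cases hs : e' = e.swap
  · rw [hs, mul_assoc, bgen_mul_self]
    exact hquad _ _
  · rw [mul_comm, ← mul_assoc]
    refine hM (SModEq.zero.mp (bgen_triple_smodEq_zero_of_ne_swap hg ha ?_ ?_))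
    · rintro rfl
      exact hs e'.swap_swap.symm
    · exact Sum.swap_leftInverse.injective.ne (Ne.symm he)

lemma boolDeg_three_le_of_handleCubic_mem : BoolDeg g 3 ≤ M := by
  have : NeZero g := ⟨by lia⟩
  have hpair := bgen_mul_bgen_swap_mul_bgen_mem hg hi₀ hM hcubic
  refine boolDeg_three_le (hM (one_mem_coinvKernel hg)) fun e₁ e₂ e₃ => ?_
  by_cases h₁₂ : e₂ = e₁.swap
  · exact h₁₂ ▸ hpair e₁ e₃
  by_cases h₁₃ : e₃ = e₁.swap
  · rw [mul_right_comm]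
    exact h₁₃ ▸ hpair e₁ e₂
  by_cases h₂₃ : e₃ = e₂.swap
  · rw [mul_assoc, mul_comm]
    exact h₂₃ ▸ hpair e₂ e₁
  refine hM (SModEq.zero.mp ?_)
  by_cases h₁ : e₁ = .inl a
  · by_cases h₂ : e₂ = .inl a
    · rw [h₁, h₂, bgen_mul_self]
      exact bgen_single_mul_bgen_single_smodEq_zero hg _ _
    · rw [mul_comm (bgen _)]
      refine bgen_triple_smodEq_zero_of_ne_swap hg h₂ (fun h => h₁₂ ?_) h₂₃
      rw [h, Sum.swap_swap]
  · exact bgen_triple_smodEq_zero_of_ne_swap hg h₁ h₁₂ h₁₃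

end

lemma nsmul_handleCubic_mem_coinvKernel : (g - 1) • handleCubic a i₀ ∈ coinvKernel 𝐞[.inr a] := by
  have hsum : alphaElt g * bgen 𝐞[.inl a] = ∑ i, handleCubic a i := Finset.sum_mul ..
  refine SModEq.zero.mp ?_
  calc (g - 1) • handleCubic a i₀
      = 0 + ∑ _i ∈ Finset.univ.erase a, handleCubic a i₀ := by
        rw [Finset.sum_const, Finset.card_erase_of_mem (Finset.mem_univ a), Finset.card_fin,
          zero_add]
    _ ≡ handleCubic a a + ∑ i ∈ Finset.univ.erase a, handleCubic a i
          [SMOD coinvKernel 𝐞[.inr a]] :=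
        (handleCubic_self_smodEq_zero hg).symm.add
          (SModEq.sum fun i hi => handleCubic_smodEq hg hi₀ (Finset.ne_of_mem_erase hi))
    _ = alphaElt g * bgen 𝐞[.inl a] := by rw [Finset.add_sum_erase _ _ (Finset.mem_univ a), hsum]
    _ ≡ 0 [SMOD coinvKernel 𝐞[.inr a]] :=
        SModEq.zero.mpr (alphaElt_mul_mem_coinvKernel _ (bgen_mem_boolDeg_one _))

lemma handleCubic_mem_coinvKernel_of_even (heven : Even g) :
    handleCubic a i₀ ∈ coinvKernel 𝐞[.inr a] := by
  have hcast : ((g - 1 : ℕ) : ZMod 2) = 1 :=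
    ZMod.natCast_eq_one_iff_odd.mpr (Nat.Even.sub_odd (by lia) heven odd_one)
  simpa only [← Nat.cast_smul_eq_nsmul (ZMod 2), hcast, one_smul] using
    nsmul_handleCubic_mem_coinvKernel hg hi₀

end Coinvariants

section Contraction

/-- The contraction `x̄ȳz̄ ↦ (x·y)(z·b) + (y·z)(x·b) + (z·x)(y·b)`, encoded as a sum of third
differences of the values of a boolean polynomial on the quadratic forms `stdQuad + (·, w)`. -/
noncomputable def contraction (b : VV g) : BoolPoly g →ₗ[ZMod 2] ZMod 2 :=
  AddMonoidHom.toZModLinearMap 2 <| AddMonoidHom.mk'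
    (fun m => ∑ i, Δ_[𝐞[.inl i]] (Δ_[𝐞[.inr i]] (Δ_[b] fun w => evalForm w m)) 0) fun m n => by
      rw [← Finset.sum_add_distrib]
      refine Finset.sum_congr rfl fun i _ => ?_
      simp only [fwdDiff, map_add]
      ring

lemma contraction_bgen_mul_bgen_mul_bgen (b x y z : VV g) :
    contraction b (bgen x * bgen y * bgen z) =
      symF x y * symF z b + symF y z * symF x b + symF z x * symF y b := by
  have hdiff (i : Fin g) := fwdDiff_fwdDiff_fwdDiff_mul_mul (symBilin g x).toAddMonoidHom
    (symBilin g y).toAddMonoidHom (symBilin g z).toAddMonoidHom (stdQuad x) (stdQuad y) (stdQuad z)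
    𝐞[.inl i] 𝐞[.inr i] b 0
  calc contraction b (bgen x * bgen y * bgen z)
      = ∑ i, Δ_[𝐞[.inl i]] (Δ_[𝐞[.inr i]] (Δ_[b] fun w =>
          (stdQuad x + symF x w) * (stdQuad y + symF y w) * (stdQuad z + symF z w))) 0 := by
        simp only [← evalForm_bgen, ← map_mul]
        rfl
    _ = _ := by
        rw [symF_eq_sum x y, symF_eq_sum y z, symF_eq_sum z x, Finset.sum_mul, Finset.sum_mul,
          Finset.sum_mul, ← Finset.sum_add_distrib, ← Finset.sum_add_distrib]
        exact Finset.sum_congr rfl fun i _ => hdiff i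

lemma contraction_actAlgHom [NeZero g] {b : VV g} {f : VV g ≃ₗ[ZMod 2] VV g}
    (hf : ∀ x y : VV g, symF (f x) (f y) = symF x y) (hb : f b = b) {m : BoolPoly g}
    (hm : m ∈ BoolDeg g 3) : contraction b (actAlgHom f hf m) = contraction b m := by
  have hfb (x : VV g) : symF (f x) b = symF x b := by rw [← hf x b, hb]
  rw [boolDeg_three_eq_span] at hm
  refine LinearMap.eqOn_span (f := contraction b ∘ₗ (actAlgHom f hf).toLinearMap) ?_ hm
  rintro _ ⟨x, y, z, rfl⟩
  simp only [LinearMap.comp_apply, AlgHom.toLinearMap_apply, map_mul, actAlgHom_bgen,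
    contraction_bgen_mul_bgen_mul_bgen, hf, hfb]

lemma contraction_alphaElt_mul_bgen (b x : VV g) :
    contraction b (alphaElt g * bgen x) = (g + 1) * symF x b := by
  have hsymF : symF x b = ∑ i, (symF 𝐞[.inr i] x * symF 𝐞[.inl i] b +
      symF x 𝐞[.inl i] * symF 𝐞[.inr i] b) := by
    rw [symF_eq_sum]
    refine Finset.sum_congr rfl fun i _ => ?_
    rw [symF_comm b, symF_comm b, symF_comm x 𝐞[.inr i], add_comm]
  have hpair (i : Fin g) : symF 𝐞[.inl i] 𝐞[.inr i] = 1 := by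
    rw [symF_single_left, Sum.swap_inl, Pi.single_eq_same]
  simp only [alphaElt, Finset.sum_mul, map_sum, contraction_bgen_mul_bgen_mul_bgen, hpair, one_mul,
    add_assoc]
  rw [Finset.sum_add_distrib, ← hsymF, Finset.sum_const, Finset.card_fin, nsmul_eq_mul, add_mul,
    one_mul]

lemma coinvKernel_le_ker_contraction (hg : Odd g) (b : VV g) :
    coinvKernel b ≤ LinearMap.ker (contraction b) := by
  have : NeZero g := ⟨hg.pos.ne'⟩
  refine sup_le (Submodule.span_le.mpr ?_) (Submodule.span_le.mpr ?_)
  · rintro _ ⟨f, hf, hb, m, hm, rfl⟩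
    exact (map_sub (contraction b) _ m).trans (sub_eq_zero.mpr (contraction_actAlgHom hf hb hm))
  · rintro _ ⟨m, hm, rfl⟩
    rw [boolDeg_one_eq_span] at hm
    refine (Submodule.span_le (p := (LinearMap.ker (contraction b)).comap
      (LinearMap.mulLeft (ZMod 2) (alphaElt g)))).mpr ?_ hm
    rintro _ ⟨x, rfl⟩
    refine (contraction_alphaElt_mul_bgen b x).trans ?_
    rw [ZMod.natCast_eq_one_iff_odd.mpr hg, CharTwo.add_self_eq_zero, zero_mul]

lemma handleCubic_notMem_coinvKernel (hg : Odd g) {a i : Fin g} (hi : i ≠ a) :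
    handleCubic a i ∉ coinvKernel 𝐞[.inr a] := by
  intro hmem
  have hzero := coinvKernel_le_ker_contraction hg _ hmem
  rw [LinearMap.mem_ker, handleCubic, contraction_bgen_mul_bgen_mul_bgen] at hzero
  simp [symF_single_left, hi] at hzero

end Contraction

lemma actB_mem_imgAlpha {f : VV g ≃ₗ[ZMod 2] VV g}
    (hf : ∀ x y : VV g, symF (f x) (f y) = symF x y) {m : BoolPoly g} (hm : m ∈ imgAlpha g) :
    actB f hf m ∈ imgAlpha g := by
  suffices h : imgAlpha g ≤ (imgAlpha g).comap (actAlgHom f hf).toLinearMap from h hm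
  conv_lhs => rw [imgAlpha]
  rw [Submodule.span_le]
  rintro _ ⟨x, hx, rfl⟩
  refine Submodule.subset_span ⟨actAlgHom f hf x, actAlgHom_mem_boolDeg hf hx, ?_⟩
  rw [AlgHom.toLinearMap_apply, map_mul, actAlgHom_alphaElt]

end BoolPoly

/-- for `g ≥ 4`, the `Sp(2g,ℤ/2ℤ)`-action descends to the cokernel
`B³_{g,0}` of `α · : B¹ → B³` (the form-preserving automorphisms preserve `α·B¹`),
and the coinvariant module `(B³_{g,0})_Γ̄` — the quotient of `B³` by
`coinvRel ⊔ imgAlpha` — is one-dimensional, generated by the image of `Ā₁B̄₁Ā_g`,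
if `g` is odd, and zero if `g` is even. -/
theorem stmt16 (g : ℕ) (hg1 : 1 ≤ g) (hg : 4 ≤ g) :
    (∀ (f : VV g ≃ₗ[ZMod 2] VV g) (hf : ∀ x y : VV g, symF (f x) (f y) = symF x y),
      ∀ b ∈ imgAlpha g, actB f hf b ∈ imgAlpha g) ∧
    (Odd g →
      (∀ m ∈ BoolDeg g 3, ∃ c : ZMod 2,
        m - c • (bgen (Pi.single (Sum.inl (⟨0, by omega⟩ : Fin g)) 1) *
          bgen (Pi.single (Sum.inr (⟨0, by omega⟩ : Fin g)) 1) *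
          bgen (Pi.single (Sum.inl (⟨g - 1, by omega⟩ : Fin g)) 1))
          ∈ coinvRel g hg1 ⊔ imgAlpha g) ∧
      (bgen (Pi.single (Sum.inl (⟨0, by omega⟩ : Fin g)) 1) *
          bgen (Pi.single (Sum.inr (⟨0, by omega⟩ : Fin g)) 1) *
          bgen (Pi.single (Sum.inl (⟨g - 1, by omega⟩ : Fin g)) 1)
          ∉ coinvRel g hg1 ⊔ imgAlpha g)) ∧
    (Even g → ∀ m ∈ BoolDeg g 3, m ∈ coinvRel g hg1 ⊔ imgAlpha g) := by
  have ha : (⟨0, by lia⟩ : Fin g) ≠ ⟨g - 1, by lia⟩ := by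
    rw [ne_eq, Fin.mk.injEq]
    lia
  refine ⟨fun f hf b hb => BoolPoly.actB_mem_imgAlpha hf hb, fun hodd => ⟨fun m hm => ?_, ?_⟩,
    fun heven m hm => ?_⟩
  · obtain ⟨n, hn, k, hk, rfl⟩ := Submodule.mem_sup.mp <|
      BoolPoly.boolDeg_three_le_of_handleCubic_mem hg ha le_sup_left
        (Submodule.mem_sup_right (Submodule.mem_span_singleton_self _)) hm
    obtain ⟨c, rfl⟩ := Submodule.mem_span_singleton.mp hk
    exact ⟨c, by rwa [BoolPoly.handleCubic, add_sub_cancel_right]⟩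
  · exact BoolPoly.handleCubic_notMem_coinvKernel hodd ha
  · exact BoolPoly.boolDeg_three_le_of_handleCubic_mem hg ha le_rfl
      (BoolPoly.handleCubic_mem_coinvKernel_of_even hg ha heven) hm
end
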